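/- arXiv:1207.0232 — 2 statements merged into one kernel-verified Lean document; each statement's English description precedes it below -/
import Mathlib

section
/- M(x) = e^{(γ-1)/√e} · x^{1/√e} · (1 + O(1/log x)) as x → ∞, where γ is the Euler–Mascheroni constant; that is, there exists C > 0 such that for all sufficiently large x, |M(x)/(e^{(γ-1)/√e} x^{1/√e}) - 1| ≤ C/log x. -/
open Filter Real MeasureTheory
open scoped Classical

/-- The largest prime factor of `n`, with the convention `P 1 = 1`. -/
noncomputable def largestPrimeFactor (n : ℕ) : ℕ :=
  if n ≤ 1 then 1 else n.primeFactors.sup id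

/-- `medianLPF x` is the median largest prime factor of the integers in `[1, x]`:
the `⌈N/2⌉`-th smallest element of the multiset `{P(n) : 1 ≤ n ≤ N}` where `N = ⌊x⌋`. -/
noncomputable def medianLPF (x : ℝ) : ℕ :=
  (((Finset.Icc 1 ⌊x⌋₊).val.map largestPrimeFactor).sort (· ≤ ·)).getD
    ((⌊x⌋₊ + 1) / 2 - 1) 0

/-- `lif x = ∫₂^x {x/t}/log t dt`. -/
noncomputable def lif (x : ℝ) : ℝ := ∫ t in (2:ℝ)..x, Int.fract (x / t) / Real.log t

/-!
An integer `n ≤ x ≤ y²` has at most one prime factor exceeding `y`, so `#{n ≤ x : P(n) > y}` is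
`∑_{m ≤ x/y} (π(x/m) - π(y))`. The prime number theorem with error `O(x / log^k x)` replaces `π` by
`∫ du / log u`; interchanging sum and integral gives `∫_y^x ⌊x/u⌋ du / log u`, and the fractional
part of `x/u` contributes `-(1 - γ) x / log x`, whence
`#{n ≤ x : P(n) > y} = x (log (log x / log y) - (1 - γ) / log x) + O(x / log² x)`.
At `y = exp ((log x + γ - 1 + κ) / √e)` this equals `x/2 - κ x / log x + O(x / log² x)`, so the
values at `κ = ± K / log x` lie on either side of `x/2` and bracket the median.

For the prime number theorem, the 3-4-1 inequality yields `ζ(s) ≫ |t|^{-ε}` in a region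
`Re s ≥ 1 - c |t|^{-ε}` for every `ε > 0`. By Cauchy's estimates every derivative of the Perron
integrand of `Λ - 1` is then integrable along `Re s = 1`, so its Fourier transform decays faster
than any power, which saves any power of `log x`.
-/

/-! ### The zeta function in and near the half-plane `1 ≤ Re s` -/

section ZetaSeries

lemma hasDerivAt_ofReal_cpow {v : ℝ} (hv : 0 < v) (r : ℂ) :
    HasDerivAt (fun u : ℝ ↦ (u : ℂ) ^ r) (r * (v : ℂ) ^ (r - 1)) v := by
  simpa using ((hasDerivAt_id (v : ℂ)).cpow_const (c := r) (.inl (by simpa using hv))).comp_ofReal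

lemma norm_ofReal_cpow_neg_sub_le {s : ℂ} (hs : 0 < s.re) {x u : ℝ} (hx : 0 < x) (hxu : x ≤ u)
    (hux : u ≤ x + 1) : ‖(u : ℂ) ^ (-s) - (x : ℂ) ^ (-s)‖ ≤ ‖s‖ * x ^ (-s.re - 1) := by
  have deriv_le : ∀ v ∈ Set.Ico x (x + 1),
      ‖-s * (v : ℂ) ^ (-s - 1)‖ ≤ ‖s‖ * x ^ (-s.re - 1) := fun v hv ↦ by
    rw [norm_mul, norm_neg, Complex.norm_cpow_eq_rpow_re_of_pos (hx.trans_le hv.1)]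
    simp only [Complex.sub_re, Complex.neg_re, Complex.one_re]
    gcongr ?_ * ?_
    exact Real.rpow_le_rpow_of_nonpos hx hv.1 (by linarith)
  refine (norm_image_sub_le_of_norm_deriv_le_segment' (fun v hv ↦
    (hasDerivAt_ofReal_cpow (hx.trans_le hv.1) (-s)).hasDerivWithinAt)
    deriv_le u ⟨hxu, hux⟩).trans ?_
  exact mul_le_of_le_one_right (by positivity) (by linarith)

lemma norm_ofReal_cpow_neg_sub_le_rpow {s : ℂ} (hs : 0 < s.re) {x u δ : ℝ} (hx : 0 < x)
    (hxu : x ≤ u) (hux : u ≤ x + 1) (hδ : 0 ≤ δ) (hδ' : δ ≤ 1) :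
    ‖(u : ℂ) ^ (-s) - (x : ℂ) ^ (-s)‖ ≤ 2 * ‖s‖ ^ δ * x ^ (-s.re - δ) := by
  set D := ‖(u : ℂ) ^ (-s) - (x : ℂ) ^ (-s)‖
  have D_nonneg : 0 ≤ D := norm_nonneg _
  have one_sub_nonneg : 0 ≤ 1 - δ := by linarith
  have deriv_bound : D ≤ ‖s‖ * x ^ (-s.re - 1) := norm_ofReal_cpow_neg_sub_le hs hx hxu hux
  have trivial_bound : D ≤ 2 * x ^ (-s.re) := by
    refine (norm_sub_le _ _).trans ?_
    rw [Complex.norm_cpow_eq_rpow_re_of_pos (hx.trans_le hxu),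
      Complex.norm_cpow_eq_rpow_re_of_pos hx, Complex.neg_re]
    linarith [Real.rpow_le_rpow_of_nonpos hx hxu (z := -s.re) (by linarith)]
  calc D = D ^ δ * D ^ (1 - δ) := by
        rw [← Real.rpow_add_of_nonneg D_nonneg hδ one_sub_nonneg]; simp
    _ ≤ (‖s‖ * x ^ (-s.re - 1)) ^ δ * (2 * x ^ (-s.re)) ^ (1 - δ) := by gcongr
    _ = 2 ^ (1 - δ) * ‖s‖ ^ δ * (x ^ ((-s.re - 1) * δ) * x ^ (-s.re * (1 - δ))) := by
        rw [Real.mul_rpow (by positivity) (by positivity),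
          Real.mul_rpow (by positivity) (by positivity), ← Real.rpow_mul hx.le,
          ← Real.rpow_mul hx.le]
        ring
    _ = 2 ^ (1 - δ) * ‖s‖ ^ δ * x ^ (-s.re - δ) := by
        rw [← Real.rpow_add hx]; ring_nf
    _ ≤ 2 * ‖s‖ ^ δ * x ^ (-s.re - δ) := by
        gcongr
        exact Real.rpow_le_self_of_one_le (by norm_num) (by linarith)

/-- The term `(s - 1) ∫_{n+1}^{n+2} ((n + 1)^{-s} - u^{-s}) du` of the Euler–Maclaurin series
`(s - 1) ζ(s) = 1 + ∑ n, zetaTerm n s`, with the integral evaluated so that the term is visibly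
entire in `s`. -/
noncomputable def zetaTerm (n : ℕ) (s : ℂ) : ℂ :=
  (s - 1) * ((n : ℂ) + 1) ^ (-s) - ((n : ℂ) + 1) ^ (1 - s) + ((n : ℂ) + 2) ^ (1 - s)

lemma differentiable_zetaTerm (n : ℕ) : Differentiable ℂ (zetaTerm n) := by
  have add_one_ne : (n : ℂ) + 1 ≠ 0 := by exact_mod_cast n.succ_ne_zero
  have add_two_ne : (n : ℂ) + 2 ≠ 0 := by exact_mod_cast (n + 1).succ_ne_zero
  intro z
  exact (((differentiableAt_id.sub_const 1).mul
    (differentiableAt_id.neg.const_cpow (.inl add_one_ne))).sub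
    ((differentiableAt_id.const_sub 1).const_cpow (.inl add_one_ne))).add
    ((differentiableAt_id.const_sub 1).const_cpow (.inl add_two_ne))

lemma norm_zetaTerm_le (n : ℕ) {s : ℂ} (hs : 0 < s.re) {δ : ℝ} (hδ : 0 ≤ δ) (hδ' : δ ≤ 1) :
    ‖zetaTerm n s‖ ≤ 2 * ‖s - 1‖ * ‖s‖ ^ δ * ((n : ℝ) + 1) ^ (-s.re - δ) := by
  set x : ℝ := n + 1 with hx
  have x_pos : 0 < x := by positivity
  let primitive : ℝ → ℂ := fun v ↦ (s - 1) * (x : ℂ) ^ (-s) * v + (v : ℂ) ^ (1 - s)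
  have hasDeriv : ∀ v ∈ Set.Icc x (x + 1), HasDerivWithinAt primitive
      (-(s - 1) * ((v : ℂ) ^ (-s) - (x : ℂ) ^ (-s))) (Set.Icc x (x + 1)) v := fun v hv ↦ by
    have := ((hasDerivAt_id v).ofReal_comp.const_mul ((s - 1) * (x : ℂ) ^ (-s))).add
      (hasDerivAt_ofReal_cpow (x_pos.trans_le hv.1) (1 - s))
    refine this.hasDerivWithinAt.congr_deriv ?_
    rw [show 1 - s - 1 = -s by ring]
    push_cast
    ring
  have deriv_le : ∀ v ∈ Set.Ico x (x + 1), ‖-(s - 1) * ((v : ℂ) ^ (-s) - (x : ℂ) ^ (-s))‖ ≤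
      ‖s - 1‖ * (2 * ‖s‖ ^ δ * x ^ (-s.re - δ)) := fun v hv ↦ by
    rw [norm_mul, norm_neg]
    gcongr
    exact norm_ofReal_cpow_neg_sub_le_rpow hs x_pos hv.1 hv.2.le hδ hδ'
  have zetaTerm_eq : zetaTerm n s = primitive (x + 1) - primitive x := by
    have cast_x : (x : ℂ) = n + 1 := by simp [hx]
    have cast_x_add_one : ((x + 1 : ℝ) : ℂ) = n + 2 := by rw [hx]; push_cast; ring
    simp only [primitive, zetaTerm, cast_x, cast_x_add_one]
    ring
  rw [zetaTerm_eq]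
  refine (norm_image_sub_le_of_norm_deriv_le_segment' hasDeriv deriv_le (x + 1)
    ⟨by linarith, le_rfl⟩).trans_eq ?_
  ring

lemma summable_nat_add_one_rpow_neg {a : ℝ} (ha : 1 < a) :
    Summable fun n : ℕ ↦ ((n : ℝ) + 1) ^ (-a) := by
  simpa using (summable_nat_add_iff 1).2 (Real.summable_nat_rpow.2 (neg_lt_neg ha))

lemma summable_zetaTerm {s : ℂ} (hs : 0 < s.re) : Summable fun n ↦ zetaTerm n s := by
  refine .of_norm_bounded
    ((summable_nat_add_one_rpow_neg (a := s.re + 1) (by linarith)).mul_left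
      (2 * ‖s - 1‖ * ‖s‖ ^ (1 : ℝ))) fun n ↦ ?_
  rw [neg_add']
  exact norm_zetaTerm_le n hs zero_le_one le_rfl

lemma sum_range_zetaTerm (s : ℂ) (N : ℕ) :
    ∑ n ∈ Finset.range N, zetaTerm n s =
      (s - 1) * ∑ n ∈ Finset.range N, 1 / ((n : ℂ) + 1) ^ s - 1 + ((N : ℂ) + 1) ^ (1 - s) := by
  induction N with
  | zero => simp
  | succ N ih =>
    rw [Finset.sum_range_succ, ih, Finset.sum_range_succ, zetaTerm, Complex.cpow_neg,
      show ((N + 1 : ℕ) : ℂ) + 1 = N + 2 by push_cast; ring]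
    ring

lemma tendsto_nat_add_one_cpow_zero {s : ℂ} (hs : s.re < 0) :
    Tendsto (fun N : ℕ ↦ ((N : ℂ) + 1) ^ s) atTop (nhds 0) := by
  rw [tendsto_zero_iff_norm_tendsto_zero]
  have norm_eq (N : ℕ) : ‖((N : ℂ) + 1) ^ s‖ = ((N + 1 : ℕ) : ℝ) ^ (-(-s.re)) := by
    rw [neg_neg, ← Complex.norm_cpow_eq_rpow_re_of_pos (by positivity)]
    push_cast
    rfl
  simp only [norm_eq]
  exact (tendsto_rpow_neg_atTop (neg_pos.2 hs)).comp
    (tendsto_natCast_atTop_atTop.comp (tendsto_add_atTop_nat 1))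

lemma riemannZeta₁_eq_one_add_tsum_of_one_lt {s : ℂ} (hs : 1 < s.re) :
    riemannZeta₁ s = 1 + ∑' n, zetaTerm n s := by
  have s_ne_one : s ≠ 1 := by rintro rfl; simp at hs
  have summable_zeta : Summable fun n : ℕ ↦ 1 / ((n : ℂ) + 1) ^ s := by
    simpa using (summable_nat_add_iff 1).2 (Complex.summable_one_div_nat_cpow.2 hs)
  have tendsto_partial :=
    ((summable_zeta.hasSum.tendsto_sum_nat.const_mul (s - 1)).sub_const 1).add
      (tendsto_nat_add_one_cpow_zero (s := 1 - s) (by simpa using hs))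
  have tsum_eq := tendsto_nhds_unique
    (summable_zetaTerm (s := s) (by linarith)).hasSum.tendsto_sum_nat
    (tendsto_partial.congr fun N ↦ (sum_range_zetaTerm s N).symm)
  rw [tsum_eq, ← zeta_eq_tsum_one_div_nat_add_one_cpow hs, riemannZeta_eq_inv_sub_mul s_ne_one]
  have := sub_ne_zero.2 s_ne_one
  field_simp
  ring

lemma differentiableOn_tsum_zetaTerm :
    DifferentiableOn ℂ (fun s ↦ ∑' n, zetaTerm n s) {s | 0 < s.re} := by
  intro s (hs : 0 < s.re)
  let U : Set ℂ := {z | s.re / 2 < z.re} ∩ Metric.ball 0 (‖s‖ + 1)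
  have U_open : IsOpen U :=
    (isOpen_lt continuous_const Complex.continuous_re).inter Metric.isOpen_ball
  have s_mem : s ∈ U := ⟨half_lt_self hs, by simp⟩
  refine DifferentiableAt.differentiableWithinAt
    ((Complex.differentiableOn_tsum_of_summable_norm
      (u := fun n : ℕ ↦ 2 * (‖s‖ + 2) * (‖s‖ + 1) * ((n : ℝ) + 1) ^ (-(s.re / 2 + 1)))
      ((summable_nat_add_one_rpow_neg (by linarith)).mul_left _)
      (fun n ↦ (differentiable_zetaTerm n).differentiableOn) U_open ?_).differentiableAt
      (U_open.mem_nhds s_mem))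
  rintro n z ⟨re_gt : s.re / 2 < z.re, hz⟩
  have norm_lt : ‖z‖ < ‖s‖ + 1 := by simpa using hz
  have norm_sub_le : ‖z - 1‖ ≤ ‖s‖ + 2 := by
    linarith [_root_.norm_sub_le z 1, norm_one (α := ℂ)]
  refine (norm_zetaTerm_le n (by linarith) zero_le_one le_rfl).trans ?_
  rw [Real.rpow_one]
  gcongr
  · simp
  · linarith

lemma riemannZeta₁_eq_one_add_tsum {s : ℂ} (hs : 0 < s.re) :
    riemannZeta₁ s = 1 + ∑' n, zetaTerm n s := by
  have halfPlane_open : IsOpen {z : ℂ | 0 < z.re} :=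
    isOpen_lt continuous_const Complex.continuous_re
  refine (differentiable_riemannZeta₁.differentiableOn.analyticOnNhd
    halfPlane_open).eqOn_of_preconnected_of_eventuallyEq
    ((differentiableOn_tsum_zetaTerm.const_add 1).analyticOnNhd halfPlane_open)
    (convex_halfSpace_re_gt 0).isPreconnected (z₀ := 2) (by simp) ?_ hs
  filter_upwards [(isOpen_lt continuous_const Complex.continuous_re).mem_nhds
    (by simp : (2 : ℂ) ∈ {z : ℂ | (1 : ℝ) < z.re})] with z hz
  exact riemannZeta₁_eq_one_add_tsum_of_one_lt hz

end ZetaSeries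

lemma exists_norm_riemannZeta₀_le {δ : ℝ} (hδ : 0 < δ) (hδ' : δ ≤ 1) :
    ∃ C > 0, ∀ s : ℂ, 1 - δ / 2 ≤ s.re → s ≠ 1 → ‖riemannZeta₀ s‖ ≤ C * ‖s‖ ^ δ := by
  let B := ∑' n : ℕ, ((n : ℝ) + 1) ^ (-(1 + δ / 2))
  have summable_B := summable_nat_add_one_rpow_neg (a := 1 + δ / 2) (by linarith)
  have : 0 ≤ B := tsum_nonneg fun n ↦ by positivity
  refine ⟨2 * B + 1, by positivity, fun s hs s_ne_one ↦ ?_⟩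
  have tsum_eq : (s - 1) * riemannZeta₀ s = ∑' n, zetaTerm n s := by
    have := riemannZeta₁_eq_one_add_tsum (s := s) (by linarith)
    rw [riemannZeta₁] at this
    linear_combination this
  have norm_le : ‖∑' n, zetaTerm n s‖ ≤ 2 * ‖s - 1‖ * ‖s‖ ^ δ * B := by
    rw [← tsum_mul_left]
    refine tsum_of_norm_bounded (summable_B.mul_left _).hasSum fun n ↦
      (norm_zetaTerm_le n (by linarith) hδ.le hδ').trans ?_
    gcongr
    · simp
    · linarith
  rw [← tsum_eq, norm_mul, show 2 * ‖s - 1‖ * ‖s‖ ^ δ * B = ‖s - 1‖ * (2 * B * ‖s‖ ^ δ) by ring]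
    at norm_le
  refine (le_of_mul_le_mul_left norm_le (norm_pos_iff.2 (sub_ne_zero.2 s_ne_one))).trans ?_
  gcongr
  linarith

lemma exists_norm_riemannZeta_le {δ : ℝ} (hδ : 0 < δ) (hδ' : δ ≤ 1) :
    ∃ C > 0, ∀ s : ℂ, 1 - δ / 2 ≤ s.re → 1 ≤ |s.im| → ‖riemannZeta s‖ ≤ C * ‖s‖ ^ δ := by
  obtain ⟨C, C_pos, hC⟩ := exists_norm_riemannZeta₀_le hδ hδ'
  refine ⟨1 + C, by positivity, fun s hs him ↦ ?_⟩
  have s_ne_one : s ≠ 1 := by rintro rfl; norm_num at him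
  have one_le_pow : 1 ≤ ‖s‖ ^ δ :=
    Real.one_le_rpow (him.trans (Complex.abs_im_le_norm s)) hδ.le
  have inv_le : ‖(s - 1)⁻¹‖ ≤ 1 := by
    rw [norm_inv]
    refine inv_le_one_of_one_le₀ (him.trans ?_)
    simpa using Complex.abs_im_le_norm (s - 1)
  calc ‖riemannZeta s‖ ≤ ‖(s - 1)⁻¹‖ + ‖riemannZeta₀ s‖ := by
        rw [riemannZeta_eq_inv_sub_add s_ne_one]; exact norm_add_le _ _
    _ ≤ 1 * ‖s‖ ^ δ + C * ‖s‖ ^ δ := by linarith [hC s hs s_ne_one]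
    _ = (1 + C) * ‖s‖ ^ δ := by ring

lemma exists_norm_deriv_riemannZeta_le {δ : ℝ} (hδ : 0 < δ) (hδ' : δ ≤ 1) :
    ∃ C > 0, ∀ s : ℂ, 1 - δ / 4 ≤ s.re → 2 ≤ |s.im| →
      ‖deriv riemannZeta s‖ ≤ C * ‖s‖ ^ δ := by
  obtain ⟨C, C_pos, hC⟩ := exists_norm_riemannZeta_le hδ hδ'
  refine ⟨C * 2 ^ δ / (δ / 4), by positivity, fun s hs him ↦ ?_⟩
  have two_le_norm : 2 ≤ ‖s‖ := him.trans (Complex.abs_im_le_norm s)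
  have im_ge : ∀ z ∈ Metric.closedBall s (δ / 4), 1 ≤ |z.im| := fun z hz ↦ by
    rw [mem_closedBall_iff_norm'] at hz
    have := Complex.abs_im_le_norm (s - z)
    rw [Complex.sub_im] at this
    linarith [abs_sub_abs_le_abs_sub s.im z.im]
  have differentiable : DifferentiableOn ℂ riemannZeta (closure (Metric.ball s (δ / 4))) := by
    rw [closure_ball _ (by positivity)]
    refine fun z hz ↦ (differentiableAt_riemannZeta ?_).differentiableWithinAt
    rintro rfl
    simpa using (im_ge 1 hz).trans_lt' zero_lt_one
  have bound_on_sphere : ∀ z ∈ Metric.sphere s (δ / 4),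
      ‖riemannZeta z‖ ≤ C * 2 ^ δ * ‖s‖ ^ δ := fun z hz ↦ by
    have dist_eq : ‖z - s‖ = δ / 4 := by simpa using hz
    have re_sub := (Complex.abs_re_le_norm (z - s)).trans_eq dist_eq
    rw [Complex.sub_re] at re_sub
    refine (hC z (by linarith [(abs_le.1 re_sub).1])
      (im_ge z (Metric.sphere_subset_closedBall hz))).trans ?_
    rw [mul_assoc, ← Real.mul_rpow (by norm_num) (norm_nonneg s)]
    gcongr
    linarith [norm_le_norm_add_norm_sub' z s]
  refine (Complex.norm_deriv_le_of_forall_mem_sphere_norm_le (by positivity)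
    differentiable.diffContOnCl bound_on_sphere).trans_eq ?_
  ring

lemma exists_norm_riemannZeta_ofReal_le :
    ∃ C > 0, ∀ x : ℝ, 1 < x → x ≤ 2 → ‖riemannZeta x‖ ≤ C / (x - 1) := by
  obtain ⟨C, C_pos, hC⟩ := exists_norm_riemannZeta₀_le one_pos le_rfl
  refine ⟨1 + 2 * C, by positivity, fun x hx hx' ↦ ?_⟩
  have x_ne_one : (x : ℂ) ≠ 1 := by exact_mod_cast hx.ne'
  have sub_pos : 0 < x - 1 := by linarith
  have pole_term : ‖((x : ℂ) - 1)⁻¹‖ = 1 / (x - 1) := by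
    rw [norm_inv, one_div, ← Complex.ofReal_one, ← Complex.ofReal_sub,
      Complex.norm_of_nonneg sub_pos.le]
  have regular_term : ‖riemannZeta₀ x‖ ≤ 2 * C / (x - 1) := by
    have := hC x (by simp only [Complex.ofReal_re]; linarith) x_ne_one
    rw [Real.rpow_one, Complex.norm_of_nonneg (by linarith)] at this
    rw [le_div_iff₀ sub_pos]
    nlinarith [norm_nonneg (riemannZeta₀ x)]
  rw [riemannZeta_eq_inv_sub_add x_ne_one, add_div, ← pole_term]
  exact (norm_add_le _ _).trans (by gcongr)

lemma one_le_norm_riemannZeta_product {s : ℂ} (hs : 1 < s.re) :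
    1 ≤ ‖riemannZeta s.re‖ ^ 3 * ‖riemannZeta s‖ ^ 4 *
      ‖riemannZeta (s.re + 2 * s.im * Complex.I)‖ := by
  have := DirichletCharacter.norm_LFunction_product_ge_one (N := 1) (1 : DirichletCharacter ℂ 1)
    (sub_pos.2 hs) s.im
  rw [DirichletCharacter.LFunctionTrivChar] at this
  have re_eq : (1 : ℂ) + (s.re - 1 : ℝ) = s.re := by push_cast; ring
  have s_eq : (s.re : ℂ) + Complex.I * s.im = s := by
    rw [mul_comm]; exact Complex.re_add_im s
  rw [re_eq, s_eq, show (2 : ℂ) * Complex.I * s.im = 2 * s.im * Complex.I by ring] at this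
  simpa [DirichletCharacter.LFunction_modOne_eq] using this

lemma exists_re_sub_one_cube_le {δ : ℝ} (hδ : 0 < δ) (hδ' : δ ≤ 1) :
    ∃ b > 0, ∀ s : ℂ, 1 < s.re → s.re ≤ 2 → 2 ≤ |s.im| →
      (s.re - 1) ^ 3 ≤ ‖s‖ ^ δ * (b * ‖riemannZeta s‖) ^ 4 := by
  obtain ⟨C, C_pos, hC⟩ := exists_norm_riemannZeta_le hδ hδ'
  obtain ⟨C', C'_pos, hC'⟩ := exists_norm_riemannZeta_ofReal_le
  refine ⟨1 + C' ^ 3 * (C * 2 ^ δ), by positivity, fun s hs hs' him ↦ ?_⟩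
  set a := C' ^ 3 * (C * 2 ^ δ)
  have : 0 < s.re - 1 := by linarith
  have two_mul_bound : ‖riemannZeta (s.re + 2 * s.im * Complex.I)‖ ≤ C * 2 ^ δ * ‖s‖ ^ δ := by
    have im_eq : ((s.re : ℂ) + 2 * s.im * Complex.I).im = 2 * s.im := by simp
    have norm_le : ‖(s.re : ℂ) + 2 * s.im * Complex.I‖ ≤ 2 * ‖s‖ := by
      rw [← sq_le_sq₀ (by positivity) (by positivity), mul_pow, Complex.sq_norm, Complex.sq_norm,
        Complex.normSq_apply, Complex.normSq_apply, im_eq]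
      simp only [Complex.add_re, Complex.ofReal_re, Complex.mul_re, Complex.re_ofNat,
        Complex.im_ofNat, Complex.mul_im, Complex.I_re, Complex.I_im, Complex.ofReal_im]
      nlinarith [mul_self_nonneg s.re]
    refine (hC _ (by simp; linarith) (by rw [im_eq, abs_mul, abs_two]; linarith)).trans ?_
    rw [mul_assoc C, ← Real.mul_rpow (by norm_num) (norm_nonneg s)]
    gcongr
  have product_le := calc
    1 ≤ (C' / (s.re - 1)) ^ 3 * ‖riemannZeta s‖ ^ 4 * (C * 2 ^ δ * ‖s‖ ^ δ) := by
        refine (one_le_norm_riemannZeta_product hs).trans ?_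
        gcongr
        exact hC' s.re hs hs'
    _ = a * (‖s‖ ^ δ * ‖riemannZeta s‖ ^ 4) / (s.re - 1) ^ 3 := by
        rw [div_pow]; ring
  rw [le_div_iff₀ (by positivity), one_mul] at product_le
  have a_le_pow : a ≤ (1 + a) ^ 4 :=
    (le_add_of_nonneg_left zero_le_one).trans
      (le_self_pow₀ (le_add_of_nonneg_right (by positivity)) four_ne_zero)
  calc (s.re - 1) ^ 3 ≤ (1 + a) ^ 4 * (‖s‖ ^ δ * ‖riemannZeta s‖ ^ 4) :=
        product_le.trans (by gcongr)
    _ = ‖s‖ ^ δ * ((1 + a) * ‖riemannZeta s‖) ^ 4 := by ring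

lemma norm_add_ofReal_le_two_mul {s : ℂ} {h : ℝ} (h_nonneg : 0 ≤ h) (h_le : h ≤ ‖s‖) :
    ‖s + h‖ ≤ 2 * ‖s‖ := by
  refine (norm_add_le _ _).trans ?_
  rw [Complex.norm_of_nonneg h_nonneg]
  linarith

lemma exists_norm_riemannZeta_add_sub_le {δ : ℝ} (hδ : 0 < δ) (hδ' : δ ≤ 1) :
    ∃ C > 0, ∀ s : ℂ, 2 ≤ |s.im| → 1 - δ / 4 ≤ s.re → ∀ h : ℝ, 0 ≤ h → h ≤ 1 →
      ‖riemannZeta (s + h) - riemannZeta s‖ ≤ C * ‖s‖ ^ δ * h := by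
  obtain ⟨C, C_pos, hC⟩ := exists_norm_deriv_riemannZeta_le hδ hδ'
  refine ⟨C * 2 ^ δ, by positivity, fun s him hs h h_nonneg h_le ↦ ?_⟩
  have hasDeriv : ∀ t ∈ Set.Icc 0 h, HasDerivWithinAt (fun t : ℝ ↦ riemannZeta (s + t))
      (deriv riemannZeta (s + t)) (Set.Icc 0 h) t := fun t _ ↦ by
    have ne_one : s + t ≠ 1 := fun eq ↦ by
      have := congrArg Complex.im eq
      simp only [Complex.add_im, Complex.ofReal_im, add_zero, Complex.one_im] at this
      norm_num [this] at him
    simpa using ((differentiableAt_riemannZeta ne_one).hasDerivAt.comp (t : ℂ)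
      ((hasDerivAt_id _).const_add s)).comp_ofReal.hasDerivWithinAt
  have deriv_le : ∀ t ∈ Set.Ico 0 h, ‖deriv riemannZeta (s + t)‖ ≤ C * 2 ^ δ * ‖s‖ ^ δ :=
    fun t ⟨t_nonneg, t_lt⟩ ↦ by
    refine (hC (s + t) (by simp; linarith) (by simpa using him)).trans ?_
    rw [mul_assoc C, ← Real.mul_rpow (by norm_num) (norm_nonneg s)]
    gcongr
    exact norm_add_ofReal_le_two_mul t_nonneg (by linarith [Complex.abs_im_le_norm s])
  simpa using norm_image_sub_le_of_norm_deriv_le_segment' hasDeriv deriv_le h ⟨h_nonneg, le_rfl⟩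

lemma mul_pow_inv_le_of_cube_le {k P x y : ℝ} (hk : 0 ≤ k) (hP : 0 < P) (hy : 0 ≤ y)
    (hx : k ^ 4 * P⁻¹ ^ 5 ≤ x) (hxy : x ^ 3 ≤ P * y ^ 4) : k ^ 3 * P⁻¹ ^ 4 ≤ y := by
  refine le_of_pow_le_pow_left₀ four_ne_zero hy (le_of_mul_le_mul_left ?_ hP)
  calc P * (k ^ 3 * P⁻¹ ^ 4) ^ 4 = (k ^ 4 * P⁻¹ ^ 5) ^ 3 := by field_simp
    _ ≤ x ^ 3 := pow_le_pow_left₀ (mul_nonneg (pow_nonneg hk 4) (by positivity)) hx 3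
    _ ≤ P * y ^ 4 := hxy

lemma exists_cube_mul_le_norm_riemannZeta {δ : ℝ} (hδ : 0 < δ) (hδ' : δ ≤ 1) :
    ∃ b > 0, ∀ k > 0, ∀ s w : ℂ, s ≠ 0 → 2 ≤ |w.im| → ‖w‖ ≤ 2 * ‖s‖ →
      1 + k ^ 4 * (‖s‖ ^ δ)⁻¹ ^ 5 ≤ w.re → w.re ≤ 2 →
        k ^ 3 * (‖s‖ ^ δ)⁻¹ ^ 4 ≤ b * ‖riemannZeta w‖ := by
  obtain ⟨b, b_pos, hb⟩ := exists_re_sub_one_cube_le hδ hδ'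
  refine ⟨2 * b, by positivity, fun k k_pos s w hs him norm_w_le hw hw' ↦ ?_⟩
  have norm_pos : 0 < ‖s‖ := norm_pos_iff.2 hs
  have η_pos : 0 < k ^ 4 * (‖s‖ ^ δ)⁻¹ ^ 5 := by positivity
  refine mul_pow_inv_le_of_cube_le k_pos.le (by positivity) (by positivity)
    (le_sub_iff_add_le'.2 hw) ?_
  have rpow_le : ‖w‖ ^ δ ≤ 2 ^ 4 * ‖s‖ ^ δ := by
    refine (Real.rpow_le_rpow (norm_nonneg w) norm_w_le hδ.le).trans ?_
    rw [Real.mul_rpow (by norm_num) norm_pos.le]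
    gcongr
    exact (Real.rpow_le_self_of_one_le one_le_two hδ').trans (by norm_num)
  calc (w.re - 1) ^ 3 ≤ ‖w‖ ^ δ * (b * ‖riemannZeta w‖) ^ 4 := hb w (by linarith) hw' him
    _ ≤ 2 ^ 4 * ‖s‖ ^ δ * (b * ‖riemannZeta w‖) ^ 4 := by gcongr
    _ = ‖s‖ ^ δ * (2 * b * ‖riemannZeta w‖) ^ 4 := by ring

-- Compare `ζ s` with `ζ (s + h)` where `Re (s + h) ≥ 1 + η` and `η = k⁴ ‖s‖^{-5δ}`: the 3-4-1
-- inequality bounds `ζ (s + h)` from below, and the difference is smaller than this bound by a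
-- factor `k`.
lemma exists_pow_mul_le_norm_riemannZeta {δ : ℝ} (hδ : 0 < δ) (hδ' : δ ≤ 1) :
    ∃ k > 0, ∀ s : ℂ, 2 ≤ |s.im| → 1 - k ^ 4 * (‖s‖ ^ δ)⁻¹ ^ 5 ≤ s.re → s.re ≤ 2 →
      k ^ 4 * (‖s‖ ^ δ)⁻¹ ^ 5 ≤ ‖riemannZeta s‖ := by
  obtain ⟨b, b_pos, hb⟩ := exists_cube_mul_le_norm_riemannZeta hδ hδ'
  obtain ⟨A, A_pos, hA⟩ := exists_norm_riemannZeta_add_sub_le hδ hδ'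
  obtain ⟨k, k_pos, k_le, hk⟩ : ∃ k > 0, k ≤ δ / 4 ∧ k ≤ 1 / ((2 * A + 1) * b) :=
    ⟨_, lt_min (by positivity) (by positivity), min_le_left _ _, min_le_right _ _⟩
  rw [le_div_iff₀ (by positivity)] at hk
  refine ⟨k, k_pos, fun s him hre hre' ↦ ?_⟩
  have two_le_norm : 2 ≤ ‖s‖ := him.trans (Complex.abs_im_le_norm s)
  replace hb := hb k k_pos s
  replace hA := hA s him
  set P := ‖s‖ ^ δ
  have P_pos : 0 < P := by positivity
  have P_inv_le : P⁻¹ ≤ 1 := inv_le_one_of_one_le₀ (Real.one_le_rpow (by linarith) hδ.le)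
  set η := k ^ 4 * P⁻¹ ^ 5 with hη
  set m := k ^ 3 * P⁻¹ ^ 4 with hm
  have m_pos : 0 < m := by positivity
  have η_pos : 0 < η := by positivity
  have P_mul_η : P * η = k * m := by rw [hη, hm]; field_simp
  have η_le : η ≤ k * m := by
    rw [show η = k * m * P⁻¹ by rw [hη, hm]; ring]
    exact mul_le_of_le_one_right (by positivity) P_inv_le
  have m_le_one : m ≤ 1 := mul_le_one₀ (pow_le_one₀ k_pos.le (by linarith)) (by positivity)
    (pow_le_one₀ (by positivity) P_inv_le)
  have η_le' : η ≤ δ / 4 := by nlinarith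
  obtain ⟨h, h_nonneg, h_le, re_ge, re_le⟩ :
      ∃ h : ℝ, 0 ≤ h ∧ h ≤ 2 * η ∧ 1 + η ≤ s.re + h ∧ s.re + h ≤ 2 :=
    ⟨max 0 (1 + η - s.re), le_max_left _ _, max_le (by linarith) (by linarith),
      by linarith [le_max_right 0 (1 + η - s.re)],
      by rw [add_comm, ← le_sub_iff_add_le]; exact max_le (by linarith) (by linarith)⟩
  have right_bound : m ≤ b * ‖riemannZeta (s + h)‖ :=
    hb (s + h) (norm_pos_iff.1 (by linarith)) (by simpa using him)
      (norm_add_ofReal_le_two_mul h_nonneg (by linarith)) (by simpa using re_ge)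
      (by simpa using re_le)
  have sub_bound : ‖riemannZeta (s + h) - riemannZeta s‖ ≤ 2 * A * (k * m) := by
    refine (hA (by linarith) h h_nonneg (by linarith)).trans ?_
    rw [← P_mul_η, show 2 * A * (P * η) = A * P * (2 * η) by ring]
    gcongr
  refine η_le.trans (le_of_mul_le_mul_left ?_ b_pos)
  have := norm_le_norm_add_norm_sub' (riemannZeta (s + h)) (riemannZeta s)
  nlinarith

/-- The part `2 ≤ |Im s|`, `1 - c ‖s‖^{-ε} ≤ Re s ≤ 2` of a neighbourhood of the line `Re s = 1`,
free of zeros of the zeta function if `c` is small. The height is measured by `‖s‖` rather than by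
`|Im s|`; the two are comparable here. -/
def zeroFreeRegion (c ε : ℝ) : Set ℂ :=
  {s | 2 ≤ |s.im| ∧ 1 - c * ‖s‖ ^ (-ε) ≤ s.re ∧ s.re ≤ 2}

lemma exists_le_norm_riemannZeta {ε : ℝ} (hε : 0 < ε) (hε' : ε ≤ 1) :
    ∃ c > 0, ∀ s ∈ zeroFreeRegion c ε, c * ‖s‖ ^ (-ε) ≤ ‖riemannZeta s‖ := by
  obtain ⟨k, k_pos, hk⟩ :=
    exists_pow_mul_le_norm_riemannZeta (δ := ε / 5) (by positivity) (by linarith)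
  refine ⟨k ^ 4, by positivity, fun s ⟨him, hre, hre'⟩ ↦ ?_⟩
  have rpow_eq : ‖s‖ ^ (-ε) = (‖s‖ ^ (ε / 5))⁻¹ ^ 5 := by
    rw [Real.rpow_neg (norm_nonneg s), inv_pow, ← Real.rpow_natCast,
      ← Real.rpow_mul (norm_nonneg s)]
    norm_num
  rw [rpow_eq] at hre ⊢
  exact hk s him hre hre'

/-- The function `-ζ'/ζ - ζ`, the Dirichlet series of `Λ - 1`, continued to `s = 1` through the
entire functions `riemannZeta₁ s = (s - 1) ζ(s)` and `riemannZeta₀ s = ζ(s) - 1/(s - 1)`. -/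
noncomputable def vonMangoldtRemainder (s : ℂ) : ℂ :=
  -(deriv riemannZeta₁ s / riemannZeta₁ s) - riemannZeta₀ s

/-- The factor of `x ^ s` in the Perron integral for `∑_{n ≤ x} (Λ n - 1) (1 - n/x)`. -/
noncomputable def perronRemainder (s : ℂ) : ℂ :=
  vonMangoldtRemainder s / (s * (s + 1))

lemma riemannZeta₁_eq_sub_one_mul {s : ℂ} (hs : s ≠ 1) :
    riemannZeta₁ s = (s - 1) * riemannZeta s := by
  rw [riemannZeta_eq_inv_sub_mul hs, mul_inv_cancel_left₀ (sub_ne_zero.2 hs)]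

lemma vonMangoldtRemainder_eq {s : ℂ} (hs : s ≠ 1) (hζ : riemannZeta s ≠ 0) :
    vonMangoldtRemainder s = -(deriv riemannZeta s) / riemannZeta s - riemannZeta s := by
  have sub_ne : s - 1 ≠ 0 := sub_ne_zero.2 hs
  have zeta₁_ne : riemannZeta₁ s ≠ 0 := by
    rw [riemannZeta₁_eq_sub_one_mul hs]; exact mul_ne_zero sub_ne hζ
  have zeta₀_eq : riemannZeta₀ s = riemannZeta s - (s - 1)⁻¹ := by
    rw [riemannZeta_eq_inv_sub_add hs, add_sub_cancel_left]
  rw [vonMangoldtRemainder, zeta₀_eq, deriv_riemannZeta_eq_neg_inv_sub_sq_mul_add hs,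
    riemannZeta_eq_inv_sub_mul hs]
  field_simp
  ring

lemma riemannZeta₁_ne_zero_of_one_le_re {s : ℂ} (hs : 1 ≤ s.re) : riemannZeta₁ s ≠ 0 := by
  obtain rfl | hs' := eq_or_ne s 1
  · simp
  · rw [riemannZeta₁_eq_sub_one_mul hs']
    exact mul_ne_zero (sub_ne_zero.2 hs') (riemannZeta_ne_zero_of_one_le_re hs)

lemma mul_add_one_ne_zero_of_re_pos {s : ℂ} (hs : 0 < s.re) : s * (s + 1) ≠ 0 := by
  refine mul_ne_zero (fun h ↦ ?_) fun h ↦ ?_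
  all_goals
    have := congrArg Complex.re h
    simp only [Complex.add_re, Complex.one_re, Complex.zero_re] at this
    linarith

lemma differentiableAt_perronRemainder {s : ℂ} (hs : 0 < s.re) (hζ : riemannZeta₁ s ≠ 0) :
    DifferentiableAt ℂ perronRemainder s := by
  have deriv_differentiable : DifferentiableAt ℂ (deriv riemannZeta₁) s :=
    (differentiable_riemannZeta₁.analyticAt s).deriv.differentiableAt
  exact ((deriv_differentiable.fun_div (differentiable_riemannZeta₁ s) hζ).fun_neg.fun_sub
    (differentiable_riemannZeta₀ s)).fun_div (by fun_prop) (mul_add_one_ne_zero_of_re_pos hs)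

lemma analyticAt_perronRemainder {s : ℂ} (hs : 1 ≤ s.re) : AnalyticAt ℂ perronRemainder s := by
  have U_open : IsOpen ({z : ℂ | 0 < z.re} ∩ {z | riemannZeta₁ z ≠ 0}) :=
    (isOpen_lt continuous_const Complex.continuous_re).inter
      (isOpen_ne_fun differentiable_riemannZeta₁.continuous continuous_const)
  exact (show DifferentiableOn ℂ perronRemainder _ from fun z hz ↦
    (differentiableAt_perronRemainder hz.1 hz.2).differentiableWithinAt).analyticAt
      (U_open.mem_nhds ⟨zero_lt_one.trans_le hs, riemannZeta₁_ne_zero_of_one_le_re hs⟩)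

lemma zeroFreeRegion_subset {c c' ε ε' : ℝ} (hc : 0 ≤ c) (hcc' : c ≤ c') (hε : ε' ≤ ε) :
    zeroFreeRegion c ε ⊆ zeroFreeRegion c' ε' := fun s ⟨him, hre, hre'⟩ ↦ by
  have one_le_norm : 1 ≤ ‖s‖ := by linarith [Complex.abs_im_le_norm s]
  refine ⟨him, hre.trans' (sub_le_sub_left ?_ 1), hre'⟩
  have := hc.trans hcc'
  gcongr

lemma one_sub_le_re_of_mem_zeroFreeRegion {c ε : ℝ} (hc : 0 ≤ c) (hε : 0 ≤ ε) {s : ℂ}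
    (hs : s ∈ zeroFreeRegion c ε) : 1 - c ≤ s.re := by
  obtain ⟨him, hre, -⟩ := hs
  refine hre.trans' (sub_le_sub_left (mul_le_of_le_one_right hc ?_) 1)
  exact Real.rpow_le_one_of_one_le_of_nonpos (by linarith [Complex.abs_im_le_norm s]) (by linarith)

lemma exists_norm_vonMangoldtRemainder_le {ε : ℝ} (hε : 0 < ε) (hε' : ε ≤ 1) :
    ∃ c > 0, ∃ B > 0, ∀ s ∈ zeroFreeRegion c ε,
      riemannZeta s ≠ 0 ∧ ‖vonMangoldtRemainder s‖ ≤ B * ‖s‖ ^ ε := by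
  obtain ⟨C, C_pos, hC⟩ :=
    exists_norm_riemannZeta_le (δ := ε / 2) (by positivity) (by linarith)
  obtain ⟨C', C'_pos, hC'⟩ :=
    exists_norm_deriv_riemannZeta_le (δ := ε / 2) (by positivity) (by linarith)
  obtain ⟨c, c_pos, hc⟩ := exists_le_norm_riemannZeta (ε := ε / 2) (by positivity) (by linarith)
  refine ⟨min c (ε / 8), by positivity, C' / c + C, by positivity, fun s hs ↦ ?_⟩
  have him : 2 ≤ |s.im| := hs.1
  have re_ge : 1 - ε / 2 / 4 ≤ s.re := by
    linarith [one_sub_le_re_of_mem_zeroFreeRegion (by positivity) hε.le hs, min_le_right c (ε / 8)]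
  have one_le_norm : 1 ≤ ‖s‖ := by linarith [Complex.abs_im_le_norm s]
  have norm_pos : 0 < ‖s‖ := by linarith
  have lower := hc s (zeroFreeRegion_subset (by positivity) (min_le_left _ _) (by linarith) hs)
  have lower_pos : 0 < c * ‖s‖ ^ (-(ε / 2)) := by positivity
  have ζ_ne : riemannZeta s ≠ 0 := norm_pos_iff.1 (lower_pos.trans_le lower)
  refine ⟨ζ_ne, ?_⟩
  rw [vonMangoldtRemainder_eq (by rintro rfl; norm_num at him) ζ_ne]
  calc _ ≤ ‖deriv riemannZeta s‖ / ‖riemannZeta s‖ + ‖riemannZeta s‖ := by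
        rw [← norm_neg (deriv riemannZeta s), ← norm_div]; exact norm_sub_le _ _
    _ ≤ C' * ‖s‖ ^ (ε / 2) / (c * ‖s‖ ^ (-(ε / 2))) + C * ‖s‖ ^ ε := by
        gcongr
        · exact hC' s re_ge him
        · refine (hC s (by linarith) (by linarith)).trans ?_
          gcongr
          linarith
    _ = (C' / c + C) * ‖s‖ ^ ε := by
        rw [Real.rpow_neg norm_pos.le, show ε = ε / 2 + ε / 2 by ring, Real.rpow_add norm_pos]
        field_simp
        ring_nf

lemma exists_norm_perronRemainder_le {ε : ℝ} (hε : 0 < ε) (hε' : ε ≤ 1) :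
    ∃ c > 0, DifferentiableOn ℂ perronRemainder (zeroFreeRegion c ε) ∧
      ∃ B > 0, ∀ s ∈ zeroFreeRegion c ε, ‖perronRemainder s‖ ≤ B * ‖s‖ ^ (-(2 - ε)) := by
  obtain ⟨c, c_pos, B, B_pos, hB⟩ := exists_norm_vonMangoldtRemainder_le hε hε'
  have re_pos : ∀ s ∈ zeroFreeRegion (min c (1 / 2)) ε, 0 < s.re := fun s hs ↦ by
    linarith [one_sub_le_re_of_mem_zeroFreeRegion (by positivity) hε.le hs, min_le_right c (1 / 2)]
  have subset : zeroFreeRegion (min c (1 / 2)) ε ⊆ zeroFreeRegion c ε :=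
    zeroFreeRegion_subset (by positivity) (min_le_left _ _) le_rfl
  refine ⟨min c (1 / 2), by positivity, fun s hs ↦ ?_, B, B_pos, fun s hs ↦ ?_⟩
  · have s_ne_one : s ≠ 1 := by rintro rfl; norm_num [zeroFreeRegion] at hs
    refine (differentiableAt_perronRemainder (re_pos s hs) ?_).differentiableWithinAt
    rw [riemannZeta₁_eq_sub_one_mul s_ne_one]
    exact mul_ne_zero (sub_ne_zero.2 s_ne_one) (hB s (subset hs)).1
  · have norm_pos : 0 < ‖s‖ := norm_pos_iff.2 (by rintro rfl; simpa using re_pos 0 hs)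
    have norm_le : ‖s‖ ≤ ‖s + 1‖ := by
      rw [← sq_le_sq₀ (norm_nonneg _) (norm_nonneg _), Complex.sq_norm, Complex.sq_norm,
        Complex.normSq_apply, Complex.normSq_apply]
      simp only [Complex.add_re, Complex.one_re, Complex.add_im, Complex.one_im, add_zero]
      nlinarith [re_pos s hs]
    calc ‖perronRemainder s‖ ≤ B * ‖s‖ ^ ε / (‖s‖ * ‖s‖) := by
          rw [perronRemainder, norm_div, norm_mul]
          gcongr
          exact (hB s (subset hs)).2
      _ = B * ‖s‖ ^ (-(2 - ε)) := by
          rw [neg_sub, Real.rpow_sub norm_pos, Real.rpow_two]; ring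

lemma exists_closedBall_subset_zeroFreeRegion {c ε : ℝ} (hc : 0 < c) (hε : 0 ≤ ε) (hε' : ε ≤ 1) :
    ∃ ρ > 0, ρ ≤ 1 / 2 ∧ ∀ s : ℂ, 1 ≤ s.re → s.re ≤ 3 / 2 → 3 ≤ |s.im| →
      Metric.closedBall s (ρ * ‖s‖ ^ (-ε)) ⊆ zeroFreeRegion c ε := by
  refine ⟨min (c / 2) (1 / 2), by positivity, min_le_right _ _, fun s hre hre' him z hz ↦ ?_⟩
  have three_le_norm : 3 ≤ ‖s‖ := him.trans (Complex.abs_im_le_norm s)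
  have pow_le_one : ‖s‖ ^ (-ε) ≤ 1 :=
    Real.rpow_le_one_of_one_le_of_nonpos (by linarith) (by linarith)
  rw [mem_closedBall_iff_norm] at hz
  have dist_le_half : ‖z - s‖ ≤ 1 / 2 := hz.trans <| calc
    _ ≤ 1 / 2 * (1 : ℝ) := by gcongr; exact min_le_right _ _
    _ = 1 / 2 := mul_one _
  have re_sub := abs_le.1 (Complex.abs_re_le_norm (z - s))
  have im_sub := (Complex.abs_im_le_norm (z - s))
  simp only [Complex.sub_re, Complex.sub_im] at re_sub im_sub
  refine ⟨?_, ?_, by linarith⟩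
  · rw [abs_sub_comm] at im_sub
    linarith [abs_sub_abs_le_abs_sub s.im z.im]
  · have z_pos : 0 < ‖z‖ := by linarith [norm_le_norm_add_norm_sub z s]
    have pow_half_le : ‖s‖ ^ (-ε) / 2 ≤ ‖z‖ ^ (-ε) := calc
      ‖s‖ ^ (-ε) / 2 ≤ 2 ^ (-ε) * ‖s‖ ^ (-ε) := by
          rw [div_eq_inv_mul, ← Real.rpow_neg_one]
          gcongr
          norm_num
      _ = (2 * ‖s‖) ^ (-ε) := (Real.mul_rpow (by norm_num) (norm_nonneg s)).symm
      _ ≤ ‖z‖ ^ (-ε) := Real.rpow_le_rpow_of_nonpos z_pos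
          (by linarith [norm_le_norm_add_norm_sub' z s]) (by linarith)
    have radius_le : min (c / 2) (1 / 2) * ‖s‖ ^ (-ε) ≤ c * ‖z‖ ^ (-ε) := calc
      _ ≤ c / 2 * ‖s‖ ^ (-ε) := by gcongr; exact min_le_left _ _
      _ = c * (‖s‖ ^ (-ε) / 2) := by ring
      _ ≤ c * ‖z‖ ^ (-ε) := by gcongr
    linarith

lemma exists_norm_iteratedDeriv_le_of_zeroFreeRegion {f : ℂ → ℂ} {a c ε B : ℝ} (ha : 0 ≤ a)
    (hc : 0 < c) (hε : 0 ≤ ε) (hε' : ε ≤ 1) (hB : 0 ≤ B)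
    (hf : DifferentiableOn ℂ f (zeroFreeRegion c ε))
    (hfB : ∀ s ∈ zeroFreeRegion c ε, ‖f s‖ ≤ B * ‖s‖ ^ (-a)) (j : ℕ) :
    ∃ C, ∀ s : ℂ, 1 ≤ s.re → s.re ≤ 3 / 2 → 3 ≤ |s.im| →
      ‖iteratedDeriv j f s‖ ≤ C * ‖s‖ ^ (j * ε - a) := by
  obtain ⟨ρ, ρ_pos, ρ_le, hρ⟩ := exists_closedBall_subset_zeroFreeRegion hc hε hε'
  refine ⟨j.factorial * (B * 2⁻¹ ^ (-a)) / ρ ^ j, fun s hre hre' him ↦ ?_⟩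
  have three_le_norm : 3 ≤ ‖s‖ := him.trans (Complex.abs_im_le_norm s)
  have norm_pos : 0 < ‖s‖ := by linarith
  set r := ρ * ‖s‖ ^ (-ε) with hr
  have r_pos : 0 < r := by positivity
  have r_le : r ≤ 1 / 2 := (mul_le_of_le_one_right ρ_pos.le
    (Real.rpow_le_one_of_one_le_of_nonpos (by linarith) (by linarith))).trans ρ_le
  have ball_subset : Metric.closedBall s r ⊆ zeroFreeRegion c ε := hρ s hre hre' him
  have bound_on_sphere : ∀ z ∈ Metric.sphere s r, ‖f z‖ ≤ B * (2⁻¹ ^ (-a) * ‖s‖ ^ (-a)) :=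
    fun z hz ↦ by
    refine (hfB z (ball_subset (Metric.sphere_subset_closedBall hz))).trans ?_
    rw [← Real.mul_rpow (by norm_num) norm_pos.le]
    have dist_eq : ‖z - s‖ = r := by simpa using hz
    gcongr B * ?_
    exact Real.rpow_le_rpow_of_nonpos (by positivity)
      (by linarith [norm_le_norm_add_norm_sub z s]) (by linarith)
  have diffContOnCl : DiffContOnCl ℂ f (Metric.ball s r) := by
    apply DifferentiableOn.diffContOnCl
    rw [closure_ball _ r_pos.ne']
    exact hf.mono ball_subset
  refine (Complex.norm_iteratedDeriv_le_of_forall_mem_sphere_norm_le j r_pos diffContOnCl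
    bound_on_sphere).trans_eq ?_
  have pow_eq : (‖s‖ ^ (-ε)) ^ j = (‖s‖ ^ (j * ε))⁻¹ := by
    rw [← Real.rpow_natCast, ← Real.rpow_mul norm_pos.le, ← Real.rpow_neg norm_pos.le]
    ring_nf
  rw [hr, mul_pow, pow_eq, sub_eq_add_neg (j * ε), Real.rpow_add norm_pos, div_mul_eq_div_div,
    div_inv_eq_mul]
  ring

lemma exists_norm_le_one_add_abs_im_rpow {f : ℂ → ℂ} {a b C : ℝ} (ha : 0 ≤ a)
    (hf : ContinuousOn f (Complex.re ⁻¹' Set.Icc 1 b))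
    (hfC : ∀ s : ℂ, 1 ≤ s.re → s.re ≤ b → 3 ≤ |s.im| → ‖f s‖ ≤ C * ‖s‖ ^ (-a)) :
    ∃ C', ∀ s : ℂ, 1 ≤ s.re → s.re ≤ b → ‖f s‖ ≤ C' * (1 + |s.im|) ^ (-a) := by
  obtain ⟨C₀, hC₀⟩ := (isCompact_Icc.reProdIm isCompact_Icc).exists_bound_of_continuousOn
    (hf.mono (Set.inter_subset_left : Set.Icc 1 b ×ℂ Set.Icc (-3) 3 ⊆ _))
  have scale {t : ℝ} (ht : 0 ≤ t) : t ^ (-a) = 4 ^ a * (4 * t) ^ (-a) := by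
    rw [Real.mul_rpow (by norm_num) ht, ← mul_assoc, ← Real.rpow_add (by norm_num)]
    simp
  refine ⟨max |C₀| C * 4 ^ a, fun s hs hs' ↦ ?_⟩
  rw [mul_assoc]
  obtain him | him := le_or_gt 3 |s.im|
  · calc ‖f s‖ ≤ C * ‖s‖ ^ (-a) := hfC s hs hs' him
      _ = C * (4 ^ a * (4 * ‖s‖) ^ (-a)) := by rw [← scale (norm_nonneg s)]
      _ ≤ max |C₀| C * (4 ^ a * (1 + |s.im|) ^ (-a)) := by
        gcongr ?_ * (_ * ?_)
        · exact le_max_right _ _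
        · exact Real.rpow_le_rpow_of_nonpos (by positivity)
            (by linarith [Complex.abs_im_le_norm s]) (by linarith)
  · calc ‖f s‖ ≤ C₀ := hC₀ s ⟨⟨hs, hs'⟩, abs_le.1 him.le⟩
      _ ≤ max |C₀| C * 1 := by rw [mul_one]; exact (le_abs_self _).trans (le_max_left _ _)
      _ = max |C₀| C * (4 ^ a * (4 * 1) ^ (-a)) := by rw [← scale zero_le_one, Real.one_rpow]
      _ ≤ max |C₀| C * (4 ^ a * (1 + |s.im|) ^ (-a)) := by
        gcongr _ * (_ * ?_)
        exact Real.rpow_le_rpow_of_nonpos (by positivity) (by linarith) (by linarith)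

lemma exists_norm_iteratedDeriv_perronRemainder_le (j : ℕ) :
    ∃ C, ∀ s : ℂ, 1 ≤ s.re → s.re ≤ 3 / 2 →
      ‖iteratedDeriv j perronRemainder s‖ ≤ C * (1 + |s.im|) ^ (-(3 / 2) : ℝ) := by
  obtain ⟨ε, ε_pos, ε_le, hε⟩ : ∃ ε : ℝ, 0 < ε ∧ ε ≤ 1 ∧ j * ε - (2 - ε) = -(3 / 2) := by
    refine ⟨1 / (2 * (j + 1)), by positivity, ?_, by field_simp; ring⟩
    rw [div_le_one (by positivity)]
    linarith [j.cast_nonneg (α := ℝ)]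
  obtain ⟨c, c_pos, hdiff, B, B_pos, hB⟩ := exists_norm_perronRemainder_le ε_pos ε_le
  obtain ⟨C, hC⟩ := exists_norm_iteratedDeriv_le_of_zeroFreeRegion (by linarith) c_pos
    ε_pos.le ε_le B_pos.le hdiff hB j
  rw [hε] at hC
  refine exists_norm_le_one_add_abs_im_rpow (by norm_num) (fun s hs ↦ ?_) hC
  rw [iteratedDeriv_eq_iterate]
  exact ((analyticAt_perronRemainder hs.1).iterated_deriv j).continuousAt.continuousWithinAt

/-! ### Decay of Fourier integrals -/

lemma fourier_neg_div_two_pi_eq (f : ℝ → ℂ) (w : ℝ) :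
    FourierTransform.fourier f (-(w / (2 * π))) =
      ∫ t : ℝ, Complex.exp ((w * t : ℝ) * Complex.I) * f t := by
  rw [Real.fourier_real_eq_integral_exp_smul]
  refine integral_congr_ae (.of_forall fun t ↦ ?_)
  simp only [smul_eq_mul]
  congr 3
  field_simp

lemma abs_pow_mul_norm_integral_exp_mul_le {f : ℝ → ℂ} {J : ℕ} (hf : ContDiff ℝ J f)
    (hfi : ∀ j ≤ J, Integrable (iteratedDeriv j f)) (w : ℝ) :
    |w| ^ J * ‖∫ t : ℝ, Complex.exp ((w * t : ℝ) * Complex.I) * f t‖ ≤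
      ∫ t : ℝ, ‖iteratedDeriv J f t‖ := by
  have fourier_eq := congrArg norm (congrFun (Real.fourier_iteratedDeriv (N := J) hf
    (fun j hj ↦ hfi j (by exact_mod_cast hj)) le_rfl) (-(w / (2 * π))))
  have norm_multiplier : ‖2 * π * Complex.I * ((-(w / (2 * π)) : ℝ) : ℂ)‖ = |w| := by
    have : (2 * π * Complex.I * ((-(w / (2 * π)) : ℝ) : ℂ) : ℂ) = -(w : ℂ) * Complex.I := by
      have : (π : ℂ) ≠ 0 := by exact_mod_cast Real.pi_ne_zero
      push_cast
      field_simp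
    rw [this]
    simp
  rw [norm_smul, norm_pow, norm_multiplier, fourier_neg_div_two_pi_eq f,
    fourier_neg_div_two_pi_eq] at fourier_eq
  rw [← fourier_eq]
  refine (norm_integral_le_integral_norm _).trans_eq (integral_congr_ae (.of_forall fun t ↦ ?_))
  simp only [norm_mul, Complex.norm_exp_ofReal_mul_I, one_mul]

section VerticalLine

variable {f : ℂ → ℂ} {σ : ℝ}

lemma hasDerivAt_iteratedDeriv_verticalLine
    (hf : ∀ t : ℝ, AnalyticAt ℂ f (σ + t * Complex.I)) (n : ℕ) (t : ℝ) :
    HasDerivAt (fun t : ℝ ↦ Complex.I ^ n * iteratedDeriv n f (σ + t * Complex.I))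
      (Complex.I ^ (n + 1) * iteratedDeriv (n + 1) f (σ + t * Complex.I)) t := by
  have hasDeriv_f := ((hf t).iterated_deriv n).differentiableAt.hasDerivAt
  rw [← iteratedDeriv_eq_iterate, ← iteratedDeriv_succ] at hasDeriv_f
  have hasDeriv_line : HasDerivAt (fun t : ℝ ↦ σ + t * Complex.I) Complex.I t := by
    simpa using ((hasDerivAt_id t).ofReal_comp.mul_const Complex.I).const_add (σ : ℂ)
  refine ((hasDeriv_f.comp t hasDeriv_line).const_mul (Complex.I ^ n)).congr_deriv ?_
  ring

lemma iteratedDeriv_verticalLine (hf : ∀ t : ℝ, AnalyticAt ℂ f (σ + t * Complex.I))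
    (n : ℕ) :
    iteratedDeriv n (fun t : ℝ ↦ f (σ + t * Complex.I)) =
      fun t : ℝ ↦ Complex.I ^ n * iteratedDeriv n f (σ + t * Complex.I) := by
  induction n with
  | zero => simp
  | succ n ih =>
    rw [iteratedDeriv_succ, ih]
    ext t
    exact (hasDerivAt_iteratedDeriv_verticalLine hf n t).deriv

lemma contDiff_verticalLine (hf : ∀ t : ℝ, AnalyticAt ℂ f (σ + t * Complex.I))
    (n : ℕ) : ContDiff ℝ n (fun t : ℝ ↦ f (σ + t * Complex.I)) := by
  refine contDiff_of_differentiable_iteratedDeriv (n := n) fun m _ ↦ ?_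
  rw [iteratedDeriv_verticalLine hf]
  exact fun t ↦ (hasDerivAt_iteratedDeriv_verticalLine hf m t).differentiableAt

end VerticalLine

lemma exists_abs_pow_mul_norm_integral_perronRemainder_le (J : ℕ) :
    ∃ C, ∀ σ : ℝ, 1 ≤ σ → σ ≤ 3 / 2 → ∀ w : ℝ,
      |w| ^ J * ‖∫ t : ℝ, Complex.exp ((w * t : ℝ) * Complex.I) *
        perronRemainder (σ + t * Complex.I)‖ ≤ C := by
  choose C hC using exists_norm_iteratedDeriv_perronRemainder_le
  have majorant_integrable (j : ℕ) : Integrable fun t : ℝ ↦ C j * (1 + ‖t‖) ^ (-(3 / 2) : ℝ) :=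
    (integrable_one_add_norm (by norm_num)).const_mul _
  refine ⟨∫ t : ℝ, C J * (1 + ‖t‖) ^ (-(3 / 2) : ℝ), fun σ hσ hσ' w ↦ ?_⟩
  set f : ℝ → ℂ := fun t ↦ perronRemainder (σ + t * Complex.I)
  have analytic (t : ℝ) : AnalyticAt ℂ perronRemainder (σ + t * Complex.I) :=
    analyticAt_perronRemainder (by simpa using hσ)
  have norm_iteratedDeriv_le (j : ℕ) (t : ℝ) :
      ‖iteratedDeriv j f t‖ ≤ C j * (1 + ‖t‖) ^ (-(3 / 2) : ℝ) := by
    rw [iteratedDeriv_verticalLine analytic]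
    simpa using hC j (σ + t * Complex.I) (by simpa using hσ) (by simpa using hσ')
  have integrable (j : ℕ) : Integrable (iteratedDeriv j f) :=
    (majorant_integrable j).mono'
      ((contDiff_verticalLine analytic j).continuous_iteratedDeriv j le_rfl).aestronglyMeasurable
      (.of_forall (norm_iteratedDeriv_le j))
  exact (abs_pow_mul_norm_integral_exp_mul_le (contDiff_verticalLine analytic J)
    (fun j _ ↦ integrable j) w).trans
    (integral_mono (integrable J).norm (majorant_integrable J) (norm_iteratedDeriv_le J))

/-! ### Perron's formula with Cesàro weights -/

section PerronKernel

variable {σ : ℝ}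

lemma re_add_mul_I_pos (hσ : 0 < σ) (t : ℝ) : 0 < (σ + t * Complex.I : ℂ).re := by simpa using hσ

lemma norm_perronKernel_le (hσ : 0 < σ) (t : ℝ) :
    ‖1 / ((σ + t * Complex.I : ℂ) * (σ + t * Complex.I + 1))‖ ≤
      (min 1 (σ ^ 2))⁻¹ * (1 + t ^ 2)⁻¹ := by
  have sq_le : min 1 (σ ^ 2) * (1 + t ^ 2) ≤ ‖(σ + t * Complex.I : ℂ)‖ ^ 2 := by
    rw [Complex.sq_norm, Complex.normSq_add_mul_I]
    nlinarith [min_le_left 1 (σ ^ 2), min_le_right 1 (σ ^ 2), sq_nonneg t]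
  have norm_le : ‖(σ + t * Complex.I : ℂ)‖ ≤ ‖(σ + t * Complex.I + 1 : ℂ)‖ := by
    rw [Complex.norm_def, Complex.norm_def, Complex.normSq_add_mul_I,
      show (σ + t * Complex.I + 1 : ℂ) = (σ + 1 : ℝ) + t * Complex.I by push_cast; ring,
      Complex.normSq_add_mul_I]
    gcongr
    linarith
  rw [← mul_inv, one_div, norm_inv, norm_mul]
  have : 0 < min 1 (σ ^ 2) := lt_min one_pos (by positivity)
  refine inv_anti₀ (by positivity) (sq_le.trans ?_)
  rw [sq]
  gcongr

lemma continuous_perronKernel (hσ : 0 < σ) :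
    Continuous fun t : ℝ ↦ 1 / ((σ + t * Complex.I : ℂ) * (σ + t * Complex.I + 1)) :=
  continuous_const.div (by fun_prop) fun t ↦
    mul_add_one_ne_zero_of_re_pos (re_add_mul_I_pos hσ t)

lemma integrable_perronKernel (hσ : 0 < σ) :
    Integrable fun t : ℝ ↦ 1 / ((σ + t * Complex.I : ℂ) * (σ + t * Complex.I + 1)) :=
  (integrable_inv_one_add_sq.const_mul _).mono' (continuous_perronKernel hσ).aestronglyMeasurable
    (.of_forall (norm_perronKernel_le hσ))

end PerronKernel

lemma hasMellin_max_one_sub {s : ℂ} (hs : 0 < s.re) :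
    HasMellin (fun y : ℝ ↦ ((max (1 - y) 0 : ℝ) : ℂ)) s (1 / (s * (s + 1))) := by
  have max_eq_indicator : Set.EqOn
      (fun y ↦ (Set.Ioc 0 1).indicator (fun _ ↦ (1 : ℂ)) y -
        (Set.Ioc 0 1).indicator (fun y : ℝ ↦ (y : ℂ) ^ (1 : ℂ)) y)
      (fun y : ℝ ↦ ((max (1 - y) 0 : ℝ) : ℂ)) (Set.Ioi 0) := fun y (hy : 0 < y) ↦ by
    obtain hy' | hy' := le_or_gt y 1
    · simp [hy, hy']
    · simp [hy'.not_ge, hy'.le]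
  have hOne := hasMellin_one_Ioc hs
  have hId := hasMellin_cpow_Ioc 1 (s := s) (by rw [Complex.one_re]; linarith)
  obtain ⟨hconv, heq⟩ := hasMellin_sub hOne.1 hId.1
  have smul_eq := fun (y : ℝ) (hy : y ∈ Set.Ioi 0) ↦
    congrArg ((y : ℂ) ^ (s - 1) • ·) (max_eq_indicator hy)
  refine ⟨(integrableOn_congr_fun smul_eq measurableSet_Ioi).1 hconv,
    (setIntegral_congr_fun measurableSet_Ioi smul_eq).symm.trans (heq.trans ?_)⟩
  have := mul_ne_zero_iff.1 (mul_add_one_ne_zero_of_re_pos hs)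
  rw [hOne.2, hId.2, div_sub_div _ _ this.1 this.2]
  simp

lemma integral_cpow_neg_mul_perronKernel {σ y : ℝ} (hσ : 0 < σ) (hy : 0 < y) :
    ∫ t : ℝ, (y : ℂ) ^ (-(σ + t * Complex.I)) *
        (1 / ((σ + t * Complex.I) * (σ + t * Complex.I + 1))) =
      2 * π * (max (1 - y) 0 : ℝ) := by
  have mellin_eq (t : ℝ) := (hasMellin_max_one_sub (re_add_mul_I_pos hσ t)).2
  have inversion := mellinInv_mellin_eq σ (fun y : ℝ ↦ ((max (1 - y) 0 : ℝ) : ℂ)) hy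
    (hasMellin_max_one_sub (by simpa using hσ)).1
    (by simpa only [Complex.VerticalIntegrable, mellin_eq] using integrable_perronKernel hσ)
    (by fun_prop)
  simp only [mellinInv, mellin_eq, smul_eq_mul] at inversion
  rw [← inversion, Complex.real_smul, ← mul_assoc]
  push_cast
  rw [mul_one_div_cancel (by simp), one_mul]

/-- The contribution of the `n`-th term of the Dirichlet series of `a` to the Perron integrand
`x ^ s * LSeries a s / (s * (s + 1))`. -/
noncomputable def perronTerm (a : ℕ → ℂ) (x : ℝ) (n : ℕ) (s : ℂ) : ℂ :=
  LSeries.term a s n * ((x : ℂ) ^ s * (1 / (s * (s + 1))))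

section PerronFormula

variable {a : ℕ → ℂ} {σ x : ℝ}

lemma perronTerm_eq (hx : 0 ≤ x) {n : ℕ} (hn : n ≠ 0) (s : ℂ) :
    perronTerm a x n s = a n * (((n / x : ℝ) : ℂ) ^ (-s) * (1 / (s * (s + 1)))) := by
  rw [perronTerm, LSeries.term_of_ne_zero hn, Complex.ofReal_div,
    Complex.div_cpow_ofReal_nonneg n.cast_nonneg hx, Complex.cpow_neg, Complex.cpow_neg,
    Complex.ofReal_natCast, div_inv_eq_mul]
  ring

lemma tsum_perronTerm (s : ℂ) :
    ∑' n, perronTerm a x n s = (x : ℂ) ^ s * (LSeries a s / (s * (s + 1))) := by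
  simp only [perronTerm, tsum_mul_right, LSeries]
  ring

lemma norm_perronTerm (hx : 0 < x) (n : ℕ) (s : ℂ) :
    ‖perronTerm a x n s‖ =
      ‖LSeries.term a s.re n‖ * (x ^ s.re * ‖1 / (s * (s + 1))‖) := by
  rw [perronTerm, norm_mul, norm_mul, Complex.norm_cpow_eq_rpow_re_of_pos hx,
    LSeries.norm_term_eq, LSeries.norm_term_eq, Complex.ofReal_re]

lemma norm_perronTerm_verticalLine (hx : 0 < x) (n : ℕ) (t : ℝ) :
    ‖perronTerm a x n (σ + t * Complex.I)‖ = ‖LSeries.term a σ n‖ *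
      (x ^ σ * ‖1 / ((σ + t * Complex.I : ℂ) * (σ + t * Complex.I + 1))‖) := by
  simp [norm_perronTerm hx]

lemma continuous_perronTerm_verticalLine (hσ : 0 < σ) (hx : 0 < x) (n : ℕ) :
    Continuous fun t : ℝ ↦ perronTerm a x n (σ + t * Complex.I) := by
  obtain rfl | hn := eq_or_ne n 0
  · simp [perronTerm, continuous_const]
  simp only [perronTerm_eq hx.le hn]
  refine continuous_const.mul (.mul (.const_cpow (by fun_prop) (.inl ?_))
    (continuous_perronKernel hσ))
  exact_mod_cast div_ne_zero (Nat.cast_ne_zero.2 hn) hx.ne'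

lemma integrable_perronTerm_verticalLine (hσ : 0 < σ) (hx : 0 < x) (n : ℕ) :
    Integrable fun t : ℝ ↦ perronTerm a x n (σ + t * Complex.I) :=
  (((integrable_perronKernel hσ).norm.const_mul _).const_mul _).mono'
    (continuous_perronTerm_verticalLine hσ hx n).aestronglyMeasurable
    (.of_forall fun t ↦ (norm_perronTerm_verticalLine hx n t).le)

lemma integral_perronTerm_verticalLine (hσ : 0 < σ) (hx : 0 < x) {n : ℕ} (hn : n ≠ 0) :
    ∫ t : ℝ, perronTerm a x n (σ + t * Complex.I) =
      2 * π * (a n * (max (1 - n / x) 0 : ℝ)) := by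
  simp only [perronTerm_eq hx.le hn]
  rw [integral_const_mul, integral_cpow_neg_mul_perronKernel hσ (by positivity)]
  ring

lemma hasSum_integral_perronTerm (hσ : 0 < σ) (ha : LSeriesSummable a σ) (hx : 0 < x) :
    HasSum (fun n ↦ ∫ t : ℝ, perronTerm a x n (σ + t * Complex.I))
      (∫ t : ℝ, (x : ℂ) ^ (σ + t * Complex.I : ℂ) *
        (LSeries a (σ + t * Complex.I) / ((σ + t * Complex.I) * (σ + t * Complex.I + 1)))) := by
  have summable_norm : Summable fun n ↦ ∫ t : ℝ, ‖perronTerm a x n (σ + t * Complex.I)‖ := by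
    simp only [norm_perronTerm_verticalLine hx, integral_const_mul]
    exact ha.norm.mul_right _
  simpa only [tsum_perronTerm] using hasSum_integral_of_summable_integral_norm
    (integrable_perronTerm_verticalLine hσ hx) summable_norm

lemma integral_cpow_mul_LSeries_div (hσ : 0 < σ) (ha : LSeriesSummable a σ) (hx : 0 < x) :
    ∫ t : ℝ, (x : ℂ) ^ (σ + t * Complex.I : ℂ) *
        (LSeries a (σ + t * Complex.I) / ((σ + t * Complex.I) * (σ + t * Complex.I + 1))) =
      2 * π * ∑ n ∈ Finset.Icc 1 ⌊x⌋₊, a n * (1 - n / x) := by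
  refine (hasSum_integral_perronTerm hσ ha hx).unique ?_
  rw [Finset.mul_sum]
  have integral_eq : ∀ n ∈ Finset.Icc 1 ⌊x⌋₊,
      ∫ t : ℝ, perronTerm a x n (σ + t * Complex.I) = 2 * π * (a n * (1 - n / x)) := by
    intro n hn
    obtain ⟨hn, hnx⟩ := Finset.mem_Icc.1 hn
    rw [integral_perronTerm_verticalLine hσ hx (by lia), max_eq_left]
    · push_cast; rfl
    · rw [sub_nonneg, div_le_one hx]
      exact (Nat.le_floor_iff hx.le).1 hnx
  rw [← Finset.sum_congr rfl integral_eq]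
  refine hasSum_sum_of_ne_finset_zero fun n hn ↦ ?_
  obtain rfl | hn' := eq_or_ne n 0
  · simp [perronTerm]
  have lt_n : x < n := (Nat.floor_lt hx.le).1 (by grind)
  rw [integral_perronTerm_verticalLine hσ hx hn', max_eq_right]
  · simp
  · rw [sub_nonpos, one_le_div hx]
    exact lt_n.le

end PerronFormula

open ArithmeticFunction in
lemma LSeriesSummable_vonMangoldt_sub_one {s : ℂ} (hs : 1 < s.re) :
    LSeriesSummable ((fun n ↦ (Λ n : ℂ)) - 1) s :=
  (LSeriesSummable_vonMangoldt hs).sub (LSeriesSummable_one_iff.2 hs)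

open ArithmeticFunction in
lemma LSeries_vonMangoldt_sub_one {s : ℂ} (hs : 1 < s.re) :
    LSeries ((fun n ↦ (Λ n : ℂ)) - 1) s = vonMangoldtRemainder s := by
  have s_ne : s ≠ 1 := by rintro rfl; simp at hs
  rw [LSeries_sub (LSeriesSummable_vonMangoldt hs) (LSeriesSummable_one_iff.2 hs),
    LSeries_vonMangoldt_eq_deriv_riemannZeta_div hs, LSeries_one_eq_riemannZeta hs,
    vonMangoldtRemainder_eq s_ne (riemannZeta_ne_zero_of_one_le_re hs.le)]

open ArithmeticFunction in
/-- The sum over `n ≤ x` of `Λ n - 1` with Cesàro weights `1 - n / x`. -/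
noncomputable def cesaroVonMangoldtRemainder (x : ℝ) : ℝ :=
  ∑ n ∈ Finset.Icc 1 ⌊x⌋₊, (Λ n - 1) * (1 - n / x)

lemma integral_cpow_mul_perronRemainder {σ x : ℝ} (hσ : 1 < σ) (hx : 0 < x) :
    ∫ t : ℝ, (x : ℂ) ^ (σ + t * Complex.I : ℂ) * perronRemainder (σ + t * Complex.I) =
      2 * π * cesaroVonMangoldtRemainder x := by
  have one_lt_re (t : ℝ) : 1 < (σ + t * Complex.I : ℂ).re := by simpa using hσ
  simp only [perronRemainder, ← LSeries_vonMangoldt_sub_one (one_lt_re _)]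
  rw [integral_cpow_mul_LSeries_div (one_pos.trans hσ)
    (LSeriesSummable_vonMangoldt_sub_one (by simpa using hσ)) hx, cesaroVonMangoldtRemainder]
  simp

lemma ofReal_cpow_add_mul_I {x : ℝ} (hx : 0 < x) (σ t : ℝ) :
    (x : ℂ) ^ (σ + t * Complex.I : ℂ) =
      (x ^ σ : ℝ) * Complex.exp ((log x * t : ℝ) * Complex.I) := by
  have x_ne : (x : ℂ) ≠ 0 := by exact_mod_cast hx.ne'
  rw [Complex.cpow_add _ _ x_ne, ← Complex.ofReal_cpow hx.le,
    Complex.cpow_def_of_ne_zero x_ne (t * Complex.I), ← Complex.ofReal_log hx.le]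
  push_cast
  ring_nf

lemma exists_abs_cesaroVonMangoldtRemainder_mul_log_pow_le (J : ℕ) :
    ∃ C, ∀ x : ℝ, 1 ≤ x → |cesaroVonMangoldtRemainder x| * log x ^ J ≤ C * x := by
  obtain ⟨C, hC⟩ := exists_abs_pow_mul_norm_integral_perronRemainder_le J
  refine ⟨C, fun x hx ↦ ?_⟩
  have x_pos : 0 < x := by linarith
  have log_nonneg : 0 ≤ log x := Real.log_nonneg hx
  have le_rpow : ∀ σ ∈ Set.Ioc (1 : ℝ) (3 / 2),
      |cesaroVonMangoldtRemainder x| * log x ^ J ≤ C * x ^ σ := fun σ hσ ↦ by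
    have perron := congrArg norm (integral_cpow_mul_perronRemainder hσ.1 x_pos)
    simp only [ofReal_cpow_add_mul_I x_pos, mul_assoc, integral_const_mul, norm_mul,
      Complex.norm_real, Complex.norm_two, norm_eq_abs, abs_of_pos pi_pos,
      abs_of_pos (Real.rpow_pos_of_pos x_pos σ)] at perron
    have decay := hC σ hσ.1.le hσ.2 (log x)
    rw [abs_of_nonneg log_nonneg] at decay
    calc |cesaroVonMangoldtRemainder x| * log x ^ J
        ≤ 2 * (π * |cesaroVonMangoldtRemainder x|) * log x ^ J := by
          gcongr
          nlinarith [pi_gt_three, abs_nonneg (cesaroVonMangoldtRemainder x)]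
      _ ≤ C * x ^ σ := by
          rw [← perron, mul_right_comm, mul_assoc, mul_comm C]
          gcongr
  have tendsto_rpow : Tendsto (fun σ : ℝ ↦ C * x ^ σ) (nhdsWithin 1 (Set.Ioi 1))
      (nhds (C * x)) := by
    have := ((Real.continuous_const_rpow x_pos.ne').tendsto 1).const_mul C
    rw [Real.rpow_one] at this
    exact this.mono_left nhdsWithin_le_nhds
  refine ge_of_tendsto tendsto_rpow ?_
  filter_upwards [Ioc_mem_nhdsGT (by norm_num : (1 : ℝ) < 3 / 2)] with σ hσ using le_rpow σ hσ

/-! ### The prime number theorem with error `O(x / log ^ k x)` -/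

section PsiOne

open ArithmeticFunction

/-- The integrated Chebyshev function `ψ₁ x = ∑_{n ≤ x} Λ n * (x - n)`. -/
noncomputable def chebyshevPsiOne (x : ℝ) : ℝ := ∑ n ∈ Finset.Icc 1 ⌊x⌋₊, Λ n * (x - n)

lemma chebyshevPsiOne_eq_sum_max {y : ℝ} (hy : 0 ≤ y) {N : ℕ} (hN : ⌊y⌋₊ ≤ N) :
    chebyshevPsiOne y = ∑ n ∈ Finset.Icc 1 N, Λ n * max (y - n) 0 := by
  rw [chebyshevPsiOne, ← Finset.sum_subset (Finset.Icc_subset_Icc_right hN)]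
  · refine Finset.sum_congr rfl fun n hn ↦ ?_
    have := (Nat.le_floor_iff hy).1 (Finset.mem_Icc.1 hn).2
    rw [max_eq_left (by linarith)]
  · intro n _ hn
    have : y < n := (Nat.floor_lt hy).1 (by grind)
    rw [max_eq_right (by linarith), mul_zero]

lemma chebyshevPsiOne_add_mul_psi_le (x : ℝ) {y : ℝ} (hy : 0 ≤ y) :
    chebyshevPsiOne x + (y - x) * Chebyshev.psi x ≤ chebyshevPsiOne y := by
  have psi_eq : Chebyshev.psi x = ∑ n ∈ Finset.Icc 1 ⌊x⌋₊, Λ n := rfl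
  rw [chebyshevPsiOne_eq_sum_max hy (le_max_right ⌊x⌋₊ ⌊y⌋₊), psi_eq, chebyshevPsiOne,
    Finset.mul_sum, ← Finset.sum_add_distrib]
  calc ∑ n ∈ Finset.Icc 1 ⌊x⌋₊, (Λ n * (x - n) + (y - x) * Λ n)
      ≤ ∑ n ∈ Finset.Icc 1 ⌊x⌋₊, Λ n * max (y - n) 0 := Finset.sum_le_sum fun n _ ↦ by
        rw [mul_comm (y - x), ← mul_add, sub_add_sub_cancel']
        exact mul_le_mul_of_nonneg_left (le_max_left _ _) vonMangoldt_nonneg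
    _ ≤ ∑ n ∈ Finset.Icc 1 (max ⌊x⌋₊ ⌊y⌋₊), Λ n * max (y - n) 0 :=
        Finset.sum_le_sum_of_subset_of_nonneg (Finset.Icc_subset_Icc_right (le_max_left _ _))
          fun n _ _ ↦ mul_nonneg vonMangoldt_nonneg (le_max_right _ _)

lemma chebyshevPsiOne_eq {x : ℝ} (hx : x ≠ 0) :
    chebyshevPsiOne x =
      x * cesaroVonMangoldtRemainder x + ∑ n ∈ Finset.Icc 1 ⌊x⌋₊, (x - n) := by
  rw [chebyshevPsiOne, cesaroVonMangoldtRemainder, Finset.mul_sum, ← Finset.sum_add_distrib]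
  refine Finset.sum_congr rfl fun n _ ↦ ?_
  field_simp
  ring

end PsiOne

lemma abs_sum_Icc_sub_sub_sq_div_two_le {x : ℝ} (hx : 0 ≤ x) :
    |∑ n ∈ Finset.Icc 1 ⌊x⌋₊, (x - n) - x ^ 2 / 2| ≤ x := by
  have sum_eq (N : ℕ) : ∑ n ∈ Finset.Icc 1 N, (x - n) = N * x - N * (N + 1) / 2 := by
    induction N with
    | zero => simp
    | succ N ih => rw [Finset.sum_Icc_succ_top (by lia), ih]; push_cast; ring
  rw [sum_eq, abs_le]
  constructor <;> nlinarith [Nat.floor_le hx, Nat.lt_floor_add_one x]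

lemma log_pow_le_factorial_mul {x : ℝ} (hx : 1 ≤ x) (k : ℕ) : log x ^ k ≤ k.factorial * x := by
  have := Real.pow_div_factorial_le_exp (log x) (Real.log_nonneg hx) k
  rwa [Real.exp_log (by linarith), div_le_iff₀' (by positivity)] at this

lemma exists_abs_chebyshevPsiOne_sub_le (k : ℕ) :
    ∃ C ≥ 0, ∀ x : ℝ, 1 ≤ x → |chebyshevPsiOne x - x ^ 2 / 2| * log x ^ k ≤ C * x ^ 2 := by
  obtain ⟨C, hC⟩ := exists_abs_cesaroVonMangoldtRemainder_mul_log_pow_le k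
  refine ⟨|C| + k.factorial, by positivity, fun x hx ↦ ?_⟩
  have x_pos : 0 < x := by linarith
  have log_nonneg := Real.log_nonneg hx
  have abs_le : |chebyshevPsiOne x - x ^ 2 / 2| ≤ x * |cesaroVonMangoldtRemainder x| + x := by
    rw [chebyshevPsiOne_eq x_pos.ne', add_sub_assoc]
    refine (abs_add_le _ _).trans (add_le_add ?_ (abs_sum_Icc_sub_sub_sq_div_two_le x_pos.le))
    rw [abs_mul, abs_of_pos x_pos]
  calc |chebyshevPsiOne x - x ^ 2 / 2| * log x ^ k
      ≤ (x * |cesaroVonMangoldtRemainder x| + x) * log x ^ k := by gcongr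
    _ = x * (|cesaroVonMangoldtRemainder x| * log x ^ k) + x * log x ^ k := by ring
    _ ≤ x * (|C| * x) + x * (k.factorial * x) := by
        gcongr x * ?_ + x * ?_
        · exact (hC x hx).trans (mul_le_mul_of_nonneg_right (le_abs_self C) x_pos.le)
        · exact log_pow_le_factorial_mul hx k
    _ = (|C| + k.factorial) * x ^ 2 := by ring

lemma abs_sub_le_of_subgradient_of_abs_sub_sq_div_two_le {F : ℝ → ℝ} {p x h E : ℝ} (hh : 0 < h)
    (hp : F x - h * p ≤ F (x - h)) (hp' : F x + h * p ≤ F (x + h))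
    (hF : ∀ z ∈ Set.Icc (x - h) (x + h), |F z - z ^ 2 / 2| ≤ E) :
    |p - x| ≤ h / 2 + 2 * E / h := by
  have hx := abs_le.1 (hF x (by constructor <;> linarith))
  have hleft := abs_le.1 (hF (x - h) (by constructor <;> linarith))
  have hright := abs_le.1 (hF (x + h) (by constructor <;> linarith))
  refine le_of_mul_le_mul_left ?_ hh
  rw [mul_add, mul_div_cancel₀ _ hh.ne', ← abs_of_pos hh, ← abs_mul, abs_of_pos hh, abs_le]
  constructor <;> nlinarith

lemma one_le_log_of_four_le {x : ℝ} (hx : 4 ≤ x) : 1 ≤ log x := by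
  rw [Real.le_log_iff_exp_le (by linarith)]
  linarith [Real.exp_one_lt_d9]

lemma log_div_two_le_log_of_div_two_le {x z : ℝ} (hx : 4 ≤ x) (hz : x / 2 ≤ z) :
    log x / 2 ≤ log z := by
  have log_four_le : log (2 ^ 2) ≤ log x := Real.log_le_log (by norm_num) (by linarith)
  have log_half_le : log (x / 2) ≤ log z := Real.log_le_log (by linarith) hz
  rw [Real.log_pow, Nat.cast_two] at log_four_le
  rw [Real.log_div (by linarith) two_ne_zero] at log_half_le
  linarith

lemma exists_abs_psi_sub_le (k : ℕ) :
    ∃ C ≥ 0, ∀ x : ℝ, 4 ≤ x → |Chebyshev.psi x - x| ≤ C * (x / log x ^ k) := by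
  obtain ⟨C, C_nonneg, hC⟩ := exists_abs_chebyshevPsiOne_sub_le (2 * k)
  refine ⟨1 / 4 + 16 * 4 ^ k * C, by positivity, fun x hx ↦ ?_⟩
  have one_le_log := one_le_log_of_four_le hx
  set h := x / (2 * log x ^ k) with hh
  have h_pos : 0 < h := by positivity
  have h_le : h ≤ x / 2 := by
    have : 1 ≤ log x ^ k := one_le_pow₀ one_le_log
    exact div_le_div_of_nonneg_left (by linarith) two_pos (by linarith)
  have near : ∀ z ∈ Set.Icc (x - h) (x + h),
      |chebyshevPsiOne z - z ^ 2 / 2| ≤ 4 * 4 ^ k * C * (x / log x ^ k) ^ 2 := fun z hz ↦ by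
    have half_log_le := log_div_two_le_log_of_div_two_le hx (by linarith [hz.1] : x / 2 ≤ z)
    rw [div_pow, ← pow_mul, mul_comm k, ← mul_div_assoc, le_div_iff₀ (by positivity)]
    calc |chebyshevPsiOne z - z ^ 2 / 2| * log x ^ (2 * k)
        = 4 ^ k * (|chebyshevPsiOne z - z ^ 2 / 2| * (log x / 2) ^ (2 * k)) := by
          rw [div_pow, pow_mul 2 2 k]
          norm_num
          field_simp
      _ ≤ 4 ^ k * (|chebyshevPsiOne z - z ^ 2 / 2| * log z ^ (2 * k)) := by gcongr
      _ ≤ 4 ^ k * (C * z ^ 2) := by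
          gcongr 4 ^ k * ?_
          exact hC z (by linarith [hz.1])
      _ ≤ 4 ^ k * (C * (2 * x) ^ 2) := by
          gcongr
          · linarith [hz.1]
          · linarith [hz.2]
      _ = 4 * 4 ^ k * C * x ^ 2 := by ring
  refine (abs_sub_le_of_subgradient_of_abs_sub_sq_div_two_le h_pos ?_ ?_ near).trans_eq ?_
  · convert chebyshevPsiOne_add_mul_psi_le x (by linarith : 0 ≤ x - h) using 1; ring
  · convert chebyshevPsiOne_add_mul_psi_le x (by linarith : 0 ≤ x + h) using 1; ring
  · rw [hh]
    field_simp
    ring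

lemma sqrt_mul_log_pow_le {x : ℝ} (hx : 1 ≤ x) (k : ℕ) :
    √x * log x ^ k ≤ 2 ^ k * k.factorial * x := by
  have log_eq : log x = 2 * log √x := by rw [Real.log_sqrt (by linarith)]; ring
  calc √x * log x ^ k = √x * 2 ^ k * log √x ^ k := by rw [log_eq, mul_pow]; ring
    _ ≤ √x * 2 ^ k * (k.factorial * √x) := by
        gcongr
        exact log_pow_le_factorial_mul (Real.one_le_sqrt.2 hx) k
    _ = 2 ^ k * k.factorial * (√x * √x) := by ring
    _ = 2 ^ k * k.factorial * x := by rw [Real.mul_self_sqrt (by linarith)]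

lemma exists_abs_theta_sub_le (k : ℕ) :
    ∃ C ≥ 0, ∀ x : ℝ, 4 ≤ x → |Chebyshev.theta x - x| ≤ C * (x / log x ^ k) := by
  obtain ⟨C, C_nonneg, hC⟩ := exists_abs_psi_sub_le k
  refine ⟨C + 2 * (2 ^ (k + 1) * (k + 1).factorial), by positivity, fun x hx ↦ ?_⟩
  have one_le_log := one_le_log_of_four_le hx
  have sqrt_mul_log_le : √x * log x ≤ 2 ^ (k + 1) * (k + 1).factorial * (x / log x ^ k) := by
    rw [← mul_div_assoc, le_div_iff₀ (by positivity), mul_assoc, ← pow_succ']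
    exact sqrt_mul_log_pow_le (by linarith) (k + 1)
  have psi_bounds := abs_le.1 (hC x hx)
  have psi_sub_theta_le := Chebyshev.psi_sub_theta_le (by linarith : 1 ≤ x)
  have theta_le_psi := Chebyshev.theta_le_psi x
  rw [abs_le]
  constructor <;> nlinarith

lemma intervalIntegrable_one_div_log_pow (k : ℕ) {a b : ℝ} (ha : 1 < a) (hb : 1 < b) :
    IntervalIntegrable (fun x ↦ 1 / log x ^ k) volume a b := by
  refine ContinuousOn.intervalIntegrable fun x hx ↦ ContinuousAt.continuousWithinAt ?_
  have one_lt : 1 < x := (lt_min ha hb).trans_le hx.1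
  have : x ≠ 0 := by linarith
  have : log x ^ k ≠ 0 := pow_ne_zero _ (Real.log_pos one_lt).ne'
  fun_prop

lemma integral_one_div_log_eq {a b : ℝ} (ha : 1 < a) (hb : 1 < b) :
    ∫ u in a..b, 1 / log u = b / log b - a / log a + ∫ u in a..b, 1 / log u ^ 2 := by
  have int_one : IntervalIntegrable (fun u ↦ 1 / log u) volume a b := by
    simpa only [pow_one] using intervalIntegrable_one_div_log_pow 1 ha hb
  have int_two := intervalIntegrable_one_div_log_pow 2 ha hb
  have hderiv : ∀ u ∈ Set.uIcc a b,
      HasDerivAt (fun u ↦ u / log u) (1 / log u - 1 / log u ^ 2) u := fun u hu ↦ by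
    have one_lt : 1 < u := (lt_min ha hb).trans_le hu.1
    have log_ne : log u ≠ 0 := (Real.log_pos one_lt).ne'
    refine ((hasDerivAt_id u).fun_div (Real.hasDerivAt_log (by linarith)) log_ne).congr_deriv ?_
    rw [id]
    field_simp
  have := intervalIntegral.integral_eq_sub_of_hasDerivAt hderiv (int_one.sub int_two)
  rw [intervalIntegral.integral_sub int_one int_two] at this
  linarith

lemma intervalIntegrable_theta_div_mul_log_sq {a b : ℝ} (ha : 2 ≤ a) (hab : a ≤ b) :
    IntervalIntegrable (fun t ↦ Chebyshev.theta t / (t * log t ^ 2)) volume a b := by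
  rw [intervalIntegrable_iff_integrableOn_Icc_of_le hab]
  exact (Chebyshev.integrableOn_theta_div_id_mul_log_sq b).mono_set (Set.Icc_subset_Icc_left ha)

lemma primeCounting_sub_sub_integral_eq {a b : ℝ} (ha : 2 ≤ a) (hab : a ≤ b) :
    (Nat.primeCounting ⌊b⌋₊ : ℝ) - Nat.primeCounting ⌊a⌋₊ - ∫ u in a..b, 1 / log u =
      (Chebyshev.theta b - b) / log b - (Chebyshev.theta a - a) / log a +
        ∫ t in a..b, (Chebyshev.theta t - t) / (t * log t ^ 2) := by
  have split := intervalIntegral.integral_add_adjacent_intervals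
    (intervalIntegrable_theta_div_mul_log_sq le_rfl ha)
    (intervalIntegrable_theta_div_mul_log_sq ha hab)
  have integral_sub : ∫ t in a..b, (Chebyshev.theta t - t) / (t * log t ^ 2) =
      (∫ t in a..b, Chebyshev.theta t / (t * log t ^ 2)) - ∫ t in a..b, 1 / log t ^ 2 := by
    rw [← intervalIntegral.integral_sub (intervalIntegrable_theta_div_mul_log_sq ha hab)
      (intervalIntegrable_one_div_log_pow 2 (by linarith) (by linarith))]
    refine intervalIntegral.integral_congr fun t ht ↦ ?_
    rw [Set.uIcc_of_le hab] at ht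
    have t_ne : t ≠ 0 := by linarith [ht.1]
    rw [sub_div, ← div_div t, div_self t_ne]
  rw [integral_one_div_log_eq (by linarith) (by linarith),
    Chebyshev.primeCounting_eq_theta_div_log_add_integral (ha.trans hab),
    Chebyshev.primeCounting_eq_theta_div_log_add_integral ha, ← split, integral_sub]
  ring

lemma abs_integral_theta_sub_div_mul_log_sq_le {a b D : ℝ} (ha : 4 ≤ a) (hab : a ≤ b)
    (hD : ∀ t ≥ a, |Chebyshev.theta t - t| ≤ D * t) :
    |∫ t in a..b, (Chebyshev.theta t - t) / (t * log t ^ 2)| ≤ D * (b - a) := by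
  have integrand_le : ∀ t ∈ Set.uIoc a b,
      ‖(Chebyshev.theta t - t) / (t * log t ^ 2)‖ ≤ D := fun t ht ↦ by
    rw [Set.uIoc_of_le hab] at ht
    have t_pos : 0 < t := by linarith [ht.1]
    have one_le_log := one_le_log_of_four_le (ha.trans ht.1.le)
    rw [norm_div, norm_of_nonneg (by positivity : 0 ≤ t * log t ^ 2), ← div_div]
    refine (div_le_self (by positivity) (one_le_pow₀ one_le_log)).trans ?_
    rw [div_le_iff₀ t_pos]
    exact hD t ht.1.le
  refine (intervalIntegral.norm_integral_le_of_norm_le_const integrand_le).trans_eq ?_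
  rw [abs_of_nonneg (sub_nonneg.2 hab)]

lemma exists_abs_primeCounting_sub_sub_integral_le (k : ℕ) :
    ∃ C ≥ 0, ∀ a b : ℝ, 4 ≤ a → a ≤ b →
      |(Nat.primeCounting ⌊b⌋₊ : ℝ) - Nat.primeCounting ⌊a⌋₊ - ∫ u in a..b, 1 / log u| ≤
        C * (b / log a ^ k) := by
  obtain ⟨C, C_nonneg, hC⟩ := exists_abs_theta_sub_le k
  refine ⟨2 * C, by positivity, fun a b ha hab ↦ ?_⟩
  have one_le_log := one_le_log_of_four_le ha
  set D := C / log a ^ k with hD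
  have log_le {t : ℝ} (ht : a ≤ t) : log a ≤ log t := Real.log_le_log (by linarith) ht
  have theta_le : ∀ t ≥ a, |Chebyshev.theta t - t| ≤ D * t := fun t ht ↦ by
    refine (hC t (ha.trans ht)).trans ?_
    rw [hD, div_mul_eq_mul_div, mul_div_assoc]
    have : 0 ≤ t := by linarith
    have := log_le ht
    gcongr
  have boundary_le {t : ℝ} (ht : a ≤ t) : |(Chebyshev.theta t - t) / log t| ≤ D * t := by
    have : 1 ≤ |log t| := (one_le_log.trans (log_le ht)).trans (le_abs_self _)
    rw [abs_div]
    exact (div_le_self (abs_nonneg _) this).trans (theta_le t ht)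
  have integral_le := abs_integral_theta_sub_div_mul_log_sq_le ha hab theta_le
  rw [primeCounting_sub_sub_integral_eq (by linarith) hab,
    show 2 * C * (b / log a ^ k) = 2 * (D * b) by rw [hD]; ring]
  refine (abs_add_le _ _).trans ((add_le_add_left (abs_sub _ _) _).trans ?_)
  linarith [boundary_le hab, boundary_le le_rfl]

/-! ### Summing the logarithmic integral over `x / m` -/

lemma abs_harmonic_floor_sub_log_sub_le {z : ℝ} (hz : 1 ≤ z) :
    |((harmonic ⌊z⌋₊ : ℚ) : ℝ) - log z - ⌊z⌋₊ / z - (eulerMascheroniConstant - 1)| ≤ 2 / z := by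
  have hz_pos : 0 < z := by linarith
  set M := ⌊z⌋₊
  have hM : 1 ≤ M := Nat.le_floor (by simpa using hz)
  have hM_cast : (1 : ℝ) ≤ M := by exact_mod_cast hM
  have floor_le : (M : ℝ) ≤ z := Nat.floor_le hz_pos.le
  have lt_floor_add_one : z < M + 1 := Nat.lt_floor_add_one z
  have lower := eulerMascheroniSeq_lt_eulerMascheroniConstant M
  have upper := eulerMascheroniConstant_lt_eulerMascheroniSeq' M
  rw [eulerMascheroniSeq] at lower
  rw [eulerMascheroniSeq', if_neg (by lia)] at upper
  have log_add_one_sub : log (M + 1) - log z ≤ 1 / z := by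
    rw [← log_div (by positivity) hz_pos.ne']
    calc log ((M + 1) / z) ≤ (M + 1) / z - 1 := log_le_sub_one_of_pos (by positivity)
      _ = (M + 1 - z) / z := by field_simp
      _ ≤ 1 / z := by gcongr; linarith
  have sub_log : log z - log M ≤ 2 / z := by
    rw [← log_div (by positivity) (by positivity)]
    calc log (z / M) ≤ z / M - 1 := log_le_sub_one_of_pos (by positivity)
      _ = (z - M) / M := by field_simp
      _ ≤ 2 / z := by
        rw [div_le_div_iff₀ (by positivity) hz_pos]
        nlinarith
  have floor_div_le : (M : ℝ) / z ≤ 1 := (div_le_one hz_pos).2 floor_le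
  have le_floor_div : 1 - 1 / z ≤ (M : ℝ) / z := by
    rw [one_sub_div hz_pos.ne']
    gcongr
    linarith
  have two_div : 2 / z = 1 / z + 1 / z := by ring
  rw [abs_le]
  constructor <;> linarith

lemma le_floor_div_iff_le_div_natCast {x u : ℝ} {m : ℕ} (hu : 0 < u) (hm : m ≠ 0) :
    m ≤ ⌊x / u⌋₊ ↔ u ≤ x / m := by
  rw [Nat.le_floor_iff' hm, le_div_comm₀ (by positivity) hu]

lemma le_div_natCast_of_mem_Icc {x y : ℝ} {m : ℕ} (hy : 0 < y)
    (hm : m ∈ Finset.Icc 1 ⌊x / y⌋₊) : y ≤ x / m := by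
  rw [Finset.mem_Icc] at hm
  exact (le_floor_div_iff_le_div_natCast hy (by lia)).1 hm.2

lemma div_natCast_le_of_mem_Icc {x : ℝ} {m n : ℕ} (hx : 0 ≤ x) (hm : m ∈ Finset.Icc 1 n) :
    x / m ≤ x :=
  div_le_self hx (by exact_mod_cast (Finset.mem_Icc.1 hm).1)

lemma floor_div_mul_eq_sum_indicator {x y u : ℝ} (hx : 0 ≤ x) (hy : 0 < y) (hyu : y ≤ u)
    (w : ℝ → ℝ) :
    ⌊x / u⌋₊ * w u = ∑ m ∈ Finset.Icc 1 ⌊x / y⌋₊, (Set.Iic (x / m)).indicator w u := by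
  have filter_eq : (Finset.Icc 1 ⌊x / y⌋₊).filter (fun m : ℕ ↦ u ≤ x / m) =
      Finset.Icc 1 ⌊x / u⌋₊ := by
    ext m
    have floor_le : ⌊x / u⌋₊ ≤ ⌊x / y⌋₊ := Nat.floor_mono (by gcongr)
    rw [Finset.mem_filter, Finset.mem_Icc, Finset.mem_Icc]
    constructor
    · rintro ⟨hm, hum⟩
      exact ⟨hm.1, (le_floor_div_iff_le_div_natCast (hy.trans_le hyu) (by lia)).2 hum⟩
    · rintro ⟨hm, hmu⟩
      exact ⟨⟨hm, hmu.trans floor_le⟩,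
        (le_floor_div_iff_le_div_natCast (hy.trans_le hyu) (by lia)).1 hmu⟩
  simp only [Set.indicator_apply, Set.mem_Iic, ← Finset.sum_filter, filter_eq]
  simp

lemma integrableOn_floor_div_mul {x y : ℝ} {w : ℝ → ℝ} (hy : 0 < y)
    (hw : IntegrableOn w (Set.Ioc y x)) :
    IntegrableOn (fun u ↦ ⌊x / u⌋₊ * w u) (Set.Ioc y x) := by
  have integrable_sum : IntegrableOn
      (fun u ↦ ∑ m ∈ Finset.Icc 1 ⌊x / y⌋₊, (Set.Iic (x / m)).indicator w u) (Set.Ioc y x) :=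
    integrable_finsetSum _ fun m _ ↦ hw.indicator measurableSet_Iic
  refine integrable_sum.congr_fun (fun u hu ↦ ?_) measurableSet_Ioc
  exact (floor_div_mul_eq_sum_indicator (by linarith [hu.1, hu.2]) hy hu.1.le w).symm

lemma sum_integral_div_natCast_eq {x y : ℝ} {w : ℝ → ℝ} (hy : 0 < y) (hyx : y ≤ x)
    (hw : IntegrableOn w (Set.Ioc y x)) :
    ∑ m ∈ Finset.Icc 1 ⌊x / y⌋₊, ∫ u in y..(x / m), w u = ∫ u in y..x, ⌊x / u⌋₊ * w u := by
  have hx : 0 ≤ x := hy.le.trans hyx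
  rw [intervalIntegral.integral_of_le hyx, setIntegral_congr_fun measurableSet_Ioc
      (fun u hu ↦ floor_div_mul_eq_sum_indicator hx hy hu.1.le w),
    integral_finsetSum _ fun m _ ↦ hw.indicator measurableSet_Iic]
  refine Finset.sum_congr rfl fun m hm ↦ ?_
  rw [intervalIntegral.integral_of_le (le_div_natCast_of_mem_Icc hy hm),
    setIntegral_indicator measurableSet_Iic, Set.Ioc_inter_Iic,
    min_eq_right (div_natCast_le_of_mem_Icc hx hm)]

lemma intervalIntegrable_one_div_log_sub {a b : ℝ} (ha : 1 < a) (hb : 1 < b) (c : ℝ) :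
    IntervalIntegrable (fun u ↦ 1 / log u - c) volume a b := by
  simpa only [pow_one] using
    (intervalIntegrable_one_div_log_pow 1 ha hb).sub intervalIntegrable_const

lemma sum_integral_one_div_log_eq {x y : ℝ} (hy : 1 < y) (hyx : y ≤ x) :
    ∑ m ∈ Finset.Icc 1 ⌊x / y⌋₊, ∫ u in y..(x / m), 1 / log u =
      (∫ u in y..x, ⌊x / u⌋₊ * (1 / log u - 1 / log x)) +
        (x * ((harmonic ⌊x / y⌋₊ : ℚ) : ℝ) - ⌊x / y⌋₊ * y) / log x := by
  have constant_part : (x * ((harmonic ⌊x / y⌋₊ : ℚ) : ℝ) - ⌊x / y⌋₊ * y) / log x =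
      ∑ m ∈ Finset.Icc 1 ⌊x / y⌋₊, (x / m - y) / log x := by
    rw [← Finset.sum_div, Finset.sum_sub_distrib, harmonic_eq_sum_Icc]
    push_cast
    rw [Finset.mul_sum]
    simp [div_eq_mul_inv]
  rw [← sum_integral_div_natCast_eq (by linarith) hyx
      (intervalIntegrable_one_div_log_sub hy (hy.trans_le hyx) _).1,
    constant_part, ← Finset.sum_add_distrib]
  refine Finset.sum_congr rfl fun m hm ↦ ?_
  have hym : 1 < x / m := hy.trans_le (le_div_natCast_of_mem_Icc (by linarith) hm)
  have integrable := intervalIntegrable_one_div_log_sub hy hym 0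
  simp only [sub_zero] at integrable
  rw [intervalIntegral.integral_sub integrable intervalIntegrable_const,
    intervalIntegral.integral_const, smul_eq_mul]
  ring

lemma intervalIntegrable_div_mul_one_div_log_sub {x y : ℝ} (hy : 1 < y) (hyx : y ≤ x) :
    IntervalIntegrable (fun u ↦ x / u * (1 / log u - 1 / log x)) volume y x := by
  refine (intervalIntegrable_one_div_log_sub hy (hy.trans_le hyx) _).continuousOn_mul ?_
  rw [Set.uIcc_of_le hyx]
  exact continuousOn_const.div continuousOn_id fun u hu ↦
    (by linarith [hu.1] : u ≠ 0)

lemma integral_div_mul_one_div_log_sub {x y : ℝ} (hy : 1 < y) (hyx : y ≤ x) :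
    ∫ u in y..x, x / u * (1 / log u - 1 / log x) =
      x * log (log x / log y) - x * log (x / y) / log x := by
  have log_y_pos : 0 < log y := log_pos hy
  have log_x_pos : 0 < log x := log_pos (hy.trans_le hyx)
  have hasDerivAt (u : ℝ) (hu : u ∈ Set.uIcc y x) :
      HasDerivAt (fun u ↦ x * log (log u) - x / log x * log u)
        (x / u * (1 / log u - 1 / log x)) u := by
    rw [Set.uIcc_of_le hyx] at hu
    have log_u_pos : 0 < log u := log_pos (hy.trans_le hu.1)
    have log_deriv := hasDerivAt_log (x := u) (by linarith [hu.1])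
    refine (((log_deriv.log log_u_pos.ne').const_mul x).sub
      (log_deriv.const_mul (x / log x))).congr_deriv ?_
    field_simp
  rw [intervalIntegral.integral_eq_sub_of_hasDerivAt hasDerivAt
      (intervalIntegrable_div_mul_one_div_log_sub hy hyx),
    log_div log_x_pos.ne' log_y_pos.ne', log_div (by linarith) (by linarith)]
  ring

lemma integral_log_sub_log_le {x y : ℝ} (hy : 0 < y) (hyx : y ≤ x) :
    ∫ u in y..x, (log x - log u) ≤ x := by
  rw [intervalIntegral.integral_sub intervalIntegrable_const
      intervalIntegral.intervalIntegrable_log',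
    intervalIntegral.integral_const, integral_log, smul_eq_mul]
  nlinarith [log_le_log hy hyx]

lemma abs_floor_sub_mul_one_div_log_sub_le {x y u : ℝ} (hy : 1 < y) (hyu : y ≤ u)
    (hux : u ≤ x) :
    |⌊x / u⌋₊ * (1 / log u - 1 / log x) - x / u * (1 / log u - 1 / log x)| ≤
      (log x - log u) / (log x * log y) := by
  have : 0 < log y := log_pos hy
  have : log y ≤ log u := log_le_log (by linarith) hyu
  have : log u ≤ log x := log_le_log (by linarith) hux
  have : 0 < log u := by linarith
  have : 0 < log x := by linarith
  have : 0 ≤ log x - log u := by linarith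
  have floor_error : |(⌊x / u⌋₊ : ℝ) - x / u| ≤ 1 := by
    have hxu : 0 ≤ x / u := div_nonneg (by linarith) (by linarith)
    rw [abs_le]
    constructor <;> linarith [Nat.floor_le hxu, Nat.lt_floor_add_one (x / u)]
  have weight_eq : 1 / log u - 1 / log x = (log x - log u) / (log x * log u) := by field_simp
  rw [← sub_mul, abs_mul, weight_eq, abs_of_nonneg (by positivity : 0 ≤ _ / (log x * log u))]
  calc |(⌊x / u⌋₊ : ℝ) - x / u| * ((log x - log u) / (log x * log u))
      ≤ 1 * ((log x - log u) / (log x * log u)) := by gcongr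
    _ ≤ (log x - log u) / (log x * log y) := by
      rw [one_mul]
      gcongr

lemma abs_integral_floor_mul_sub_integral_div_mul_le {x y : ℝ} (hy : 1 < y) (hyx : y ≤ x) :
    |(∫ u in y..x, ⌊x / u⌋₊ * (1 / log u - 1 / log x)) -
      ∫ u in y..x, x / u * (1 / log u - 1 / log x)| ≤ x / (log x * log y) := by
  have log_y_pos : 0 < log y := log_pos hy
  have log_x_pos : 0 < log x := log_pos (hy.trans_le hyx)
  have floor_integrable : IntervalIntegrable
      (fun u ↦ ⌊x / u⌋₊ * (1 / log u - 1 / log x)) volume y x :=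
    (intervalIntegrable_iff_integrableOn_Ioc_of_le hyx).2 (integrableOn_floor_div_mul (by linarith)
      (intervalIntegrable_one_div_log_sub hy (hy.trans_le hyx) _).1)
  rw [← intervalIntegral.integral_sub floor_integrable
    (intervalIntegrable_div_mul_one_div_log_sub hy hyx), ← norm_eq_abs]
  calc _ ≤ ∫ u in y..x, (log x - log u) / (log x * log y) :=
        intervalIntegral.norm_integral_le_of_norm_le hyx
          (ae_of_all _ fun u hu ↦ abs_floor_sub_mul_one_div_log_sub_le hy hu.1.le hu.2)
          ((intervalIntegrable_const.sub intervalIntegral.intervalIntegrable_log').div_const _)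
    _ = (∫ u in y..x, (log x - log u)) / (log x * log y) := intervalIntegral.integral_div _ _
    _ ≤ x / (log x * log y) := by
      gcongr
      exact integral_log_sub_log_le (by linarith) hyx

lemma abs_sum_integral_one_div_log_sub_le {x y : ℝ} (hy : 1 < y) (hyx : y ≤ x) :
    |∑ m ∈ Finset.Icc 1 ⌊x / y⌋₊, (∫ u in y..(x / m), 1 / log u) -
      x * (log (log x / log y) - (1 - eulerMascheroniConstant) / log x)| ≤
        x / (log x * log y) + 2 * y / log x := by
  have hx_pos : 0 < x := by linarith
  have hy_pos : 0 < y := by linarith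
  have log_x_pos : 0 < log x := log_pos (hy.trans_le hyx)
  have floor_error := abs_integral_floor_mul_sub_integral_div_mul_le hy hyx
  have harmonic_error := abs_harmonic_floor_sub_log_sub_le ((one_le_div hy_pos).2 hyx)
  rw [integral_div_mul_one_div_log_sub hy hyx] at floor_error
  rw [sum_integral_one_div_log_eq hy hyx]
  set H := ((harmonic ⌊x / y⌋₊ : ℚ) : ℝ)
  set I := ∫ u in y..x, ⌊x / u⌋₊ * (1 / log u - 1 / log x)
  set E := H - log (x / y) - ⌊x / y⌋₊ / (x / y) - (eulerMascheroniConstant - 1) with hE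
  have decomposition : I + (x * H - ⌊x / y⌋₊ * y) / log x -
      x * (log (log x / log y) - (1 - eulerMascheroniConstant) / log x) =
      (I - (x * log (log x / log y) - x * log (x / y) / log x)) + x / log x * E := by
    rw [hE]
    field_simp
    ring
  rw [decomposition]
  refine (abs_add_le _ _).trans (add_le_add floor_error ?_)
  rw [abs_mul, abs_of_pos (by positivity)]
  calc x / log x * |E| ≤ x / log x * (2 / (x / y)) := by gcongr
    _ = 2 * y / log x := by field_simp

/-! ### Counting integers with a large prime factor -/

/-- The number `#{n ≤ x : P(n) > y}` of positive integers up to `x` that are not `y`-smooth. -/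
noncomputable def nonSmoothCount (x y : ℝ) : ℕ :=
  ((Finset.Icc 1 ⌊x⌋₊).filter fun n ↦ y < (largestPrimeFactor n : ℝ)).card

/-- The pairs `(m, p)` with `m ≥ 1`, `p` a prime exceeding `y` and `m * p ≤ x`, fibred over `m` so
that the fibres are counted by `π (x / m) - π y`. -/
noncomputable def cofactorPrimePairs (x y : ℝ) : Finset (Σ _ : ℕ, ℕ) :=
  (Finset.Icc 1 ⌊x / y⌋₊).sigma fun m ↦ (Finset.Ioc ⌊y⌋₊ ⌊x / m⌋₊).filter Nat.Prime

lemma lt_largestPrimeFactor_iff {n : ℕ} {y : ℝ} (hn : n ≠ 0) (hy : 1 ≤ y) :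
    y < (largestPrimeFactor n : ℝ) ↔ ∃ p, p.Prime ∧ p ∣ n ∧ y < (p : ℝ) := by
  obtain rfl | hn_one := eq_or_ne n 1
  · simp [largestPrimeFactor, hy]
  rw [largestPrimeFactor, if_neg (by lia)]
  constructor
  · intro hlt
    obtain ⟨p, hp, sup_eq⟩ := Finset.exists_mem_eq_sup n.primeFactors
      (Nat.nonempty_primeFactors.2 (by lia)) id
    rw [sup_eq] at hlt
    exact ⟨p, Nat.prime_of_mem_primeFactors hp, Nat.dvd_of_mem_primeFactors hp, hlt⟩
  · rintro ⟨p, hp, hdvd, hlt⟩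
    have le_sup : p ≤ n.primeFactors.sup id :=
      Finset.le_sup (f := id) (Nat.mem_primeFactors.2 ⟨hp, hdvd, hn⟩)
    exact hlt.trans_le (by exact_mod_cast le_sup)

lemma card_filter_prime_Ioc {a b : ℕ} (hab : a ≤ b) :
    (((Finset.Ioc a b).filter Nat.Prime).card : ℝ) =
      Nat.primeCounting b - Nat.primeCounting a := by
  have eq_sdiff : (Finset.Ioc a b).filter Nat.Prime = Nat.primesLE b \ Nat.primesLE a := by
    ext p
    simp only [Finset.mem_filter, Finset.mem_Ioc, Finset.mem_sdiff, Nat.mem_primesLE]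
    grind
  have subset : Nat.primesLE a ⊆ Nat.primesLE b := fun p hp ↦ by
    rw [Nat.mem_primesLE] at hp ⊢
    exact ⟨hp.1.trans hab, hp.2⟩
  rw [eq_sdiff, Finset.cast_card_sdiff subset, Nat.primesLE_card_eq_primeCounting,
    Nat.primesLE_card_eq_primeCounting]

lemma mem_cofactorPrimePairs_iff {x y : ℝ} {a : Σ _ : ℕ, ℕ} (hy : 0 < y) :
    a ∈ cofactorPrimePairs x y ↔
      a.1 ≠ 0 ∧ a.2.Prime ∧ y < (a.2 : ℝ) ∧ (a.1 : ℝ) * a.2 ≤ x := by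
  obtain ⟨m, p⟩ := a
  simp only [cofactorPrimePairs, Finset.mem_sigma, Finset.mem_Icc, Finset.mem_filter,
    Finset.mem_Ioc, Nat.floor_lt hy.le, Nat.one_le_iff_ne_zero]
  constructor
  · rintro ⟨⟨hm, -⟩, ⟨hyp, hpm⟩, hp⟩
    rw [Nat.le_floor_iff' hp.ne_zero, le_div_iff₀' (by positivity)] at hpm
    exact ⟨hm, hp, hyp, hpm⟩
  · rintro ⟨hm, hp, hyp, hmp⟩
    have hpm : (p : ℝ) ≤ x / m := by rwa [le_div_iff₀' (by positivity)]
    exact ⟨⟨hm, (le_floor_div_iff_le_div_natCast hy hm).2 (hyp.le.trans hpm)⟩,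
      ⟨hyp, Nat.le_floor hpm⟩, hp⟩

lemma card_cofactorPrimePairs {x y : ℝ} (hy : 0 < y) :
    ((cofactorPrimePairs x y).card : ℝ) = ∑ m ∈ Finset.Icc 1 ⌊x / y⌋₊,
      ((Nat.primeCounting ⌊x / m⌋₊ : ℝ) - Nat.primeCounting ⌊y⌋₊) := by
  rw [cofactorPrimePairs, Finset.card_sigma, Nat.cast_sum]
  exact Finset.sum_congr rfl fun m hm ↦
    card_filter_prime_Ioc (Nat.floor_mono (le_div_natCast_of_mem_Icc hy hm))

lemma prime_eq_of_mul_eq_mul_of_lt {m m' p p' : ℕ} (hp : p.Prime) (hp' : p'.Prime) (hm : m ≠ 0)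
    (hmp' : m < p') (h : m * p = m' * p') : p = p' := by
  have hdvd : p' ∣ m * p := h ▸ dvd_mul_left p' m'
  rcases hp'.dvd_mul.1 hdvd with hdvd_m | hdvd_p
  · exact absurd (Nat.le_of_dvd (Nat.pos_of_ne_zero hm) hdvd_m) (not_le.2 hmp')
  · exact ((Nat.prime_dvd_prime_iff_eq hp' hp).1 hdvd_p).symm

lemma injOn_mul_cofactorPrimePairs {x y : ℝ} (hy : 0 < y) (hxy : x ≤ y ^ 2) :
    Set.InjOn (fun a : Σ _ : ℕ, ℕ ↦ a.1 * a.2) (cofactorPrimePairs x y) := by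
  rintro ⟨m, p⟩ ha ⟨m', p'⟩ ha' hmul
  obtain ⟨hm, hp, hyp, hmp⟩ := (mem_cofactorPrimePairs_iff hy).1 ha
  obtain ⟨-, hp', hyp', -⟩ := (mem_cofactorPrimePairs_iff hy).1 ha'
  have hm_lt : (m : ℝ) < p' := by
    have hmy : (m : ℝ) ≤ y := by
      refine le_of_mul_le_mul_right ?_ hy
      calc (m : ℝ) * y ≤ m * p := by gcongr
        _ ≤ y * y := by linarith [sq y]
    exact hmy.trans_lt hyp'
  obtain rfl := prime_eq_of_mul_eq_mul_of_lt hp hp' hm (by exact_mod_cast hm_lt) hmul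
  obtain rfl := Nat.eq_of_mul_eq_mul_right hp.pos hmul
  rfl

lemma image_mul_cofactorPrimePairs {x y : ℝ} (hx : 0 ≤ x) (hy : 1 ≤ y) :
    (cofactorPrimePairs x y).image (fun a ↦ a.1 * a.2) =
      (Finset.Icc 1 ⌊x⌋₊).filter fun n ↦ y < (largestPrimeFactor n : ℝ) := by
  have hy_pos : 0 < y := by linarith
  ext n
  simp only [Finset.mem_image, Finset.mem_filter, Finset.mem_Icc, Nat.le_floor_iff hx,
    mem_cofactorPrimePairs_iff hy_pos, Nat.one_le_iff_ne_zero]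
  constructor
  · rintro ⟨⟨m, p⟩, ⟨hm, hp, hyp, hmp⟩, rfl⟩
    have hmul : m * p ≠ 0 := mul_ne_zero hm hp.ne_zero
    exact ⟨⟨hmul, by exact_mod_cast hmp⟩,
      (lt_largestPrimeFactor_iff hmul hy).2 ⟨p, hp, dvd_mul_left p m, hyp⟩⟩
  · rintro ⟨⟨hn, hnx⟩, hlt⟩
    obtain ⟨p, hp, ⟨m, rfl⟩, hyp⟩ := (lt_largestPrimeFactor_iff hn hy).1 hlt
    refine ⟨⟨m, p⟩, ⟨right_ne_zero_of_mul hn, hp, hyp, ?_⟩, mul_comm m p⟩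
    rw [mul_comm]
    exact_mod_cast hnx

lemma nonSmoothCount_eq_sum_primeCounting {x y : ℝ} (hx : 0 ≤ x) (hy : 1 ≤ y)
    (hxy : x ≤ y ^ 2) :
    (nonSmoothCount x y : ℝ) = ∑ m ∈ Finset.Icc 1 ⌊x / y⌋₊,
      ((Nat.primeCounting ⌊x / m⌋₊ : ℝ) - Nat.primeCounting ⌊y⌋₊) := by
  have hy_pos : 0 < y := by linarith
  rw [nonSmoothCount, ← image_mul_cofactorPrimePairs hx hy,
    Finset.card_image_of_injOn (injOn_mul_cofactorPrimePairs hy_pos hxy),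
    card_cofactorPrimePairs hy_pos]

lemma log_div_two_le_log_of_le_sq {x y : ℝ} (hx : 0 < x) (hxy : x ≤ y ^ 2) :
    log x / 2 ≤ log y := by
  have log_le := log_le_log hx hxy
  rw [log_pow, Nat.cast_ofNat] at log_le
  linarith

lemma exists_abs_nonSmoothCount_sub_sum_integral_le (k : ℕ) :
    ∃ C ≥ 0, ∀ x y : ℝ, 4 ≤ y → y ≤ x → x ≤ y ^ 2 →
      |(nonSmoothCount x y : ℝ) - ∑ m ∈ Finset.Icc 1 ⌊x / y⌋₊, ∫ u in y..(x / m), 1 / log u| ≤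
        C * (x / log x ^ k) := by
  obtain ⟨C, hC, hbound⟩ := exists_abs_primeCounting_sub_sub_integral_le (k + 1)
  refine ⟨2 ^ (k + 2) * C, by positivity, fun x y hy hyx hxy ↦ ?_⟩
  have hy_pos : 0 < y := by linarith
  have hx_pos : 0 < x := by linarith
  have one_le_log_x : 1 ≤ log x := one_le_log_of_four_le (hy.trans hyx)
  have half_log_le : log x / 2 ≤ log y := log_div_two_le_log_of_le_sq hx_pos hxy
  have harmonic_nonneg : 0 ≤ ((harmonic ⌊x / y⌋₊ : ℚ) : ℝ) := by
    exact_mod_cast Finset.sum_nonneg fun i _ ↦ by positivity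
  have harmonic_le : ((harmonic ⌊x / y⌋₊ : ℚ) : ℝ) ≤ 2 * log x := by
    have log_div_le : log (x / y) ≤ log x :=
      log_le_log (by positivity) (div_le_self hx_pos.le (by linarith))
    linarith [harmonic_floor_le_one_add_log (x / y) ((one_le_div hy_pos).2 hyx)]
  rw [nonSmoothCount_eq_sum_primeCounting hx_pos.le (by linarith) hxy, ← Finset.sum_sub_distrib]
  calc _ ≤ ∑ m ∈ Finset.Icc 1 ⌊x / y⌋₊, C * (x / m / log y ^ (k + 1)) :=
        (Finset.abs_sum_le_sum_abs _ _).trans (Finset.sum_le_sum fun m hm ↦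
          hbound y (x / m) hy (le_div_natCast_of_mem_Icc hy_pos hm))
    _ = C * x / log y ^ (k + 1) * ((harmonic ⌊x / y⌋₊ : ℚ) : ℝ) := by
      rw [harmonic_eq_sum_Icc]
      push_cast
      rw [Finset.mul_sum]
      exact Finset.sum_congr rfl fun m _ ↦ by ring
    _ ≤ C * x / (log x / 2) ^ (k + 1) * (2 * log x) := by gcongr
    _ = 2 ^ (k + 2) * C * (x / log x ^ k) := by
      rw [div_pow, pow_succ (log x), pow_succ 2 (k + 1)]
      field_simp

lemma exists_abs_nonSmoothCount_sub_le :
    ∃ C ≥ 0, ∀ x y : ℝ, 4 ≤ y → y ≤ x → x ≤ y ^ 2 → y * log x ≤ x →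
      |(nonSmoothCount x y : ℝ) -
        x * (log (log x / log y) - (1 - eulerMascheroniConstant) / log x)| ≤
          C * (x / log x ^ 2) := by
  obtain ⟨C, hC, prime_error⟩ := exists_abs_nonSmoothCount_sub_sum_integral_le 2
  refine ⟨C + 4, by positivity, fun x y hy hyx hxy hlog ↦ ?_⟩
  have hx_pos : 0 < x := by linarith
  have one_le_log_x : 1 ≤ log x := one_le_log_of_four_le (hy.trans hyx)
  have half_log_le : log x / 2 ≤ log y := log_div_two_le_log_of_le_sq hx_pos hxy
  have floor_error : x / (log x * log y) ≤ 2 * (x / log x ^ 2) :=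
    calc x / (log x * log y) ≤ x / (log x * (log x / 2)) := by gcongr
      _ = 2 * (x / log x ^ 2) := by field_simp
  have harmonic_error : 2 * y / log x ≤ 2 * (x / log x ^ 2) :=
    calc 2 * y / log x = 2 * (y * log x / log x ^ 2) := by field_simp
      _ ≤ 2 * (x / log x ^ 2) := by gcongr
  have integral_error := abs_sum_integral_one_div_log_sub_le (by linarith : 1 < y) hyx
  refine (abs_sub_le _ (∑ m ∈ Finset.Icc 1 ⌊x / y⌋₊, ∫ u in y..(x / m), 1 / log u) _).trans ?_
  linarith [prime_error x y hy hyx hxy]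

/-! ### From counting to the median -/

lemma apply_getElem_iff_length_sub_le_countP {α : Type*} [Preorder α] {l : List α}
    (hl : l.SortedLE) {p : α → Bool} (hp : ∀ ⦃a b⦄, a ≤ b → p a → p b) {k : ℕ}
    (hk : k < l.length) : p l[k] ↔ l.length - k ≤ l.countP p := by
  have countP_split (j : ℕ) : l.countP p = (l.take j).countP p + (l.drop j).countP p := by
    rw [← List.countP_append, List.take_append_drop]
  constructor
  · intro hpk
    have all_drop : (l.drop k).countP p = (l.drop k).length := by
      rw [List.countP_eq_length]
      intro a ha
      obtain ⟨i, hi, rfl⟩ := List.mem_drop_iff_getElem.1 ha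
      exact hp (hl.getElem_le_getElem_of_le (Nat.le_add_right k i)) hpk
    rw [countP_split k, all_drop, List.length_drop]
    exact Nat.le_add_left _ _
  · intro hcount
    by_contra hpk
    have none_take : (l.take (k + 1)).countP p = 0 := by
      rw [List.countP_eq_zero]
      intro a ha hpa
      obtain ⟨i, hi, rfl⟩ := List.mem_take_iff_getElem.1 ha
      exact hpk (hp (hl.getElem_le_getElem_of_le (by lia)) hpa)
    have le_length : (l.drop (k + 1)).countP p ≤ (l.drop (k + 1)).length := List.countP_le_length
    rw [countP_split (k + 1), none_take] at hcount
    rw [List.length_drop] at le_length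
    lia

lemma medianLPF_le_iff {x y : ℝ} (hx : 1 ≤ x) :
    (medianLPF x : ℝ) ≤ y ↔ nonSmoothCount x y ≤ ⌊x⌋₊ / 2 := by
  have hN : 1 ≤ ⌊x⌋₊ := Nat.le_floor (by simpa using hx)
  set s := (Finset.Icc 1 ⌊x⌋₊).val.map largestPrimeFactor with hs
  have length_eq : (s.sort (· ≤ ·)).length = ⌊x⌋₊ := by simp [hs]
  have countP_eq : (s.sort (· ≤ ·)).countP (fun n : ℕ ↦ decide (y < n)) = nonSmoothCount x y := by
    rw [← Multiset.coe_countP, Multiset.sort_eq, hs, Multiset.countP_map, nonSmoothCount]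
    rfl
  have hmid : (⌊x⌋₊ + 1) / 2 - 1 < (s.sort (· ≤ ·)).length := by lia
  have lt_iff := apply_getElem_iff_length_sub_le_countP (s.pairwise_sort _).sortedLE
    (p := fun n : ℕ ↦ decide (y < n))
    (fun a b hab hya ↦ by
      rw [decide_eq_true_eq] at hya ⊢
      exact hya.trans_le (by exact_mod_cast hab)) hmid
  rw [decide_eq_true_eq, countP_eq, length_eq] at lt_iff
  rw [medianLPF, List.getD_eq_getElem _ _ hmid, ← not_lt, lt_iff]
  lia

lemma medianLPF_le_of_nonSmoothCount_le {x y : ℝ} (hx : 1 ≤ x)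
    (h : (nonSmoothCount x y : ℝ) ≤ x / 2 - 1) : (medianLPF x : ℝ) ≤ y := by
  have cast_lt : ((2 * nonSmoothCount x y : ℕ) : ℝ) < ⌊x⌋₊ := by
    push_cast
    linarith [Nat.lt_floor_add_one x]
  rw [medianLPF_le_iff hx]
  have := Nat.cast_lt.1 cast_lt
  lia

lemma lt_medianLPF_of_lt_nonSmoothCount {x y : ℝ} (hx : 1 ≤ x)
    (h : x / 2 < nonSmoothCount x y) : y < medianLPF x := by
  have cast_lt : (⌊x⌋₊ : ℝ) < ((2 * nonSmoothCount x y : ℕ) : ℝ) := by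
    push_cast
    linarith [Nat.floor_le (by linarith : 0 ≤ x)]
  rw [← not_le, medianLPF_le_iff hx]
  have := Nat.cast_lt.1 cast_lt
  lia

/-! ### The median asymptotic -/

lemma abs_log_one_add_sub_le {t : ℝ} (ht : |t| ≤ 1 / 2) : |log (1 + t) - t| ≤ 2 * t ^ 2 := by
  have taylor := abs_log_sub_add_sum_range_le (x := -t) (by rw [abs_neg]; linarith) 1
  simp only [Finset.sum_range_one, zero_add, pow_one, Nat.cast_zero, div_one, sub_neg_eq_add,
    abs_neg, Nat.reduceAdd, sq_abs] at taylor
  calc |log (1 + t) - t| = |-t + log (1 + t)| := by ring_nf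
    _ ≤ t ^ 2 / (1 - |t|) := taylor
    _ ≤ t ^ 2 / (1 / 2) := by gcongr; linarith
    _ = 2 * t ^ 2 := by ring

lemma le_sqrt_exp_one : 8 / 5 ≤ √(exp 1) :=
  le_sqrt_of_sq_le (by linarith [exp_one_gt_d9])

lemma sqrt_exp_one_le : √(exp 1) ≤ 5 / 3 :=
  sqrt_le_iff.2 ⟨by norm_num, by linarith [exp_one_lt_d9]⟩

lemma log_sqrt_exp_one : log √(exp 1) = 1 / 2 := by
  rw [log_sqrt (exp_pos 1).le, log_exp]

section

variable {L d : ℝ}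

lemma le_add_div_sqrt_exp_one (hL : 2 ≤ L) (hd : |d| ≤ 2) :
    3 / 5 * (L - 2) ≤ (L + d) / √(exp 1) := by
  rw [le_div_iff₀ (by positivity)]
  nlinarith [sqrt_exp_one_le, abs_le.1 hd]

lemma add_div_sqrt_exp_one_le (hL : 2 ≤ L) (hd : |d| ≤ 2) :
    (L + d) / √(exp 1) ≤ 5 / 8 * (L + 2) := by
  rw [div_le_iff₀ (by positivity)]
  nlinarith [le_sqrt_exp_one, abs_le.1 hd]

lemma four_le_exp_add_div_sqrt_exp_one (hL : 12 ≤ L) (hd : |d| ≤ 2) :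
    4 ≤ exp ((L + d) / √(exp 1)) := by
  linarith [le_add_div_sqrt_exp_one (by linarith : 2 ≤ L) hd, add_one_le_exp ((L + d) / √(exp 1))]

lemma exp_add_div_sqrt_exp_one_le (hL : 12 ≤ L) (hd : |d| ≤ 2) :
    exp ((L + d) / √(exp 1)) ≤ exp L :=
  exp_le_exp.2 (by linarith [add_div_sqrt_exp_one_le (by linarith : 2 ≤ L) hd])

lemma exp_le_exp_add_div_sqrt_exp_one_sq (hL : 12 ≤ L) (hd : |d| ≤ 2) :
    exp L ≤ exp ((L + d) / √(exp 1)) ^ 2 := by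
  rw [← exp_nat_mul, exp_le_exp, Nat.cast_ofNat]
  linarith [le_add_div_sqrt_exp_one (by linarith : 2 ≤ L) hd]

lemma exp_add_div_sqrt_exp_one_mul_le (hL : 12 ≤ L) (hd : |d| ≤ 2) :
    exp ((L + d) / √(exp 1)) * L ≤ exp L := by
  have log_le : log L ≤ L / 8 + 3 / 2 := by
    have log_div_le := log_le_sub_one_of_pos (by linarith : 0 < L / 8)
    rw [log_div (by linarith) (by norm_num), show (8 : ℝ) = 2 ^ 3 by norm_num, log_pow,
      Nat.cast_ofNat] at log_div_le
    linarith [log_two_lt_d9]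
  calc exp ((L + d) / √(exp 1)) * L = exp ((L + d) / √(exp 1) + log L) := by
        rw [exp_add, exp_log (by linarith)]
    _ ≤ exp L := exp_le_exp.2 (by linarith [add_div_sqrt_exp_one_le (by linarith : 2 ≤ L) hd])

lemma log_div_add_div_sqrt_exp_one (hL : 0 < L) (hLd : 0 < L + d) :
    log (L / ((L + d) / √(exp 1))) = 1 / 2 - log (1 + d / L) := by
  have div_eq : L / ((L + d) / √(exp 1)) = √(exp 1) / ((L + d) / L) := by field_simp
  rw [div_eq, log_div (by positivity) (by positivity), log_sqrt_exp_one, add_div,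
    div_self hL.ne']

end

lemma exists_abs_nonSmoothCount_exp_sub_le :
    ∃ C ≥ 0, ∀ L d : ℝ, 12 ≤ L → |d| ≤ 2 →
      |(nonSmoothCount (exp L) (exp ((L + d) / √(exp 1))) : ℝ) -
        exp L * (1 / 2 - (d + 1 - eulerMascheroniConstant) / L)| ≤ C * (exp L / L ^ 2) := by
  obtain ⟨C, hC, hbound⟩ := exists_abs_nonSmoothCount_sub_le
  refine ⟨C + 8, by positivity, fun L d hL hd ↦ ?_⟩
  have hL_pos : 0 < L := by linarith
  have count_error := hbound (exp L) (exp ((L + d) / √(exp 1)))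
    (four_le_exp_add_div_sqrt_exp_one hL hd) (exp_add_div_sqrt_exp_one_le hL hd)
    (exp_le_exp_add_div_sqrt_exp_one_sq hL hd)
    (by rw [log_exp]; exact exp_add_div_sqrt_exp_one_mul_le hL hd)
  rw [log_exp, log_exp, log_div_add_div_sqrt_exp_one hL_pos (by linarith [abs_le.1 hd])]
    at count_error
  have log_error : |log (1 + d / L) - d / L| ≤ 8 / L ^ 2 := by
    have small : |d / L| ≤ 1 / 2 := by
      rw [abs_div, abs_of_pos hL_pos, div_le_iff₀ hL_pos]
      linarith
    calc |log (1 + d / L) - d / L| ≤ 2 * (d / L) ^ 2 := abs_log_one_add_sub_le small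
      _ = 2 * |d| ^ 2 / L ^ 2 := by rw [sq_abs]; ring
      _ ≤ 2 * 2 ^ 2 / L ^ 2 := by gcongr
      _ = 8 / L ^ 2 := by norm_num
  set Φ := (nonSmoothCount (exp L) (exp ((L + d) / √(exp 1))) : ℝ)
  calc |Φ - exp L * (1 / 2 - (d + 1 - eulerMascheroniConstant) / L)|
      = |(Φ - exp L * (1 / 2 - log (1 + d / L) - (1 - eulerMascheroniConstant) / L)) -
          exp L * (log (1 + d / L) - d / L)| := by ring_nf
    _ ≤ C * (exp L / L ^ 2) + exp L * (8 / L ^ 2) := by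
      refine (abs_sub _ _).trans (add_le_add count_error ?_)
      rw [abs_mul, abs_exp]
      gcongr
    _ = (C + 8) * (exp L / L ^ 2) := by ring

lemma exists_medianLPF_exp_mem_Ioc :
    ∃ K > 0, ∀ L : ℝ, 12 ≤ L → K ≤ L → (medianLPF (exp L) : ℝ) ∈
      Set.Ioc (exp ((L + (eulerMascheroniConstant - 1 - K / L)) / √(exp 1)))
        (exp ((L + (eulerMascheroniConstant - 1 + K / L)) / √(exp 1))) := by
  obtain ⟨C, hC, hbound⟩ := exists_abs_nonSmoothCount_exp_sub_le
  refine ⟨C + 2, by positivity, fun L hL hKL ↦ ?_⟩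
  have hL_pos : 0 < L := by linarith
  have one_le_exp : 1 ≤ exp L := one_le_exp hL_pos.le
  have half_le : 1 / 2 ≤ exp L / L ^ 2 := by
    have sq_le := log_pow_le_factorial_mul one_le_exp 2
    rw [log_exp, Nat.factorial_two, Nat.cast_ofNat] at sq_le
    rw [div_le_div_iff₀ two_pos (by positivity)]
    linarith
  have shift_nonneg : 0 ≤ (C + 2) / L := by positivity
  have shift_le : (C + 2) / L ≤ 1 := (div_le_one hL_pos).2 hKL
  have main_term (κ : ℝ) : exp L * (1 / 2 - (eulerMascheroniConstant - 1 + κ + 1 -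
      eulerMascheroniConstant) / L) = exp L / 2 - exp L * κ / L := by ring
  have shift_gain : exp L * ((C + 2) / L) / L = (C + 2) * (exp L / L ^ 2) := by field_simp
  have := one_half_lt_eulerMascheroniConstant
  have := eulerMascheroniConstant_lt_two_thirds
  have below := hbound L (eulerMascheroniConstant - 1 + -((C + 2) / L)) hL
    (abs_le.2 ⟨by linarith, by linarith⟩)
  have above := hbound L (eulerMascheroniConstant - 1 + (C + 2) / L) hL
    (abs_le.2 ⟨by linarith, by linarith⟩)
  rw [main_term, mul_neg, neg_div, shift_gain, ← sub_eq_add_neg, abs_le] at below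
  rw [main_term, shift_gain, abs_le] at above
  exact ⟨lt_medianLPF_of_lt_nonSmoothCount one_le_exp (by linarith),
    medianLPF_le_of_nonSmoothCount_le one_le_exp (by linarith)⟩

lemma abs_div_exp_sub_one_le_of_mem_Ioc {a δ m : ℝ} (hδ : 0 ≤ δ) (hδ_one : δ ≤ 1)
    (hm : m ∈ Set.Ioc (exp (a - δ)) (exp (a + δ))) : |m / exp a - 1| ≤ 2 * δ := by
  have lower := abs_exp_sub_one_le (x := -δ) (by rwa [abs_neg, abs_of_nonneg hδ])
  have upper := abs_exp_sub_one_le (x := δ) (by rwa [abs_of_nonneg hδ])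
  rw [abs_neg, abs_of_nonneg hδ, abs_le] at lower
  rw [abs_of_nonneg hδ, abs_le] at upper
  have lt_div : exp (-δ) < m / exp a := by
    rw [lt_div_iff₀ (exp_pos a), ← exp_add, neg_add_eq_sub]
    exact hm.1
  have div_le : m / exp a ≤ exp δ := by
    rw [div_le_iff₀ (exp_pos a), ← exp_add, add_comm]
    exact hm.2
  rw [abs_le]
  constructor <;> linarith

theorem median_largest_prime_factor_asymptotic :
    ∃ C > (0:ℝ), ∀ᶠ x : ℝ in atTop,
      |(medianLPF x : ℝ) /
          (Real.exp ((Real.eulerMascheroniConstant - 1) / Real.sqrt (Real.exp 1)) *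
            x ^ (1 / Real.sqrt (Real.exp 1))) - 1| ≤ C / Real.log x := by
  obtain ⟨K, hK, median_mem⟩ := exists_medianLPF_exp_mem_Ioc
  refine ⟨2 * K, by positivity, ?_⟩
  filter_upwards [eventually_gt_atTop 0, tendsto_log_atTop.eventually_ge_atTop 12,
    tendsto_log_atTop.eventually_ge_atTop K] with x hx hL hKL
  have hL_pos : 0 < log x := by linarith
  have scale_eq : exp ((eulerMascheroniConstant - 1) / √(exp 1)) * x ^ (1 / √(exp 1)) =
      exp ((log x + (eulerMascheroniConstant - 1)) / √(exp 1)) := by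
    rw [rpow_def_of_pos hx, ← exp_add]
    ring_nf
  have shift_le : K / log x / √(exp 1) ≤ K / log x :=
    div_le_self (by positivity) (by linarith [le_sqrt_exp_one])
  have mem := median_mem (log x) hL hKL
  rw [exp_log hx, ← add_sub_assoc, ← add_assoc, sub_div, add_div _ (K / log x)] at mem
  rw [scale_eq]
  calc _ ≤ 2 * (K / log x / √(exp 1)) := abs_div_exp_sub_one_le_of_mem_Ioc (by positivity)
        (shift_le.trans ((div_le_one hL_pos).2 hKL)) mem
    _ ≤ 2 * (K / log x) := by gcongr
    _ = 2 * K / log x := by ring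
end

section
/- For all sufficiently large x, M(x) < x^{1/√e}. -/
open Filter Real MeasureTheory
open scoped Classical

/-!
Let `α = 1 / √e`, so that `∫ dt / (t log t)` over `[x ^ α, x]` equals `1 / 2`. An integer `n ≤ x`
with `P(n) ≥ x ^ α` is a multiple of some prime `p ∈ [x ^ α, x]`, so there are at most
`∑ p, ⌊x / p⌋` of them, and this sum is `x / 2` to first order. The theorem holds because the
secondary term of order `x / log x` is negative. To see its sign one needs Mertens' theorem with its
constant, `∑ n ≤ x, Λ(n) / n = log x - γ + o(1)`; partial summation together with
`log N! = ∑ n ≤ N, Λ(n) ⌊N / n⌋` then gives the secondary term `-(1 - γ) x / log x`.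

The asymptotic formula for `∑ Λ(n) / n` is as deep as the prime number theorem. The Laplace
transform of its error term is read off from `-ζ'/ζ`, which has no pole on `Re s = 1` other than
`s = 1`, and a Tauberian theorem of Ingham–Karamata type shows that the error tends to zero:
smoothing by the Fejér kernel, whose Fourier transform has compact support, reduces the claim to
the Riemann–Lebesgue lemma.
-/

namespace MedianLPF

open scoped Topology

section FejerKernel

/-- The triangular window on `[-1, 1]`, the compactly supported Fourier transform of
`fejerKernel`. -/
noncomputable def triangle (τ : ℝ) : ℝ := max 0 (1 - |τ|)

/-- The Fejér kernel `2 (1 - cos x) / x ^ 2 = (sin (x / 2) / (x / 2)) ^ 2`, a nonnegative integrable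
smoothing kernel. Division by zero gives it the value `0` at `x = 0`, which no integral sees. -/
noncomputable def fejerKernel (x : ℝ) : ℝ := 2 * (1 - cos x) / x ^ 2

lemma continuous_triangle : Continuous triangle := by
  unfold triangle
  fun_prop

lemma triangle_nonneg (τ : ℝ) : 0 ≤ triangle τ := le_max_left _ _

lemma triangle_neg (τ : ℝ) : triangle (-τ) = triangle τ := by simp only [triangle, abs_neg]

lemma triangle_of_mem_Icc {τ : ℝ} (hτ : τ ∈ Set.Icc 0 1) : triangle τ = 1 - τ := by
  rw [triangle, abs_of_nonneg hτ.1, max_eq_right (sub_nonneg.2 hτ.2)]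

lemma triangle_eq_zero {τ : ℝ} (hτ : τ ∉ Set.Ioc (-1) 1) : triangle τ = 0 := by
  refine max_eq_left (sub_nonpos.2 ?_)
  by_contra! h
  exact hτ ⟨(abs_lt.1 h).1, (abs_lt.1 h).2.le⟩

lemma integrable_triangle : Integrable triangle :=
  continuous_triangle.integrable_of_hasCompactSupport <|
    .intro isCompact_Icc fun _ hτ => triangle_eq_zero fun h => hτ (Set.Ioc_subset_Icc_self h)

lemma integral_triangle_mul {F : ℝ → ℂ} (hF : Continuous F) :
    ∫ τ, (triangle τ : ℂ) * F τ = ∫ τ in (0 : ℝ)..1, (1 - τ : ℂ) * (F τ + F (-τ)) := by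
  have hcont : Continuous fun τ => (triangle τ : ℂ) * F τ :=
    (Complex.continuous_ofReal.comp continuous_triangle).mul hF
  have hcont_neg : Continuous fun τ => (triangle τ : ℂ) * F (-τ) :=
    (Complex.continuous_ofReal.comp continuous_triangle).mul (hF.comp continuous_neg)
  have hleft : ∫ τ in (-1 : ℝ)..0, (triangle τ : ℂ) * F τ =
      ∫ τ in (0 : ℝ)..1, (triangle τ : ℂ) * F (-τ) := by
    simpa only [triangle_neg, neg_zero] using (intervalIntegral.integral_comp_neg (a := 0) (b := 1)
      fun τ => (triangle τ : ℂ) * F τ).symm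
  calc ∫ τ, (triangle τ : ℂ) * F τ
      = ∫ τ in (-1 : ℝ)..1, (triangle τ : ℂ) * F τ := by
        rw [intervalIntegral.integral_of_le (by norm_num),
          setIntegral_eq_integral_of_forall_compl_eq_zero]
        intro τ hτ
        rw [triangle_eq_zero hτ, Complex.ofReal_zero, zero_mul]
    _ = ∫ τ in (0 : ℝ)..1, (triangle τ : ℂ) * F (-τ) + (triangle τ : ℂ) * F τ := by
        rw [← intervalIntegral.integral_add_adjacent_intervals (b := 0)
          (hcont.intervalIntegrable _ _) (hcont.intervalIntegrable _ _), hleft,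
          intervalIntegral.integral_add (hcont_neg.intervalIntegrable _ _)
            (hcont.intervalIntegrable _ _)]
    _ = ∫ τ in (0 : ℝ)..1, (1 - τ : ℂ) * (F τ + F (-τ)) := by
        refine intervalIntegral.integral_congr fun τ hτ => ?_
        rw [Set.uIcc_of_le zero_le_one] at hτ
        simp only [triangle_of_mem_Icc hτ]
        push_cast
        ring

lemma integral_one_sub_mul_cexp {c : ℂ} (hc : c ≠ 0) :
    ∫ τ in (0 : ℝ)..1, (1 - τ : ℂ) * Complex.exp (c * τ) = (Complex.exp c - 1 - c) / c ^ 2 := by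
  have hderiv (τ : ℝ) : HasDerivAt
      (fun τ : ℝ => ((1 - τ : ℂ) / c + 1 / c ^ 2) * Complex.exp (c * τ))
      ((1 - τ : ℂ) * Complex.exp (c * τ)) τ := by
    have hid : HasDerivAt (fun τ : ℝ => (τ : ℂ)) 1 τ := Complex.ofRealCLM.hasDerivAt
    refine ((((hid.const_sub 1).div_const c).add_const (1 / c ^ 2)).mul
      (hid.const_mul c).cexp).congr_deriv ?_
    field_simp
    ring
  rw [intervalIntegral.integral_eq_sub_of_hasDerivAt (fun τ _ => hderiv τ)
    (Continuous.intervalIntegrable (by fun_prop) _ _)]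
  simp only [Complex.ofReal_one, Complex.ofReal_zero, mul_one, mul_zero, Complex.exp_zero]
  field_simp
  ring

lemma integral_triangle_mul_cexp {x : ℝ} (hx : x ≠ 0) :
    ∫ τ : ℝ, (triangle τ : ℂ) * Complex.exp (Complex.I * x * τ) = fejerKernel x := by
  have hc : Complex.I * x ≠ 0 := mul_ne_zero Complex.I_ne_zero (Complex.ofReal_ne_zero.2 hx)
  have hint (c : ℂ) : IntervalIntegrable (fun τ : ℝ => (1 - τ : ℂ) * Complex.exp (c * τ))
      volume 0 1 := Continuous.intervalIntegrable (by fun_prop) _ _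
  have hneg (τ : ℝ) : Complex.exp (Complex.I * x * (-τ : ℝ)) =
      Complex.exp (-(Complex.I * x) * τ) := by
    push_cast
    ring_nf
  rw [integral_triangle_mul (by fun_prop)]
  simp only [hneg, mul_add]
  rw [intervalIntegral.integral_add (hint _) (hint _), integral_one_sub_mul_cexp hc,
    integral_one_sub_mul_cexp (neg_ne_zero.2 hc), fejerKernel]
  push_cast
  rw [Complex.cos, mul_comm (x : ℂ), neg_mul, mul_comm (x : ℂ), neg_sq, mul_pow, Complex.I_sq]
  field_simp
  ring

lemma fejerKernel_nonneg (x : ℝ) : 0 ≤ fejerKernel x :=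
  div_nonneg (mul_nonneg zero_le_two (sub_nonneg.2 (cos_le_one x))) (sq_nonneg x)

lemma fejerKernel_pos {x : ℝ} (hx : x ∈ Set.Ioo 0 1) : 0 < fejerKernel x := by
  have hcos : cos x < 1 := by
    simpa only [cos_zero] using
      cos_lt_cos_of_nonneg_of_le_pi le_rfl (by linarith [hx.2, pi_gt_three]) hx.1
  exact div_pos (by linarith) (pow_pos hx.1 2)

lemma fejerKernel_le (x : ℝ) : fejerKernel x ≤ 5 * (1 + x ^ 2)⁻¹ := by
  rw [← div_eq_mul_inv, le_div_iff₀ (by positivity), fejerKernel]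
  rcases eq_or_ne x 0 with rfl | hx
  · norm_num
  · rw [div_mul_eq_mul_div, div_le_iff₀ (by positivity)]
    nlinarith [one_sub_sq_div_two_le_cos (x := x), neg_one_le_cos x, sq_nonneg x]

lemma measurable_fejerKernel : Measurable fejerKernel := by
  unfold fejerKernel
  fun_prop

lemma integrable_fejerKernel : Integrable fejerKernel := by
  refine (integrable_inv_one_add_sq.const_mul 5).mono' measurable_fejerKernel.aestronglyMeasurable
    (.of_forall fun x => ?_)
  rw [norm_of_nonneg (fejerKernel_nonneg x)]
  exact fejerKernel_le x

lemma integral_fejerKernel_pos : 0 < ∫ x, fejerKernel x := by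
  rw [integral_pos_iff_support_of_nonneg fejerKernel_nonneg integrable_fejerKernel]
  refine lt_of_lt_of_le ?_ (measure_mono fun x hx => (fejerKernel_pos hx).ne' :
    volume (Set.Ioo (0 : ℝ) 1) ≤ _)
  simp

end FejerKernel

section Tauberian

variable {f : ℝ → ℝ} {C : ℝ} {G : ℂ → ℂ}

lemma integrableOn_mul_cexp_neg_mul (hf : Measurable f) (hC : ∀ v, 0 < v → |f v| ≤ C)
    {s : ℂ} (hs : 0 < s.re) :
    IntegrableOn (fun v : ℝ => (f v : ℂ) * Complex.exp (-s * v)) (Set.Ioi 0) := by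
  have hexp : IntegrableOn (fun v : ℝ => Complex.exp (-s * v)) (Set.Ioi 0) :=
    integrableOn_exp_mul_complex_Ioi (by simpa using hs) 0
  refine hexp.bdd_mul (c := C) (Complex.measurable_ofReal.comp hf).aestronglyMeasurable ?_
  filter_upwards [ae_restrict_mem measurableSet_Ioi] with v hv
  simpa using hC v hv

lemma integral_laplace_mul_fejerKernel (hf : Measurable f) (hC : ∀ v, 0 < v → |f v| ≤ C)
    (hfG : ∀ s : ℂ, 0 < s.re → ∫ v in Set.Ioi (0 : ℝ), (f v : ℂ) * Complex.exp (-s * v) = G s)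
    {ε : ℝ} (hε : 0 < ε) (w : ℝ) :
    ∫ v in Set.Ioi (0 : ℝ), (f v : ℂ) * Complex.exp (-ε * v) * fejerKernel (v - w) =
      ∫ τ : ℝ, (triangle τ : ℂ) * Complex.exp (-Complex.I * w * τ) * G (ε - Complex.I * τ) := by
  let F (v τ : ℝ) : ℂ := (f v : ℂ) * Complex.exp (-ε * v) *
    ((triangle τ : ℂ) * Complex.exp (Complex.I * (v - w : ℝ) * τ))
  have hF : Integrable (Function.uncurry F) ((volume.restrict (Set.Ioi 0)).prod volume) := by
    have hdamped := integrableOn_mul_cexp_neg_mul hf hC (s := ε) (by simpa using hε)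
    refine ((hdamped.mul_prod integrable_triangle.ofReal).bdd_mul (c := 1)
      (f := fun z : ℝ × ℝ => Complex.exp (Complex.I * (z.1 - w : ℝ) * z.2))
      (Continuous.aestronglyMeasurable (by fun_prop)) (.of_forall fun z => ?_)).congr
      (.of_forall fun z => ?_)
    · simp [Complex.norm_exp]
    · simp only [Function.uncurry, F, RCLike.ofReal_eq_complex_ofReal]
      ring
  calc ∫ v in Set.Ioi (0 : ℝ), (f v : ℂ) * Complex.exp (-ε * v) * fejerKernel (v - w)
      = ∫ v in Set.Ioi (0 : ℝ), ∫ τ, F v τ := by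
        refine setIntegral_congr_ae measurableSet_Ioi ?_
        filter_upwards [volume.ae_ne w] with v hv _
        rw [integral_const_mul, integral_triangle_mul_cexp (sub_ne_zero.2 hv)]
    _ = ∫ τ, ∫ v in Set.Ioi (0 : ℝ), F v τ := integral_integral_swap hF
    _ = _ := by
        congr with τ
        rw [← hfG (ε - Complex.I * τ) (by simpa using hε), ← integral_const_mul]
        congr with v
        have hexp : Complex.exp (-ε * v) * Complex.exp (Complex.I * (v - w : ℝ) * τ) =
            Complex.exp (-Complex.I * w * τ) * Complex.exp (-(ε - Complex.I * τ) * v) := by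
          rw [← Complex.exp_add, ← Complex.exp_add]
          push_cast
          ring_nf
        linear_combination ((f v : ℂ) * (triangle τ : ℂ)) * hexp

lemma tendsto_integral_exp_neg_mul {μ : Measure ℝ} {h : ℝ → ℂ} (hh : Integrable h μ)
    (hμ : ∀ᵐ v ∂μ, 0 < v) :
    Tendsto (fun ε : ℝ => ∫ v, Complex.exp (-ε * v) * h v ∂μ) (𝓝[>] 0) (𝓝 (∫ v, h v ∂μ)) := by
  refine tendsto_integral_filter_of_dominated_convergence (fun v => ‖h v‖) (.of_forall fun ε => ?_)
    ?_ hh.norm (.of_forall fun v => ?_)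
  · exact (Continuous.aestronglyMeasurable (by fun_prop)).mul hh.1
  · filter_upwards [self_mem_nhdsWithin] with ε (hε : 0 < ε)
    filter_upwards [hμ] with v hv
    rw [norm_mul, Complex.norm_exp]
    refine mul_le_of_le_one_left (norm_nonneg _) (exp_le_one_iff.2 ?_)
    simpa using (mul_pos hε hv).le
  · have hcont : Continuous fun ε : ℝ => Complex.exp (-ε * v) * h v := by fun_prop
    simpa using (hcont.tendsto 0).mono_left nhdsWithin_le_nhds

lemma tendsto_integral_triangle_mul (hG : ContinuousOn G {s | 0 ≤ s.re}) {e : ℝ → ℂ}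
    (he : Continuous e) :
    Tendsto (fun ε : ℝ => ∫ τ : ℝ, (triangle τ : ℂ) * e τ * G (ε - Complex.I * τ)) (𝓝[>] 0)
      (𝓝 (∫ τ : ℝ, (triangle τ : ℂ) * e τ * G (-Complex.I * τ))) := by
  have hcont : ContinuousOn (fun p : ℝ × ℝ => e p.2 * G (p.1 - Complex.I * p.2))
      (Set.Ici 0 ×ˢ Set.univ) :=
    ContinuousOn.mul (by fun_prop) (hG.comp (by fun_prop) fun p hp => by simpa using hp.1)
  obtain ⟨B, hB⟩ := (isCompact_Icc.prod isCompact_Icc).exists_bound_of_continuousOn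
    (hcont.mono (Set.prod_mono (Set.Icc_subset_Ici_self (a := 1))
      (Set.subset_univ (Set.Icc (-1) 1))))
  simp only [mul_assoc]
  refine tendsto_integral_filter_of_dominated_convergence (fun τ => triangle τ * B) ?_ ?_
    (integrable_triangle.mul_const B) (.of_forall fun τ => ?_)
  · filter_upwards [self_mem_nhdsWithin] with ε (hε : 0 < ε)
    refine ((Complex.continuous_ofReal.comp continuous_triangle).mul ?_).aestronglyMeasurable
    exact hcont.comp_continuous (f := fun τ => (ε, τ)) (by fun_prop) fun τ => ⟨hε.le, trivial⟩
  · filter_upwards [Ioo_mem_nhdsGT one_pos] with ε hε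
    refine .of_forall fun τ => ?_
    by_cases hτ : τ ∈ Set.Ioc (-1) 1
    · rw [norm_mul, Complex.norm_real, norm_of_nonneg (triangle_nonneg τ)]
      exact mul_le_mul_of_nonneg_left
        (hB (ε, τ) ⟨Set.Ioo_subset_Icc_self hε, Set.Ioc_subset_Icc_self hτ⟩) (triangle_nonneg τ)
    · simp [triangle_eq_zero hτ]
  · have hcurve : ContinuousOn (fun ε : ℝ => e τ * G (ε - Complex.I * τ)) (Set.Ici 0) :=
      hcont.comp (f := fun ε : ℝ => (ε, τ)) (by fun_prop) fun ε hε => ⟨hε, trivial⟩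
    simpa using ((hcurve 0 Set.self_mem_Ici).mono_left
      (nhdsWithin_mono _ Set.Ioi_subset_Ici_self)).const_mul (triangle τ : ℂ)

lemma integrableOn_mul_fejerKernel_sub (hf : Measurable f) (hC : ∀ v, 0 < v → |f v| ≤ C) (w : ℝ) :
    IntegrableOn (fun v => f v * fejerKernel (v - w)) (Set.Ioi 0) := by
  refine (integrable_fejerKernel.comp_sub_right w).integrableOn.bdd_mul (c := C)
    hf.aestronglyMeasurable ?_
  filter_upwards [ae_restrict_mem measurableSet_Ioi] with v hv
  simpa using hC v hv

lemma integral_mul_fejerKernel_sub (hf : Measurable f) (hC : ∀ v, 0 < v → |f v| ≤ C)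
    (hG : ContinuousOn G {s | 0 ≤ s.re})
    (hfG : ∀ s : ℂ, 0 < s.re → ∫ v in Set.Ioi (0 : ℝ), (f v : ℂ) * Complex.exp (-s * v) = G s)
    (w : ℝ) :
    ((∫ v in Set.Ioi (0 : ℝ), f v * fejerKernel (v - w) : ℝ) : ℂ) =
      ∫ τ : ℝ, (triangle τ : ℂ) * Complex.exp (-Complex.I * w * τ) * G (-Complex.I * τ) := by
  have hint : Integrable (fun v => ((f v * fejerKernel (v - w) : ℝ) : ℂ))
      (volume.restrict (Set.Ioi 0)) :=
    (integrableOn_mul_fejerKernel_sub hf hC w).ofReal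
  rw [← integral_complex_ofReal]
  refine tendsto_nhds_unique
    (tendsto_integral_exp_neg_mul hint (ae_restrict_mem measurableSet_Ioi))
    ((tendsto_integral_triangle_mul hG (by fun_prop)).congr' ?_)
  filter_upwards [self_mem_nhdsWithin] with ε hε
  rw [← integral_laplace_mul_fejerKernel hf hC hfG hε]
  congr with v
  push_cast
  ring

lemma tendsto_setIntegral_mul_fejerKernel_sub (hf : Measurable f) (hC : ∀ v, 0 < v → |f v| ≤ C)
    (hG : ContinuousOn G {s | 0 ≤ s.re})
    (hfG : ∀ s : ℂ, 0 < s.re → ∫ v in Set.Ioi (0 : ℝ), (f v : ℂ) * Complex.exp (-s * v) = G s) :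
    Tendsto (fun w : ℝ => ∫ v in Set.Ioi (0 : ℝ), f v * fejerKernel (v - w)) atTop (𝓝 0) := by
  have hscale : Tendsto (fun w : ℝ => w / (2 * π)) atTop (cocompact ℝ) :=
    (tendsto_id.atTop_div_const two_pi_pos).mono_right atTop_le_cocompact
  have hRL := (Real.tendsto_integral_exp_smul_cocompact
    fun τ : ℝ => (triangle τ : ℂ) * G (-Complex.I * τ)).comp hscale
  refine tendsto_ofReal_iff.1 (hRL.congr fun w => ?_)
  rw [integral_mul_fejerKernel_sub hf hC hG hfG, Function.comp_apply]
  congr with τ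
  have harg : ((2 * π * -(τ * (w / (2 * π))) : ℝ) : ℂ) * Complex.I = -Complex.I * w * τ := by
    rw [show 2 * π * -(τ * (w / (2 * π))) = -(τ * w) by field_simp]
    push_cast
    ring
  rw [Circle.smul_def, fourierChar_apply, harg, smul_eq_mul]
  ring

lemma tendsto_integral_indicator_mul_fejerKernel (hf : Measurable f)
    (hC : ∀ v, 0 < v → |f v| ≤ C) (hG : ContinuousOn G {s | 0 ≤ s.re})
    (hfG : ∀ s : ℂ, 0 < s.re → ∫ v in Set.Ioi (0 : ℝ), (f v : ℂ) * Complex.exp (-s * v) = G s) :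
    Tendsto (fun w : ℝ => ∫ u, (Set.Ioi 0).indicator f (w + u) * fejerKernel u) atTop (𝓝 0) := by
  refine (tendsto_setIntegral_mul_fejerKernel_sub hf hC hG hfG).congr fun w => ?_
  rw [← integral_indicator measurableSet_Ioi, ← integral_add_left_eq_self _ w]
  congr with u
  by_cases hu : w + u ∈ Set.Ioi 0
  · simp only [Set.indicator_of_mem hu, add_sub_cancel_left]
  · simp only [Set.indicator_of_notMem hu, zero_mul]

lemma exists_le_integral_mul_fejerKernel {c : ℝ} (hc : 0 < c) (hC : 0 ≤ C) :
    ∃ U > 0, ∃ κ > 0, ∀ g : ℝ → ℝ, Measurable g → (∀ u, |g u| ≤ C) → (∀ u, |u| ≤ U → c ≤ g u) →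
      κ ≤ ∫ u, g u * fejerKernel u := by
  set M := ∫ u, fejerKernel u
  have hMpos : 0 < M := integral_fejerKernel_pos
  have hcover : Tendsto (fun U : ℝ => ∫ u in Set.Icc (-U) U, fejerKernel u) atTop (𝓝 M) :=
    (aecover_Icc tendsto_neg_atTop_atBot tendsto_id).integral_tendsto_of_countably_generated
      integrable_fejerKernel
  have hlt : M - c * M / (2 * (c + C)) < M := sub_lt_self _ (by positivity)
  obtain ⟨U, hUpos, hU⟩ :=
    ((eventually_gt_atTop 0).and (hcover.eventually (lt_mem_nhds hlt))).exists
  refine ⟨U, hUpos, c * M / 2, by positivity, fun g hg hgC hgc => ?_⟩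
  have hind : Integrable ((Set.Icc (-U) U).indicator fejerKernel) :=
    integrable_fejerKernel.indicator measurableSet_Icc
  have hint : Integrable fun u => g u * fejerKernel u :=
    integrable_fejerKernel.bdd_mul hg.aestronglyMeasurable (.of_forall hgC)
  calc c * M / 2 = (c + C) * (M - c * M / (2 * (c + C))) - C * M := by field_simp; ring
    _ ≤ (c + C) * (∫ u in Set.Icc (-U) U, fejerKernel u) - C * M := by gcongr
    _ = ∫ u, ((c + C) * (Set.Icc (-U) U).indicator fejerKernel u - C * fejerKernel u) := by
        rw [integral_sub (hind.const_mul _) (integrable_fejerKernel.const_mul _),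
          integral_const_mul, integral_const_mul, integral_indicator measurableSet_Icc]
    _ ≤ ∫ u, g u * fejerKernel u := by
        refine integral_mono ((hind.const_mul _).sub (integrable_fejerKernel.const_mul _)) hint
          fun u => ?_
        have hK := fejerKernel_nonneg u
        by_cases hu : u ∈ Set.Icc (-U) U
        · simp only [Set.indicator_of_mem hu]
          nlinarith [hgc u (abs_le.2 hu)]
        · simp only [Set.indicator_of_notMem hu]
          nlinarith [(abs_le.1 (hgC u)).1]

lemma eventually_exists_lt_of_tendsto_integral_mul_fejerKernel {g : ℝ → ℝ} (hg : Measurable g)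
    (hC : ∀ v, |g v| ≤ C)
    (hlim : ∀ l : ℝ, 0 < l → Tendsto (fun w => ∫ u, g (w + u / l) * fejerKernel u) atTop (𝓝 0))
    {c δ : ℝ} (hc : 0 < c) (hδ : 0 < δ) :
    ∀ᶠ w in atTop, ∃ v ∈ Set.Icc w (w + δ), g v < c := by
  obtain ⟨U, hU, κ, hκ, hle⟩ :=
    exists_le_integral_mul_fejerKernel hc ((abs_nonneg _).trans (hC 0))
  have hl : 0 < 2 * U / δ := by positivity
  filter_upwards [(tendsto_atTop_add_const_right _ (δ / 2) tendsto_id).eventually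
    ((hlim _ hl).eventually (gt_mem_nhds hκ))] with w hw
  by_contra! hwindow
  refine hw.not_ge (hle _ (hg.comp (by fun_prop)) (fun u => hC _) fun u hu => hwindow _ ?_)
  have hu' : |u / (2 * U / δ)| ≤ δ / 2 := by
    rw [abs_div, abs_of_pos hl, div_le_iff₀ hl]
    field_simp
    linarith
  obtain ⟨hlo, hhi⟩ := abs_le.1 hu'
  exact ⟨by simp only [id]; linarith, by simp only [id]; linarith⟩

-- Dilating the Fejér kernel by `l` is what makes arbitrarily short windows visible.
lemma tendsto_integral_indicator_div_mul_fejerKernel (hf : Measurable f)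
    (hC : ∀ v, 0 < v → |f v| ≤ C) (hG : ContinuousOn G {s | 0 ≤ s.re})
    (hfG : ∀ s : ℂ, 0 < s.re → ∫ v in Set.Ioi (0 : ℝ), (f v : ℂ) * Complex.exp (-s * v) = G s)
    {l : ℝ} (hl : 0 < l) :
    Tendsto (fun w : ℝ => ∫ u, (Set.Ioi 0).indicator f (w + u / l) * fejerKernel u)
      atTop (𝓝 0) := by
  have hlaplace (s : ℂ) (hs : 0 < s.re) :
      ∫ v in Set.Ioi (0 : ℝ), (f (v / l) : ℂ) * Complex.exp (-s * v) = l * G (l * s) := by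
    rw [← hfG (l * s) (by simpa using mul_pos hl hs)]
    have hsubst := integral_comp_mul_right_Ioi
      (fun v : ℝ => (f (v / l) : ℂ) * Complex.exp (-s * v)) 0 hl
    simp only [mul_div_cancel_right₀ _ hl.ne', zero_mul] at hsubst
    rw [← inv_smul_eq_iff₀ (inv_ne_zero hl.ne'), inv_inv] at hsubst
    rw [← hsubst, Complex.real_smul]
    congr with v
    push_cast
    ring_nf
  have hG' : ContinuousOn (fun s : ℂ => l * G (l * s)) {s | 0 ≤ s.re} :=
    continuousOn_const.mul (hG.comp (by fun_prop) fun s hs => by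
      simpa using mul_nonneg hl.le (show 0 ≤ s.re from hs))
  refine ((tendsto_integral_indicator_mul_fejerKernel (hf.comp (measurable_id.div_const l))
    (fun v hv => hC _ (div_pos hv hl)) hG' hlaplace).comp
    (tendsto_id.const_mul_atTop hl)).congr fun w => ?_
  simp only [Function.comp_apply, id, Set.indicator, Set.mem_Ioi]
  congr with u
  have hadd : (l * w + u) / l = w + u / l := by field_simp
  have hpos : 0 < l * w + u ↔ 0 < w + u / l := by rw [← hadd, div_pos_iff_of_pos_right hl]
  simp only [hadd, hpos]

lemma eventually_exists_lt_of_laplace (hf : Measurable f) (hC : ∀ v, 0 < v → |f v| ≤ C)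
    (hG : ContinuousOn G {s | 0 ≤ s.re})
    (hfG : ∀ s : ℂ, 0 < s.re → ∫ v in Set.Ioi (0 : ℝ), (f v : ℂ) * Complex.exp (-s * v) = G s)
    {c δ : ℝ} (hc : 0 < c) (hδ : 0 < δ) :
    ∀ᶠ w in atTop, ∃ v ∈ Set.Icc w (w + δ), f v < c := by
  have hbound (v : ℝ) : |(Set.Ioi 0).indicator f v| ≤ C := by
    by_cases hv : v ∈ Set.Ioi 0
    · simpa only [Set.indicator_of_mem hv] using hC v hv
    · simpa only [Set.indicator_of_notMem hv, abs_zero] using (abs_nonneg _).trans (hC 1 one_pos)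
  filter_upwards [eventually_gt_atTop 0, eventually_exists_lt_of_tendsto_integral_mul_fejerKernel
    (hf.indicator measurableSet_Ioi) hbound
    (fun _ hl => tendsto_integral_indicator_div_mul_fejerKernel hf hC hG hfG hl) hc hδ]
    with w hw ⟨v, hv, hlt⟩
  exact ⟨v, hv, by rwa [Set.indicator_of_mem (Set.mem_Ioi.2 (hw.trans_le hv.1))] at hlt⟩

/-- `f` drops by little over short intervals of `(0, ∞)`, uniformly: the one-sided Tauberian
condition under which the averages of `f` control its values. -/
def SlowlyDecreasing (f : ℝ → ℝ) : Prop :=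
  ∀ ε > 0, ∃ δ > 0, ∀ v w, 0 < v → v ≤ w → w ≤ v + δ → f v - ε ≤ f w

theorem tendsto_zero_of_laplace (hf : Measurable f) (hC : ∀ v, 0 < v → |f v| ≤ C)
    (hslow : SlowlyDecreasing f) (hG : ContinuousOn G {s | 0 ≤ s.re})
    (hfG : ∀ s : ℂ, 0 < s.re → ∫ v in Set.Ioi (0 : ℝ), (f v : ℂ) * Complex.exp (-s * v) = G s) :
    Tendsto f atTop (𝓝 0) := by
  refine Metric.tendsto_nhds.2 fun ε hε => ?_
  obtain ⟨δ, hδ, hdrop⟩ := hslow (ε / 2) (half_pos hε)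
  have hupper := eventually_exists_lt_of_laplace hf hC hG hfG (half_pos hε) hδ
  have hlower := eventually_exists_lt_of_laplace (f := fun v => -f v) (G := fun s => -G s) hf.neg
    (fun v hv => by simpa only [abs_neg] using hC v hv) hG.neg
    (fun s hs => by
      simp only [Complex.ofReal_neg, neg_mul, integral_neg]
      rw [← hfG s hs]
      simp only [neg_mul]) (half_pos hε) hδ
  filter_upwards [hupper, (tendsto_atTop_add_const_right _ (-δ) tendsto_id).eventually hlower,
    eventually_gt_atTop δ] with w ⟨v, hv, hfv⟩ ⟨v', hv', hfv'⟩ hw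
  simp only [id] at hv'
  have hafter := hdrop w v (hδ.trans hw) hv.1 hv.2
  have hbefore := hdrop v' w (by linarith [hv'.1]) (by linarith [hv'.2]) (by linarith [hv'.1])
  rw [dist_eq, sub_zero, abs_lt]
  constructor <;> linarith

end Tauberian

open ArithmeticFunction hiding log
open Chebyshev

section MertensSum

/-- The Mertens sum `∑ n ≤ x, Λ(n) / n`. -/
noncomputable def mertensSum (x : ℝ) : ℝ := ∑ n ∈ Finset.Ioc 0 ⌊x⌋₊, Λ n / n

lemma mertensSum_mono : Monotone mertensSum := fun _ _ hxy =>
  Finset.sum_le_sum_of_subset_of_nonneg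
    (Finset.Ioc_subset_Ioc_right (Nat.floor_mono hxy)) fun _ _ _ =>
      div_nonneg vonMangoldt_nonneg (Nat.cast_nonneg _)

lemma mertensSum_floor (x : ℝ) : mertensSum ⌊x⌋₊ = mertensSum x := by
  simp only [mertensSum, Nat.floor_natCast]

lemma sum_vonMangoldt_mul_div (N : ℕ) :
    ∑ n ∈ Finset.Ioc 0 N, Λ n * (N / n : ℕ) = log N.factorial := by
  rw [← sum_Ioc_mul_zeta_eq_sum, vonMangoldt_mul_zeta, ← Finset.prod_Ico_id_eq_factorial,
    Nat.cast_prod, log_prod fun n hn => Nat.cast_ne_zero.2 (by grind)]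
  rfl

lemma sum_vonMangoldt_mul_div_le (N k : ℕ) :
    ∑ n ∈ Finset.Ioc 0 k, Λ n * (N / n : ℕ) ≤ N * mertensSum k := by
  rw [mertensSum, Nat.floor_natCast, Finset.mul_sum]
  refine Finset.sum_le_sum fun n _ => ?_
  calc Λ n * (N / n : ℕ) ≤ Λ n * (N / n) :=
        mul_le_mul_of_nonneg_left Nat.cast_div_le vonMangoldt_nonneg
    _ = N * (Λ n / n) := by ring

lemma mul_mertensSum_sub_psi_le (N k : ℕ) :
    N * mertensSum k - ψ k ≤ ∑ n ∈ Finset.Ioc 0 k, Λ n * (N / n : ℕ) := by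
  rw [mertensSum, psi, Nat.floor_natCast, Finset.mul_sum, ← Finset.sum_sub_distrib]
  refine Finset.sum_le_sum fun n _ => ?_
  calc N * (Λ n / n) - Λ n = Λ n * (N / n - 1) := by ring
    _ ≤ Λ n * (N / n : ℕ) := by
        refine mul_le_mul_of_nonneg_left ?_ vonMangoldt_nonneg
        rw [← Nat.floor_div_eq_div (K := ℝ)]
        exact (Nat.sub_one_lt_floor _).le

lemma mul_log_sub_le_log_factorial (N : ℕ) : N * log N - N ≤ log N.factorial := by
  rcases eq_or_ne N 0 with rfl | hN
  · simp
  have hstirling := Stirling.le_log_factorial_stirling hN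
  have hlog : 0 ≤ log (2 * π) := log_nonneg (by linarith [pi_gt_three])
  linarith [log_natCast_nonneg N]

lemma log_factorial_le_mul_log (N : ℕ) : log N.factorial ≤ N * log N := by
  rw [← log_pow]
  exact log_le_log (by positivity) (by exact_mod_cast N.factorial_le_pow)

lemma abs_mertensSum_sub_log_le {x : ℝ} (hx : 1 ≤ x) : |mertensSum x - log x| ≤ log 4 + 4 := by
  set N := ⌊x⌋₊ with hN_def
  have hN : 0 < (N : ℝ) := by exact_mod_cast Nat.floor_pos.2 hx
  have hNx : (N : ℝ) ≤ x := Nat.floor_le (by linarith)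
  have hlog4 : log 4 = 2 * log 2 := by
    rw [show (4 : ℝ) = 2 ^ 2 by norm_num, log_pow, Nat.cast_ofNat]
  have hlog_le : log x ≤ log N + log 2 := by
    rw [← log_mul hN.ne' two_ne_zero]
    refine log_le_log (by linarith) ?_
    have : (1 : ℝ) ≤ N := by exact_mod_cast Nat.floor_pos.2 hx
    linarith [Nat.lt_floor_add_one x]
  have hlower : log N - 1 ≤ mertensSum N := by
    refine le_of_mul_le_mul_left ?_ hN
    calc N * (log N - 1) = N * log N - N := by ring
      _ ≤ log N.factorial := mul_log_sub_le_log_factorial N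
      _ ≤ N * mertensSum N := sum_vonMangoldt_mul_div N ▸ sum_vonMangoldt_mul_div_le N N
  have hupper : mertensSum N ≤ log N + (log 4 + 4) := by
    refine le_of_mul_le_mul_left ?_ hN
    linarith [mul_mertensSum_sub_psi_le N N, sum_vonMangoldt_mul_div N,
      log_factorial_le_mul_log N, psi_le_const_mul_self hN.le]
  rw [← mertensSum_floor, ← hN_def, abs_le]
  constructor <;> linarith [log_le_log hN hNx, log_nonneg one_le_two]

end MertensSum

section MertensConstant

lemma cast_mertensSum (x : ℝ) :
    (mertensSum x : ℂ) = ∑ n ∈ Finset.Icc 1 ⌊x⌋₊, ((Λ n / n : ℝ) : ℂ) :=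
  Complex.ofReal_sum _ _

lemma LSeries_vonMangoldt_div (s : ℂ) :
    LSeries (fun n => ((Λ n / n : ℝ) : ℂ)) s = LSeries (fun n => (Λ n : ℂ)) (1 + s) := by
  refine tsum_congr fun n => ?_
  rcases eq_or_ne n 0 with rfl | hn
  · simp
  · have hn' : (n : ℂ) ≠ 0 := Nat.cast_ne_zero.2 hn
    rw [LSeries.term_of_ne_zero hn, LSeries.term_of_ne_zero hn, Complex.cpow_add _ _ hn',
      Complex.cpow_one]
    push_cast
    rw [div_div]

/-- The regular part of `-ζ'/ζ` at `1`, shifted to the origin: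
`-(ζ'/ζ) (1 + s) = s⁻¹ + negLogDerivZetaRegular s`. -/
noncomputable def negLogDerivZetaRegular (s : ℂ) : ℂ := -logDeriv riemannZeta₁ (1 + s)

lemma negLogDerivZetaRegular_zero : negLogDerivZetaRegular 0 = -eulerMascheroniConstant := by
  rw [negLogDerivZetaRegular, add_zero, logDeriv_apply, deriv_riemannZeta₁_one, riemannZeta₁_one,
    div_one]

lemma riemannZeta₁_ne_zero_of_one_le_re {s : ℂ} (hs : 1 ≤ s.re) : riemannZeta₁ s ≠ 0 := by
  rcases eq_or_ne s 1 with rfl | hs1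
  · simp
  · intro hzero
    refine riemannZeta_ne_zero_of_one_le_re hs ?_
    rw [riemannZeta_eq_inv_sub_mul hs1, hzero, mul_zero]

lemma differentiableAt_negLogDerivZetaRegular {s : ℂ} (hs : 0 ≤ s.re) :
    DifferentiableAt ℂ negLogDerivZetaRegular s := by
  have hderiv : Differentiable ℂ (deriv riemannZeta₁) :=
    differentiable_riemannZeta₁.contDiff.differentiable_deriv_two
  have hne := riemannZeta₁_ne_zero_of_one_le_re (s := 1 + s) (by simpa using hs)
  have hquot : DifferentiableAt ℂ (logDeriv riemannZeta₁) (1 + s) :=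
    hderiv.differentiableAt.div differentiable_riemannZeta₁.differentiableAt hne
  exact (hquot.comp s (by fun_prop)).neg

lemma LSeries_vonMangoldt_one_add {s : ℂ} (hs : 0 < s.re) :
    LSeries (fun n => (Λ n : ℂ)) (1 + s) = s⁻¹ + negLogDerivZetaRegular s := by
  have hs0 : s ≠ 0 := by rintro rfl; simp at hs
  have hne := riemannZeta₁_ne_zero_of_one_le_re (s := 1 + s) (by simpa using hs.le)
  have hs1 : 1 + s ≠ 1 := by simpa using hs0
  rw [LSeries_vonMangoldt_eq_deriv_riemannZeta_div (by simpa using hs),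
    deriv_riemannZeta_eq_neg_inv_sub_sq_mul_add hs1, riemannZeta_eq_inv_sub_mul hs1,
    negLogDerivZetaRegular, logDeriv_apply, add_sub_cancel_left]
  field_simp
  ring

lemma continuousOn_dslope_negLogDerivZetaRegular :
    ContinuousOn (dslope negLogDerivZetaRegular 0) {s | 0 ≤ s.re} := by
  intro s hs
  have hdiff := differentiableAt_negLogDerivZetaRegular hs
  rcases eq_or_ne s 0 with rfl | hs0
  · exact (continuousAt_dslope_same.2 hdiff).continuousWithinAt
  · exact ((continuousAt_dslope_of_ne hs0).2 hdiff.continuousAt).continuousWithinAt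

lemma isBigO_sum_vonMangoldt_div {r : ℝ} (hr : 0 < r) :
    (fun n => ∑ k ∈ Finset.Icc 1 n, Λ k / k) =O[atTop] fun n : ℕ => (n : ℝ) ^ r := by
  have hlog : (fun n : ℕ => log n) =O[atTop] fun n : ℕ => (n : ℝ) ^ r :=
    (isLittleO_log_rpow_atTop hr).isBigO.comp_tendsto tendsto_natCast_atTop_atTop
  have hone : (fun _ : ℕ => (1 : ℝ)) =O[atTop] fun n : ℕ => (n : ℝ) ^ r := by
    refine Asymptotics.IsBigO.of_bound 1 ?_
    filter_upwards [eventually_ge_atTop 1] with n hn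
    rw [norm_one, one_mul, norm_of_nonneg (by positivity)]
    exact one_le_rpow (by exact_mod_cast hn) hr.le
  have hdiff : (fun n : ℕ => mertensSum n - log n) =O[atTop] fun n : ℕ => (n : ℝ) ^ r := by
    refine (Asymptotics.IsBigO.of_bound (log 4 + 4) ?_).trans hone
    filter_upwards [eventually_ge_atTop 1] with n hn
    simpa using abs_mertensSum_sub_log_le (x := n) (by exact_mod_cast hn)
  refine (hdiff.add hlog).congr_left fun n => ?_
  rw [sub_add_cancel, mertensSum, Nat.floor_natCast]
  rfl

lemma integral_Ioi_one_eq_integral_exp_mul (F : ℝ → ℂ) :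
    ∫ t in Set.Ioi (1 : ℝ), F t = ∫ v in Set.Ioi (0 : ℝ), exp v * F (exp v) := by
  have himage : exp '' Set.Ioi 0 = Set.Ioi 1 := by simp
  rw [← himage, integral_image_eq_integral_abs_deriv_smul measurableSet_Ioi
    (fun v _ => (hasDerivAt_exp v).hasDerivWithinAt) exp_injective.injOn]
  simp only [abs_exp, Complex.real_smul]

lemma LSeries_vonMangoldt_one_add_eq_mul_integral {s : ℂ} (hs : 0 < s.re) :
    LSeries (fun n => (Λ n : ℂ)) (1 + s) =
      s * ∫ v in Set.Ioi (0 : ℝ), (mertensSum (exp v) : ℂ) * Complex.exp (-s * v) := by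
  rw [← LSeries_vonMangoldt_div, LSeries_eq_mul_integral_of_nonneg (fun n => Λ n / n)
    (half_pos hs).le (half_lt_self hs) (isBigO_sum_vonMangoldt_div (half_pos hs))
    (fun n => div_nonneg vonMangoldt_nonneg n.cast_nonneg), integral_Ioi_one_eq_integral_exp_mul]
  congr 2 with v
  have hcpow : (exp v : ℂ) ^ (-(s + 1)) = Complex.exp (-v) * Complex.exp (-s * v) := by
    rw [Complex.ofReal_exp, Complex.cpow_def_of_ne_zero (Complex.exp_ne_zero _),
      ← Complex.ofReal_exp, ← Complex.ofReal_log (exp_pos v).le, log_exp, ← Complex.exp_add]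
    ring_nf
  rw [← cast_mertensSum, hcpow, Complex.ofReal_exp, Complex.exp_neg]
  field_simp [Complex.exp_ne_zero]

lemma integrableOn_ofReal_mul_cexp_neg_mul {s : ℂ} (hs : 0 < s.re) :
    IntegrableOn (fun v : ℝ => (v : ℂ) * Complex.exp (-s * v)) (Set.Ioi 0) := by
  have hreal := integrableOn_rpow_mul_exp_neg_mul_rpow (s := 1) (by norm_num) one_pos hs
  refine Integrable.mono' hreal (Continuous.aestronglyMeasurable (by fun_prop)) ?_
  filter_upwards [ae_restrict_mem measurableSet_Ioi] with v (hv : 0 < v)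
  rw [norm_mul, Complex.norm_real, norm_of_nonneg hv.le, Complex.norm_exp, rpow_one]
  simp

lemma integral_ofReal_mul_cexp_neg_mul {s : ℂ} (hs : 0 < s.re) :
    ∫ v in Set.Ioi (0 : ℝ), (v : ℂ) * Complex.exp (-s * v) = (s ^ 2)⁻¹ := by
  have hs0 : s ≠ 0 := by rintro rfl; simp at hs
  have hlin := integrableOn_ofReal_mul_cexp_neg_mul hs
  have hexp : IntegrableOn (fun v : ℝ => Complex.exp (-s * v)) (Set.Ioi 0) :=
    integrableOn_exp_mul_complex_Ioi (by simpa using hs) 0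
  have hderiv (v : ℝ) : HasDerivAt
      (fun v : ℝ => ((v : ℂ) * -s⁻¹ - (s ^ 2)⁻¹) * Complex.exp (-s * v))
      ((v : ℂ) * Complex.exp (-s * v)) v := by
    have hid : HasDerivAt (fun v : ℝ => (v : ℂ)) 1 v := Complex.ofRealCLM.hasDerivAt
    refine (((hid.mul_const (-s⁻¹)).sub_const (s ^ 2)⁻¹).mul
      (hid.const_mul (-s)).cexp).congr_deriv ?_
    field_simp
    ring
  have hint : IntegrableOn (fun v : ℝ => ((v : ℂ) * -s⁻¹ - (s ^ 2)⁻¹) * Complex.exp (-s * v))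
      (Set.Ioi 0) := by
    refine ((hlin.const_mul (-s⁻¹)).sub (hexp.const_mul (s ^ 2)⁻¹)).congr (.of_forall fun v => ?_)
    simp only [Pi.sub_apply]
    ring
  rw [integral_Ioi_of_hasDerivAt_of_tendsto' (fun v _ => hderiv v) hlin
    (tendsto_zero_of_hasDerivAt_of_integrableOn_Ioi (fun v _ => hderiv v) hlin hint)]
  simp

/-- The error term `m(eᵛ) - v + γ` of Mertens' theorem in logarithmic scale, where `m` is
`mertensSum`. -/
noncomputable def mertensError (v : ℝ) : ℝ :=
  mertensSum (exp v) - v + eulerMascheroniConstant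

lemma measurable_mertensError : Measurable mertensError :=
  ((mertensSum_mono.measurable.comp measurable_exp).sub measurable_id).add_const _

lemma abs_mertensError_le {v : ℝ} (hv : 0 < v) :
    |mertensError v| ≤ log 4 + 4 + eulerMascheroniConstant := by
  have hbound := abs_mertensSum_sub_log_le (one_le_exp hv.le)
  rw [log_exp] at hbound
  have hγ : 0 < eulerMascheroniConstant := one_half_pos.trans one_half_lt_eulerMascheroniConstant
  exact (abs_add_le _ _).trans (add_le_add hbound (abs_of_pos hγ).le)

lemma slowlyDecreasing_mertensError : SlowlyDecreasing mertensError := fun ε hε =>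
  ⟨ε, hε, fun v w _ hvw hwε => by
    have hmono := mertensSum_mono (exp_le_exp.2 hvw)
    simp only [mertensError]
    linarith⟩

lemma integral_mertensError_mul_cexp {s : ℂ} (hs : 0 < s.re) :
    ∫ v in Set.Ioi (0 : ℝ), (mertensError v : ℂ) * Complex.exp (-s * v) =
      dslope negLogDerivZetaRegular 0 s := by
  have hs0 : s ≠ 0 := by rintro rfl; simp at hs
  have hexp : IntegrableOn (fun v : ℝ => Complex.exp (-s * v)) (Set.Ioi 0) :=
    integrableOn_exp_mul_complex_Ioi (by simpa using hs) 0
  have hlin : IntegrableOn (fun v : ℝ => (v : ℂ) * Complex.exp (-s * v) -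
      eulerMascheroniConstant * Complex.exp (-s * v)) (Set.Ioi 0) :=
    (integrableOn_ofReal_mul_cexp_neg_mul hs).sub (hexp.const_mul _)
  have herror := integrableOn_mul_cexp_neg_mul measurable_mertensError
    (fun v hv => abs_mertensError_le hv) hs
  have hsum : ∫ v in Set.Ioi (0 : ℝ), (mertensSum (exp v) : ℂ) * Complex.exp (-s * v) =
      (∫ v in Set.Ioi (0 : ℝ), (mertensError v : ℂ) * Complex.exp (-s * v)) +
        ((s ^ 2)⁻¹ - eulerMascheroniConstant * s⁻¹) := by
    have hexp_integral : ∫ v in Set.Ioi (0 : ℝ), Complex.exp (-s * v) = s⁻¹ := by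
      simpa using integral_exp_mul_complex_Ioi (a := -s) (by simpa using hs) 0
    rw [← integral_ofReal_mul_cexp_neg_mul hs, ← hexp_integral, ← integral_const_mul,
      ← integral_sub (integrableOn_ofReal_mul_cexp_neg_mul hs) (hexp.const_mul _),
      ← integral_add herror hlin]
    congr with v
    simp only [mertensError]
    push_cast
    ring
  have hLSeries := LSeries_vonMangoldt_one_add_eq_mul_integral hs
  rw [LSeries_vonMangoldt_one_add hs, hsum] at hLSeries
  rw [dslope_of_ne _ hs0, slope_def_field, negLogDerivZetaRegular_zero, sub_zero,
    eq_div_iff hs0]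
  generalize ∫ v in Set.Ioi (0 : ℝ), (mertensError v : ℂ) * Complex.exp (-s * v) = E at hLSeries ⊢
  field_simp at hLSeries
  refine mul_left_cancel₀ hs0 ?_
  linear_combination -hLSeries

theorem tendsto_mertensSum_sub_log :
    Tendsto (fun x => mertensSum x - log x) atTop (𝓝 (-eulerMascheroniConstant)) := by
  have herror : Tendsto mertensError atTop (𝓝 0) :=
    tendsto_zero_of_laplace measurable_mertensError (fun v hv => abs_mertensError_le hv)
      slowlyDecreasing_mertensError continuousOn_dslope_negLogDerivZetaRegular
      (fun s hs => integral_mertensError_mul_cexp hs)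
  rw [← zero_sub]
  refine ((herror.comp tendsto_log_atTop).sub_const _).congr' ?_
  filter_upwards [eventually_gt_atTop 0] with x hx
  rw [Function.comp_apply, mertensError, exp_log hx, add_sub_cancel_right]

end MertensConstant

section PrimeSum

lemma log_factorial_le (N : ℕ) : log N.factorial ≤ N * log N - N + log N + 1 := by
  rcases N.eq_zero_or_pos with rfl | hN
  · simp
  induction N, hN using Nat.le_induction with
  | base => simp
  | succ N hN ih =>
    have hN0 : (0 : ℝ) < N := by exact_mod_cast hN
    have hstep : 1 ≤ (N + 1) * (log (N + 1) - log N) := by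
      calc (1 : ℝ) = (N + 1) * (1 - ((N + 1) / N : ℝ)⁻¹) := by field_simp; ring
        _ ≤ (N + 1) * log ((N + 1) / N) := by
          gcongr
          exact one_sub_inv_le_log_of_pos (by positivity)
        _ = (N + 1) * (log (N + 1) - log N) := by rw [log_div (by positivity) hN0.ne']
    rw [Nat.factorial_succ, Nat.cast_mul, log_mul (by positivity) (by positivity)]
    push_cast
    linarith

variable {N k : ℕ}

lemma sum_Ioc_vonMangoldt_mul_div_le (hkN : k ≤ N) :
    ∑ n ∈ Finset.Ioc k N, Λ n * (N / n : ℕ) ≤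
      N * log N - N + log N + 1 - N * mertensSum k + ψ k := by
  have hsplit := Finset.sum_Ioc_consecutive (fun n => Λ n * (N / n : ℕ)) k.zero_le hkN
  linarith [sum_vonMangoldt_mul_div N, log_factorial_le N, mul_mertensSum_sub_psi_le N k]

lemma mertensSum_succ (n : ℕ) :
    mertensSum (n + 1 : ℕ) = mertensSum n + Λ (n + 1) / (n + 1 : ℕ) := by
  rw [mertensSum, mertensSum, Nat.floor_natCast, Nat.floor_natCast,
    Finset.sum_Ioc_succ_top n.zero_le]

lemma mul_inv_sub_inv_le_log_sub_log {a b : ℝ} (ha : 0 < a) (hb : 0 < b) :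
    a * (a⁻¹ - b⁻¹) ≤ log b - log a := by
  calc a * (a⁻¹ - b⁻¹) = 1 - (b / a)⁻¹ := by field_simp
    _ ≤ log (b / a) := one_sub_inv_le_log_of_pos (by positivity)
    _ = log b - log a := log_div hb.ne' ha.ne'

lemma sum_Ioc_vonMangoldt_div_mul_le {d : ℝ} (c : ℝ) (hk : 1 ≤ k)
    (hupper : ∀ n : ℕ, k ≤ n → mertensSum n ≤ log n - d) (hkN : k + 1 ≤ N) :
    ∑ n ∈ Finset.Ioc k N, Λ n / n * ((log n)⁻¹ - c) ≤
      mertensSum N * ((log N)⁻¹ - c) - mertensSum k * ((log (k + 1 : ℕ))⁻¹ - c)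
        + (log (log N) - log (log (k + 1 : ℕ))) - d * ((log (k + 1 : ℕ))⁻¹ - (log N)⁻¹) := by
  induction N, hkN using Nat.le_induction with
  | base =>
    rw [Finset.sum_Ioc_succ_top le_rfl, Finset.Ioc_self, Finset.sum_empty, mertensSum_succ]
    exact le_of_eq (by ring)
  | succ n hkn ih =>
    have hn : (1 : ℝ) < n := by exact_mod_cast (by omega : 1 < n)
    have hlog : 0 < log n := log_pos hn
    have hlog_le : log n ≤ log (n + 1 : ℕ) := log_le_log (by linarith) (by simp)
    have hmul : mertensSum n * ((log n)⁻¹ - (log (n + 1 : ℕ))⁻¹) ≤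
        (log n - d) * ((log n)⁻¹ - (log (n + 1 : ℕ))⁻¹) :=
      mul_le_mul_of_nonneg_right (hupper n (by omega))
        (sub_nonneg.2 (inv_anti₀ hlog hlog_le))
    have hloglog := mul_inv_sub_inv_le_log_sub_log hlog (hlog.trans_le hlog_le)
    rw [Finset.sum_Ioc_succ_top (by omega), mertensSum_succ]
    linarith

lemma sum_Ioc_vonMangoldt_div_log_mul_div_le_add (hk : 1 ≤ k) :
    ∑ n ∈ Finset.Ioc k N, Λ n / log n * (N / n : ℕ) ≤
      (log N)⁻¹ * ∑ n ∈ Finset.Ioc k N, Λ n * (N / n : ℕ) +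
        N * ∑ n ∈ Finset.Ioc k N, Λ n / n * ((log n)⁻¹ - (log N)⁻¹) := by
  rw [Finset.mul_sum, Finset.mul_sum, ← Finset.sum_add_distrib]
  refine Finset.sum_le_sum fun n hn => ?_
  obtain ⟨hkn, hnN⟩ := Finset.mem_Ioc.1 hn
  have hn1 : (1 : ℝ) < n := by exact_mod_cast hk.trans_lt hkn
  have hlog_le : log n ≤ log N := log_le_log (by linarith) (by exact_mod_cast hnN)
  have hweight : 0 ≤ Λ n * ((log n)⁻¹ - (log N)⁻¹) :=
    mul_nonneg vonMangoldt_nonneg (sub_nonneg.2 (inv_anti₀ (log_pos hn1) hlog_le))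
  calc Λ n / log n * (N / n : ℕ)
      = (log N)⁻¹ * (Λ n * (N / n : ℕ)) + Λ n * ((log n)⁻¹ - (log N)⁻¹) * (N / n : ℕ) := by ring
    _ ≤ (log N)⁻¹ * (Λ n * (N / n : ℕ)) + Λ n * ((log n)⁻¹ - (log N)⁻¹) * (N / n) := by
        gcongr
        exact Nat.cast_div_le
    _ = (log N)⁻¹ * (Λ n * (N / n : ℕ)) + N * (Λ n / n * ((log n)⁻¹ - (log N)⁻¹)) := by ring

lemma sum_Ioc_vonMangoldt_div_log_mul_div_le {d η : ℝ} (hk : 1 ≤ k) (hkN : k + 1 ≤ N)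
    (hupper : ∀ n : ℕ, k ≤ n → mertensSum n ≤ log n - d)
    (hη : log N + 1 + ψ k ≤ η * N) :
    ∑ n ∈ Finset.Ioc k N, Λ n / log n * (N / n : ℕ) ≤
      N * (log (log N / log (k + 1 : ℕ)) + 1 - (mertensSum k + d) / log (k + 1 : ℕ)
        - (1 - d - η) / log N) := by
  have hlogk : 0 < log (k + 1 : ℕ) := log_pos (by exact_mod_cast (by omega : 1 < k + 1))
  have hlogN : 0 < log N := hlogk.trans_le (log_le_log (by positivity) (by exact_mod_cast hkN))
  have hfloor : ∑ n ∈ Finset.Ioc k N, Λ n * (N / n : ℕ) ≤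
      N * (log N - 1 - mertensSum k + η) := by
    linarith [sum_Ioc_vonMangoldt_mul_div_le (by omega : k ≤ N)]
  calc ∑ n ∈ Finset.Ioc k N, Λ n / log n * (N / n : ℕ)
      ≤ (log N)⁻¹ * ∑ n ∈ Finset.Ioc k N, Λ n * (N / n : ℕ) +
        N * ∑ n ∈ Finset.Ioc k N, Λ n / n * ((log n)⁻¹ - (log N)⁻¹) :=
        sum_Ioc_vonMangoldt_div_log_mul_div_le_add hk
    _ ≤ (log N)⁻¹ * (N * (log N - 1 - mertensSum k + η)) +
        N * (mertensSum N * ((log N)⁻¹ - (log N)⁻¹)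
          - mertensSum k * ((log (k + 1 : ℕ))⁻¹ - (log N)⁻¹)
          + (log (log N) - log (log (k + 1 : ℕ)))
          - d * ((log (k + 1 : ℕ))⁻¹ - (log N)⁻¹)) := by
        gcongr
        exact sum_Ioc_vonMangoldt_div_mul_le _ hk hupper hkN
    _ = _ := by
        rw [log_div hlogN.ne' hlogk.ne']
        field_simp
        ring

-- The main term is `N / 2`; what decides the sign is that `1 - γ > 1 / 3` beats the errors.
lemma sum_Ioc_vonMangoldt_div_log_mul_div_le_half (hk : 1 ≤ k) (hkN : k + 1 ≤ N)
    (hlower : log (k + 1 : ℕ) - (eulerMascheroniConstant + 1 / 10) ≤ mertensSum k)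
    (hupper : ∀ n : ℕ, k ≤ n → mertensSum n ≤ log n - (eulerMascheroniConstant - 1 / 20))
    (hlog : log N ≤ exp (1 / 2) * log (k + 1 : ℕ))
    (hη : log N + 1 + ψ k ≤ 1 / 20 * N) :
    ∑ n ∈ Finset.Ioc k N, Λ n / log n * (N / n : ℕ) ≤ N / 2 := by
  have hlogk : 0 < log (k + 1 : ℕ) := log_pos (by exact_mod_cast (by omega : 1 < k + 1))
  have hlogN : 0 < log N := hlogk.trans_le (log_le_log (by positivity) (by exact_mod_cast hkN))
  have hγ := eulerMascheroniConstant_lt_two_thirds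
  have hmain : log (log N / log (k + 1 : ℕ)) ≤ 1 / 2 := by
    rwa [log_le_iff_le_exp (by positivity), div_le_iff₀ hlogk]
  have hexp : exp (1 / 2) ≤ 2 := by
    rw [exp_half, sqrt_le_left zero_le_two]
    linarith [exp_one_lt_three]
  have hlog_two : log N ≤ 2 * log (k + 1 : ℕ) := hlog.trans (by gcongr)
  have hsecondary : (3 / 20) / log (k + 1 : ℕ) ≤ (1 - eulerMascheroniConstant) / log N := by
    rw [div_le_div_iff₀ hlogk hlogN]
    nlinarith
  have hmertens : 1 - (3 / 20) / log (k + 1 : ℕ) ≤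
      (mertensSum k + (eulerMascheroniConstant - 1 / 20)) / log (k + 1 : ℕ) := by
    rw [one_sub_div hlogk.ne']
    gcongr
    linarith
  calc _ ≤ _ := sum_Ioc_vonMangoldt_div_log_mul_div_le hk hkN hupper hη
    _ ≤ N * (1 / 2 : ℝ) := by
        gcongr
        rw [show 1 - (eulerMascheroniConstant - 1 / 20) - 1 / 20 = 1 - eulerMascheroniConstant by
          ring]
        linarith
    _ = N / 2 := by ring

end PrimeSum

section Counting

lemma largestPrimeFactor_mem_primeFactors {n : ℕ} (hn : 2 ≤ n) :
    largestPrimeFactor n ∈ n.primeFactors := by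
  obtain ⟨p, hp, hsup⟩ :=
    Finset.exists_mem_eq_sup n.primeFactors (Nat.nonempty_primeFactors.2 hn) id
  rwa [largestPrimeFactor, if_neg (by omega), hsup]

lemma card_lt_largestPrimeFactor_le_sum_prime (N : ℕ) {k : ℕ} (hk : 1 ≤ k) :
    ((Finset.Icc 1 N).filter fun n => k < largestPrimeFactor n).card ≤
      ∑ p ∈ (Finset.Ioc k N).filter Nat.Prime, N / p := by
  have hsubset : ((Finset.Icc 1 N).filter fun n => k < largestPrimeFactor n) ⊆
      ((Finset.Ioc k N).filter Nat.Prime).biUnion fun p => (Finset.Ioc 0 N).filter (p ∣ ·) := by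
    intro n hn
    obtain ⟨hn_mem, hlt⟩ := Finset.mem_filter.1 hn
    obtain ⟨hn1, hnN⟩ := Finset.mem_Icc.1 hn_mem
    have hn2 : 2 ≤ n := by
      by_contra hlt_two
      rw [largestPrimeFactor, if_pos (by omega)] at hlt
      omega
    obtain ⟨hprime, hdvd, _⟩ := Nat.mem_primeFactors.1 (largestPrimeFactor_mem_primeFactors hn2)
    simp only [Finset.mem_biUnion, Finset.mem_filter, Finset.mem_Ioc]
    exact ⟨_, ⟨⟨hlt, (Nat.le_of_dvd hn1 hdvd).trans hnN⟩, hprime⟩, ⟨hn1, hnN⟩, hdvd⟩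
  calc _ ≤ _ := Finset.card_le_card hsubset
    _ ≤ ∑ p ∈ (Finset.Ioc k N).filter Nat.Prime, ((Finset.Ioc 0 N).filter (p ∣ ·)).card :=
        Finset.card_biUnion_le
    _ = ∑ p ∈ (Finset.Ioc k N).filter Nat.Prime, N / p :=
        Finset.sum_congr rfl fun p _ => by rw [← Nat.Ioc_filter_dvd_card_eq_div]

lemma sum_prime_div_le_sum_vonMangoldt_div_log (N k : ℕ) :
    ((∑ p ∈ (Finset.Ioc k N).filter Nat.Prime, N / p : ℕ) : ℝ) ≤
      ∑ n ∈ Finset.Ioc k N, Λ n / log n * (N / n : ℕ) := by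
  rw [Nat.cast_sum, Finset.sum_filter]
  refine Finset.sum_le_sum fun n _ => ?_
  split_ifs with hprime
  · have hlog : log n ≠ 0 := (log_pos (by exact_mod_cast hprime.one_lt)).ne'
    rw [vonMangoldt_apply_prime hprime, div_self hlog, one_mul]
  · exact mul_nonneg (div_nonneg vonMangoldt_nonneg (log_natCast_nonneg n)) (Nat.cast_nonneg _)

lemma eventually_log_sub_le_mertensSum {ε : ℝ} (hε : 0 < ε) :
    ∀ᶠ k : ℕ in atTop, log (k + 1 : ℕ) - (eulerMascheroniConstant + ε) ≤ mertensSum k := by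
  have hlim : Tendsto (fun k : ℕ => mertensSum k - log k - (log (k + 1) - log k)) atTop
      (𝓝 (-eulerMascheroniConstant - 0)) :=
    (tendsto_mertensSum_sub_log.comp tendsto_natCast_atTop_atTop).sub
      tendsto_log_nat_add_one_sub_log
  filter_upwards [hlim.eventually_const_le (u := -eulerMascheroniConstant - ε) (by linarith)]
    with k hk
  push_cast
  linarith

lemma eventually_mertensSum_le_log_sub {ε : ℝ} (hε : 0 < ε) :
    ∀ᶠ k : ℕ in atTop, ∀ n : ℕ, k ≤ n → mertensSum n ≤ log n - (eulerMascheroniConstant - ε) := by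
  have hlim := tendsto_mertensSum_sub_log.comp (tendsto_natCast_atTop_atTop (R := ℝ))
  have hle := hlim.eventually_le_const (u := -eulerMascheroniConstant + ε) (by linarith)
  filter_upwards [eventually_forall_ge_atTop.2 hle] with k hk n hkn
  linarith [show mertensSum n - log n ≤ -eulerMascheroniConstant + ε from hk n hkn]

lemma eventually_log_add_psi_le {α η : ℝ} (hα : α < 1) (hη : 0 < η) :
    ∀ᶠ N : ℕ in atTop, ∀ k : ℕ, (k : ℝ) ≤ (N : ℝ) ^ α → log N + 1 + ψ k ≤ η * N := by
  have hlittle : (fun x : ℝ => log x + 1 + (log 4 + 4) * x ^ α) =o[atTop] (fun x => x) := by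
    have hpow : (fun x : ℝ => x ^ α) =o[atTop] (fun x => x) := by
      refine Asymptotics.isLittleO_of_tendsto' ?_ ?_
      · filter_upwards [eventually_ne_atTop 0] with x hx hzero using absurd hzero hx
      · refine (tendsto_rpow_neg_atTop (sub_pos.2 hα)).congr' ?_
        filter_upwards [eventually_gt_atTop 0] with x hx
        rw [neg_sub, rpow_sub_one hx.ne']
    have hone : (fun _ : ℝ => (1 : ℝ)) =o[atTop] (fun x => x) :=
      Asymptotics.isLittleO_const_id_atTop 1
    exact (isLittleO_log_id_atTop.add hone).add (hpow.const_mul_left _)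
  filter_upwards [tendsto_natCast_atTop_atTop.eventually (hlittle.bound hη)] with N hN k hk
  rw [Real.norm_natCast, norm_eq_abs] at hN
  have hψ : ψ k ≤ (log 4 + 4) * k := psi_le_const_mul_self k.cast_nonneg
  have hlog4 : 0 ≤ log 4 := log_nonneg (by norm_num)
  nlinarith [le_abs_self (log N + 1 + (log 4 + 4) * (N : ℝ) ^ α)]

lemma log_le_exp_mul_log_of_rpow_le {a b c : ℝ} (ha : 0 < a) (hab : a ^ exp (-c) ≤ b) :
    log a ≤ exp c * log b := by
  calc log a = exp c * (exp (-c) * log a) := by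
        rw [← mul_assoc, ← exp_add, add_neg_cancel, exp_zero, one_mul]
    _ = exp c * log (a ^ exp (-c)) := by rw [log_rpow ha]
    _ ≤ exp c * log b := by gcongr

lemma eventually_two_mul_card_rpow_le_largestPrimeFactor_le :
    ∀ᶠ N : ℕ in atTop, 2 * ((Finset.Icc 1 N).filter fun n =>
      (N : ℝ) ^ exp (-(1 / 2)) ≤ largestPrimeFactor n).card ≤ N := by
  have hα : exp (-(1 / 2)) < 1 := exp_lt_one_iff.2 (by norm_num)
  have hceil : Tendsto (fun N : ℕ => ⌈(N : ℝ) ^ exp (-(1 / 2))⌉₊ - 1) atTop atTop :=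
    (tendsto_sub_atTop_nat 1).comp <| tendsto_nat_ceil_atTop.comp <|
      (tendsto_rpow_atTop (exp_pos _)).comp tendsto_natCast_atTop_atTop
  filter_upwards [eventually_gt_atTop 1, hceil.eventually (eventually_ge_atTop 1),
    hceil.eventually (eventually_log_sub_le_mertensSum (ε := 1 / 10) (by norm_num)),
    hceil.eventually (eventually_mertensSum_le_log_sub (ε := 1 / 20) (by norm_num)),
    eventually_log_add_psi_le hα (η := 1 / 20) (by norm_num)]
    with N hN hk hlower hupper hpsi
  have hN1 : (1 : ℝ) < N := by exact_mod_cast hN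
  set y := (N : ℝ) ^ exp (-(1 / 2))
  obtain ⟨k, hk_def⟩ : ∃ k, ⌈y⌉₊ = k + 1 := ⟨⌈y⌉₊ - 1, by omega⟩
  simp only [hk_def, Nat.add_sub_cancel] at hk hlower hupper
  have hky : (k : ℝ) < y := Nat.lt_ceil.1 (by omega)
  have hyN : y < N := rpow_lt_self_of_one_lt hN1 hα
  have hlog : log N ≤ exp (1 / 2) * log (k + 1 : ℕ) :=
    log_le_exp_mul_log_of_rpow_le (by linarith) (hk_def ▸ Nat.le_ceil y)
  have hcard := (Nat.cast_le (α := ℝ)).2 (card_lt_largestPrimeFactor_le_sum_prime N hk)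
  have hhalf := (hcard.trans (sum_prime_div_le_sum_vonMangoldt_div_log N k)).trans <|
    sum_Ioc_vonMangoldt_div_log_mul_div_le_half hk (by exact_mod_cast hky.trans hyN)
      hlower hupper hlog (hpsi k hky.le)
  simp only [← Nat.ceil_le, hk_def, Nat.succ_le_iff]
  exact_mod_cast (by linarith : 2 * (((Finset.Icc 1 N).filter fun n =>
    k < largestPrimeFactor n).card : ℝ) ≤ N)

end Counting

section Median

lemma not_getElem_of_countP_add_lt {β : Type*} [Preorder β] {l : List β} {p : β → Bool}
    (hl : l.Pairwise (· ≤ ·)) (hp : ∀ a b, a ≤ b → p a → p b) {i : ℕ}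
    (hcount : l.countP p + i < l.length) : ¬ p (l[i]'(by omega)) := by
  have hi : i < l.length := by omega
  intro hpi
  have hdrop : (l.drop i).countP p = (l.drop i).length := by
    refine List.countP_eq_length.2 fun a ha => ?_
    rw [List.drop_eq_getElem_cons hi, List.mem_cons] at ha
    rcases ha with rfl | ha
    · exact hpi
    · refine hp _ _ ?_ hpi
      have hsorted := hl.sublist (List.drop_sublist i l)
      rw [List.drop_eq_getElem_cons hi] at hsorted
      exact List.rel_of_pairwise_cons hsorted ha
  have hle := (List.drop_sublist i l).countP_le (p := p)
  rw [hdrop, List.length_drop] at hle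
  omega

lemma medianLPF_lt_of_two_mul_card_le {x y : ℝ} (hx : 1 ≤ x)
    (hcard : 2 * ((Finset.Icc 1 ⌊x⌋₊).filter fun n => y ≤ largestPrimeFactor n).card ≤ ⌊x⌋₊) :
    medianLPF x < y := by
  have hN : 1 ≤ ⌊x⌋₊ := Nat.floor_pos.2 hx
  set s := (Finset.Icc 1 ⌊x⌋₊).val.map largestPrimeFactor with hs
  have hlength : (s.sort (· ≤ ·)).length = ⌊x⌋₊ := by simp [hs]
  have hcount : (s.sort (· ≤ ·)).countP (fun m : ℕ => y ≤ m) =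
      ((Finset.Icc 1 ⌊x⌋₊).filter fun n => y ≤ largestPrimeFactor n).card := by
    rw [← Multiset.coe_countP, Multiset.sort_eq, hs, Multiset.countP_map]
    rfl
  have hi : (⌊x⌋₊ + 1) / 2 - 1 < (s.sort (· ≤ ·)).length := by omega
  rw [medianLPF, ← hs, List.getD_eq_getElem _ _ hi, ← not_le]
  simpa using not_getElem_of_countP_add_lt (p := fun m : ℕ => y ≤ m)
    (Multiset.pairwise_sort s (· ≤ ·))
    (fun a b hab => by simpa using fun hya => hya.trans (Nat.cast_le.2 hab)) (by omega)

end Median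

end MedianLPF

theorem median_largest_prime_factor_lt :
    ∀ᶠ x : ℝ in atTop, (medianLPF x : ℝ) < x ^ (1 / Real.sqrt (Real.exp 1)) := by
  have hexponent : 1 / Real.sqrt (Real.exp 1) = exp (-(1 / 2)) := by
    rw [exp_neg, exp_half, one_div]
  have hcard := (tendsto_nat_floor_atTop (α := ℝ)).eventually
    MedianLPF.eventually_two_mul_card_rpow_le_largestPrimeFactor_le
  filter_upwards [hcard, eventually_ge_atTop 1] with x hx hx1
  calc (medianLPF x : ℝ) < (⌊x⌋₊ : ℝ) ^ exp (-(1 / 2)) :=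
        MedianLPF.medianLPF_lt_of_two_mul_card_le hx1 hx
    _ ≤ x ^ exp (-(1 / 2)) :=
        rpow_le_rpow (Nat.cast_nonneg _) (Nat.floor_le (by linarith)) (exp_nonneg _)
    _ = x ^ (1 / Real.sqrt (Real.exp 1)) := by rw [hexponent]
end
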